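/- arXiv:1606.07135 — 2 statements merged into one kernel-verified Lean document; each statement's English description precedes it below -/
import Mathlib

section
/- Let G be a finite group, V a finite dimensional kG-module, and S = T_k(V)/(R) a Koszul algebra with R ⊆ V⊗V closed under the action of G. A filtered quadratic algebra H is a PBW deformation of S⋊G preserving the action of G if and only if H ≅ H_{0,α,β} for some G-invariant k-linear parameter functions α: R → V⊗kG and β: R → kG satisfying, upon projection to S⋊G: (i) α⊗1 − 1⊗α = 0 on (V⊗R)∩(R⊗V); (ii) α∘((1⊗σ)∘(α⊗1) − 1⊗α) = 1⊗β − β⊗1 on (V⊗R)∩(R⊗V); (iii) β∘((1⊗σ)∘(α⊗1) − 1⊗α) = 0 on (V⊗R)∩(R⊗V); moreover condition (i) implies that the maps in (ii) and (iii) are defined on (V⊗R)∩(R⊗V). (G-invariance of α and β is with respect to the action (ᵍα)(r) = ᵍ(α(ᵍ⁻¹r)) where ᵍ(v⊗h) = ᵍv⊗ghg⁻¹ for v ∈ V, g,h ∈ G.) -/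
open TensorProduct

noncomputable section

namespace DeformKoszul

variable (k G V : Type) [Field k] [Group G] [AddCommGroup V] [Module k V]

/-! ### Koszulity (Backelin's distributivity criterion) -/

/-- `Vpow n = V^{⊗(n+1)}`. -/
def Vpow : ℕ → ModuleCat k
  | 0 => ModuleCat.of k V
  | n+1 => ModuleCat.of k (V ⊗[k] (Vpow n))

variable (R : Submodule k (V ⊗[k] V))

/-- `Wsub m i` is the subspace `V^{⊗i} ⊗ R ⊗ V^{⊗(m-1-i)}` of `V^{⊗(m+1)}`
(junk value `⊥` for `i > m-1`). -/
def Wsub : (m : ℕ) → ℕ → Submodule k (Vpow k V m)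
  | 0, _ => ⊥
  | 1, 0 => R
  | 1, _+1 => ⊥
  | m+2, 0 =>
      Submodule.map (TensorProduct.assoc k V V (Vpow k V m)).toLinearMap
        (LinearMap.range (TensorProduct.map R.subtype (LinearMap.id (M := Vpow k V m))))
  | m+1, i+1 =>
      LinearMap.range (TensorProduct.map (LinearMap.id (M := V)) (Wsub m i).subtype)

/-- The quadratic algebra `S = T(V)/(R)` is **Koszul**.  We use Backelin's criterion:
`S` is Koszul iff for each `n` the subspaces `V^{⊗i} ⊗ R ⊗ V^{⊗j}` of `V^{⊗n}`
generate a distributive lattice; for finite collections of subspaces of a vector space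
distributivity is equivalent to the existence of a basis of `V^{⊗n}` from which each of
the subspaces can be spanned. -/
def IsKoszul : Prop :=
  ∀ m : ℕ, ∃ (ι : Type) (b : Module.Basis ι k (Vpow k V m)),
    ∀ i : ℕ, ∃ J : Set ι, Wsub k V R m i = Submodule.span k (⇑b '' J)

/-! ### The deformed algebra `H_{λ,α,β}` -/

/-- The free `k`-algebra on the vector space `kG ⊕ V`. -/
abbrev FreeAlg := TensorAlgebra k (MonoidAlgebra k G × V)

/-- The canonical embedding of the group algebra `kG` into the free algebra. -/
def gIn : MonoidAlgebra k G →ₗ[k] FreeAlg k G V :=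
  (TensorAlgebra.ι k).comp (LinearMap.inl k (MonoidAlgebra k G) V)

/-- The canonical embedding of `V` into the free algebra. -/
def vIn : V →ₗ[k] FreeAlg k G V :=
  (TensorAlgebra.ι k).comp (LinearMap.inr k (MonoidAlgebra k G) V)

/-- `V ⊗ V → FreeAlg`, `v ⊗ w ↦ v·w`. -/
def mulVV : V ⊗[k] V →ₗ[k] FreeAlg k G V :=
  (LinearMap.mul' k _).comp (TensorProduct.map (vIn k G V) (vIn k G V))

/-- `V ⊗ kG → FreeAlg`, `v ⊗ x ↦ v·x`. -/
def embVG : V ⊗[k] MonoidAlgebra k G →ₗ[k] FreeAlg k G V :=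
  (LinearMap.mul' k _).comp (TensorProduct.map (vIn k G V) (gIn k G V))

variable (ρ : Representation k G V)

/-- The defining relations of `H_{λ,α,β}` over the generating space `kG ⊕ V`:
`kG` is a subalgebra (with the same unit), the group-action relations
`g·v = (ᵍv)·g + λ(g ⊗ v)` deforming `R'` by `λ`, and the quadratic Koszul relations
`r = α(r) + β(r)` for `r ∈ R`. -/
inductive GRel (lam : MonoidAlgebra k G ⊗[k] V →ₗ[k] MonoidAlgebra k G)
    (α : R →ₗ[k] (V ⊗[k] MonoidAlgebra k G))
    (β : R →ₗ[k] MonoidAlgebra k G) :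
    FreeAlg k G V → FreeAlg k G V → Prop
  | unit : GRel lam α β (gIn k G V 1) 1
  | gmul (x y : MonoidAlgebra k G) :
      GRel lam α β (gIn k G V x * gIn k G V y) (gIn k G V (x * y))
  | act (g : G) (v : V) :
      GRel lam α β (gIn k G V (MonoidAlgebra.of k G g) * vIn k G V v)
        (vIn k G V (ρ g v) * gIn k G V (MonoidAlgebra.of k G g)
          + gIn k G V (lam (MonoidAlgebra.of k G g ⊗ₜ[k] v)))
  | quad (r : R) :
      GRel lam α β (mulVV k G V (r : V ⊗[k] V))
        (embVG k G V (α r) + gIn k G V (β r))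

variable (lam : MonoidAlgebra k G ⊗[k] V →ₗ[k] MonoidAlgebra k G)
    (α : R →ₗ[k] (V ⊗[k] MonoidAlgebra k G))
    (β : R →ₗ[k] MonoidAlgebra k G)

/-- The algebra `H_{λ,α,β}`.  For `lam = 0`, `α = 0`, `β = 0` this is (the presentation
of) the skew group algebra `S ⋊ G`, where `S = T(V)/(R)`. -/
abbrev HAlg := RingQuot (GRel k G V R ρ lam α β)

/-- The quotient map onto `H_{λ,α,β}`. -/
def toH : FreeAlg k G V →ₐ[k] HAlg k G V R ρ lam α β :=
  RingQuot.mkAlgHom k (GRel k G V R ρ lam α β)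

/-- Degree-`n` part of the free algebra: `kG` has degree 0 and `V` degree 1. -/
def grT : ℕ → Submodule k (FreeAlg k G V)
  | 0 => Subalgebra.toSubmodule (Algebra.adjoin k (Set.range (gIn k G V)))
  | n+1 => grT n * (LinearMap.range (vIn k G V) * grT 0)

/-- Filtration of the free algebra, `kG` in degree 0 and `V` in degree 1. -/
def filtT : ℕ → Submodule k (FreeAlg k G V)
  | 0 => grT k G V 0
  | n+1 => filtT n ⊔ grT k G V (n+1)

/-- The induced filtration on `H_{λ,α,β}`. -/
def filtH (d : ℕ) : Submodule k (HAlg k G V R ρ lam α β) :=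
  (filtT k G V d).map (toH k G V R ρ lam α β).toLinearMap

/-- `H_{λ,α,β}` is a **PBW deformation** of `S ⋊ G`:  the associated graded algebra is
`S ⋊ G`, equivalently (all filtered pieces being finite dimensional) each filtered
piece has the same dimension as the corresponding one of `S ⋊ G = H_{0,0,0}`. -/
def IsPBW : Prop :=
  ∀ d, Module.finrank k (filtH k G V R ρ lam α β d)
    = Module.finrank k (filtH k G V R ρ 0 0 0 d)

/-! ### The skew group algebra and auxiliary maps -/

/-- The skew group algebra `S ⋊ G`, presented as `H_{0,0,0}`. -/
abbrev SkewA := HAlg k G V R ρ 0 0 0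

/-- The image of `kG` in `S ⋊ G`. -/
def gA : MonoidAlgebra k G →ₗ[k] SkewA k G V R ρ :=
  (toH k G V R ρ 0 0 0).toLinearMap.comp (gIn k G V)

/-- The image of `V` in `S ⋊ G`. -/
def vA : V →ₗ[k] SkewA k G V R ρ :=
  (toH k G V R ρ 0 0 0).toLinearMap.comp (vIn k G V)

/-- `g`, as an element of the group algebra. -/
def ofg (g : G) : MonoidAlgebra k G := MonoidAlgebra.of k G g

/-- The twist map `σ : kG ⊗ V → V ⊗ kG`, `g ⊗ v ↦ ᵍv ⊗ g`. -/
def sigma : MonoidAlgebra k G ⊗[k] V →ₗ[k] V ⊗[k] MonoidAlgebra k G :=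
  TensorProduct.lift
    (((Finsupp.lift (V →ₗ[k] (V ⊗[k] MonoidAlgebra k G)) k G
      (fun g => ((TensorProduct.mk k V (MonoidAlgebra k G)).flip (MonoidAlgebra.of k G g)).comp
        (ρ g))).comp (MonoidAlgebra.coeffLinearEquiv k).toLinearMap :
      MonoidAlgebra k G →ₗ[k] (V →ₗ[k] (V ⊗[k] MonoidAlgebra k G))))

/-- `λ(g ⊗ -) : V → kG` for fixed `g`. -/
def lamMk (g : G) : V →ₗ[k] MonoidAlgebra k G :=
  lam.comp ((TensorProduct.mk k (MonoidAlgebra k G) V) (MonoidAlgebra.of k G g))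

variable (hR : ∀ (g : G) (x : V ⊗[k] V), x ∈ R → TensorProduct.map (ρ g) (ρ g) x ∈ R)

/-- The diagonal action of `g` on `R ⊆ V ⊗ V`. -/
def rActR (g : G) : R →ₗ[k] R :=
  (TensorProduct.map (ρ g) (ρ g)).restrict (fun x hx => hR g x hx)

/-- Multiplication `V ⊗ kG → S ⋊ G`. -/
def embVGA : V ⊗[k] MonoidAlgebra k G →ₗ[k] SkewA k G V R ρ :=
  (LinearMap.mul' k _).comp (TensorProduct.map (vA k G V R ρ) (gA k G V R ρ))

/-- Multiplication `kG ⊗ V → S ⋊ G`. -/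
def embGVA : MonoidAlgebra k G ⊗[k] V →ₗ[k] SkewA k G V R ρ :=
  (LinearMap.mul' k _).comp (TensorProduct.map (gA k G V R ρ) (vA k G V R ρ))

/-- Multiplication `(V ⊗ kG) ⊗ V → S ⋊ G`. -/
def embVGVA : (V ⊗[k] MonoidAlgebra k G) ⊗[k] V →ₗ[k] SkewA k G V R ρ :=
  (LinearMap.mul' k _).comp (TensorProduct.map (embVGA k G V R ρ) (vA k G V R ρ))

/-- Multiplication `V ⊗ (V ⊗ kG) → S ⋊ G`. -/
def embVVGA : V ⊗[k] (V ⊗[k] MonoidAlgebra k G) →ₗ[k] SkewA k G V R ρ :=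
  (LinearMap.mul' k _).comp (TensorProduct.map (vA k G V R ρ) (embVGA k G V R ρ))

/-- The inclusion `R ⊗ V → V ⊗ (V ⊗ V)`. -/
def inclRV : (R : Submodule k (V ⊗[k] V)) ⊗[k] V →ₗ[k] V ⊗[k] (V ⊗[k] V) :=
  (TensorProduct.assoc k V V V).toLinearMap.comp
    (TensorProduct.map R.subtype LinearMap.id)

/-- The inclusion `V ⊗ R → V ⊗ (V ⊗ V)`. -/
def inclVR : V ⊗[k] (R : Submodule k (V ⊗[k] V)) →ₗ[k] V ⊗[k] (V ⊗[k] V) :=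
  TensorProduct.map LinearMap.id R.subtype

/-- The inclusion `R ⊗ kG → V ⊗ (V ⊗ kG)`. -/
def inclRG : (R : Submodule k (V ⊗[k] V)) ⊗[k] MonoidAlgebra k G →ₗ[k]
    V ⊗[k] (V ⊗[k] MonoidAlgebra k G) :=
  (TensorProduct.assoc k V V (MonoidAlgebra k G)).toLinearMap.comp
    (TensorProduct.map R.subtype LinearMap.id)

/-- `((1 ⊗ σ)(α ⊗ 1) − 1 ⊗ α)(x)`, computed from the two presentations
`x₁ ∈ R ⊗ V` and `x₂ ∈ V ⊗ R` of an element `x ∈ (R ⊗ V) ∩ (V ⊗ R)`. -/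
def Theta (x₁ : (R : Submodule k (V ⊗[k] V)) ⊗[k] V)
    (x₂ : V ⊗[k] (R : Submodule k (V ⊗[k] V))) : V ⊗[k] (V ⊗[k] MonoidAlgebra k G) :=
  (TensorProduct.map LinearMap.id (sigma k G V ρ))
      ((TensorProduct.assoc k V (MonoidAlgebra k G) V)
        ((TensorProduct.map α LinearMap.id) x₁))
    - (TensorProduct.map LinearMap.id α) x₂

/-- The extension of `α` to a right `kG`-module map `R ⊗ kG → V ⊗ kG`. -/
def αext : (R : Submodule k (V ⊗[k] V)) ⊗[k] MonoidAlgebra k G →ₗ[k]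
    V ⊗[k] MonoidAlgebra k G :=
  (TensorProduct.map LinearMap.id (LinearMap.mul' k (MonoidAlgebra k G))).comp
    (((TensorProduct.assoc k V (MonoidAlgebra k G) (MonoidAlgebra k G)).toLinearMap).comp
      (TensorProduct.map α LinearMap.id))

/-- The extension of `β` to a right `kG`-module map `R ⊗ kG → kG`. -/
def βext : (R : Submodule k (V ⊗[k] V)) ⊗[k] MonoidAlgebra k G →ₗ[k] MonoidAlgebra k G :=
  (LinearMap.mul' k (MonoidAlgebra k G)).comp (TensorProduct.map β LinearMap.id)

/-- The `g`-component `α_g : R → V` of `α`. -/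
def αComp (g : G) : (R : Submodule k (V ⊗[k] V)) →ₗ[k] V :=
  ((TensorProduct.rid k V).toLinearMap.comp
    (TensorProduct.map LinearMap.id ((Finsupp.lapply g).comp
      (MonoidAlgebra.coeffLinearEquiv k).toLinearMap))).comp α

/-- `Σ_{g ∈ G} α_g ⊗ λ(g ⊗ −)`, as a map `R ⊗ V → S ⋊ G`. -/
def sumAlphaLam [Fintype G] : (R : Submodule k (V ⊗[k] V)) ⊗[k] V →ₗ[k] SkewA k G V R ρ :=
  ∑ g : G, (embVGA k G V R ρ).comp
    (TensorProduct.map (αComp k G V R α g) (lamMk k G V lam g))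

/-- conjugation `x ↦ g·x·g⁻¹` on the group algebra. -/
def conjKG (g : G) : MonoidAlgebra k G →ₗ[k] MonoidAlgebra k G :=
  (LinearMap.mulRight k (MonoidAlgebra.of k G g⁻¹)).comp
    (LinearMap.mulLeft k (MonoidAlgebra.of k G g))

/-- the `G`-action `ᵍ(w ⊗ h) = ᵍw ⊗ ghg⁻¹` on `V ⊗ kG`. -/
def conjVG (g : G) : V ⊗[k] MonoidAlgebra k G →ₗ[k] V ⊗[k] MonoidAlgebra k G :=
  TensorProduct.map (ρ g) (conjKG k G g)

end DeformKoszul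

open DeformKoszul

/-!
`H_{0,α,β}` is a quotient of `T(V) ⋊ G`, which is `⨁ₙ V^{⊗n} ⊗ kG` as a vector space. For
invariant `α`, `β` the kernel is spanned by the consequences of `r - α(r) - β(r)` at the various
positions of `V^{⊗n}`, and the PBW property says that a combination of consequences of leading
degree `n` whose leading terms cancel is a combination of consequences of smaller leading degree.
Koszulity provides a basis of `V^{⊗n}` adapted to all positions of `R`, so that only pairs of
positions matter: disjoint ones cancel, and adjacent ones are overlaps in `(R ⊗ V) ∩ (V ⊗ R)`,
which resolve by (i)–(iii). Conversely, the PBW property in degree two leaves no room for new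
relations of degree at most two; conjugating a defining relation by `g` and reducing an overlap in
two ways both give such relations, whence the invariance and (i)–(iii).
-/

namespace DeformKoszul

section LinearAlgebra

universe u

variable {k : Type*} [Field k]

theorem finrank_map_add_finrank_inf_ker {X Y : Type*} [AddCommGroup X] [Module k X]
    [AddCommGroup Y] [Module k Y] (A : Submodule k X) [FiniteDimensional k A] (f : X →ₗ[k] Y) :
    Module.finrank k (A.map f) + Module.finrank k ↥(A ⊓ LinearMap.ker f)
      = Module.finrank k A := by
  have e : ↥(A ⊓ LinearMap.ker f) ≃ₗ[k] LinearMap.ker (f.domRestrict A) :=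
    (Submodule.comapSubtypeEquivOfLe inf_le_left).symm.trans
      (LinearEquiv.ofEq _ _ (by ext x; simp [LinearMap.mem_ker]))
  rw [e.finrank_eq, ← LinearMap.range_domRestrict]
  exact LinearMap.finrank_range_add_finrank_ker (f.domRestrict A)

section TensorProduct

variable {X Y : Type*} [AddCommGroup X] [Module k X] [AddCommGroup Y] [Module k Y]

theorem mem_range_lTensor_subtype_iff {ι : Type*} [DecidableEq ι] (b : Module.Basis ι k X)
    (C : Submodule k Y) (u : X ⊗[k] Y) :
    u ∈ LinearMap.range (C.subtype.lTensor X)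
      ↔ ∀ i, TensorProduct.equivFinsuppOfBasisLeft b u i ∈ C := by
  constructor
  · rintro ⟨t, rfl⟩ i
    induction t using TensorProduct.induction_on with
    | zero => simp
    | tmul x c => simpa using C.smul_mem _ c.2
    | add s t hs ht => simpa only [map_add, Finsupp.add_apply] using C.add_mem hs ht
  · intro h
    rw [← (TensorProduct.equivFinsuppOfBasisLeft b).symm_apply_apply u,
      TensorProduct.equivFinsuppOfBasisLeft_symm_apply]
    exact Submodule.sum_mem _ fun i _ => ⟨b i ⊗ₜ ⟨_, h i⟩, rfl⟩

theorem range_lTensor_inf (A B : Submodule k Y) :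
    LinearMap.range ((A ⊓ B).subtype.lTensor X)
      = LinearMap.range (A.subtype.lTensor X) ⊓ LinearMap.range (B.subtype.lTensor X) := by
  classical
  ext u
  simp only [mem_range_lTensor_subtype_iff (Module.Basis.ofVectorSpace k X), Submodule.mem_inf,
    forall_and]

theorem range_rTensor_eq_map_comm (A : Submodule k X) :
    LinearMap.range (A.subtype.rTensor Y)
      = (LinearMap.range (A.subtype.lTensor Y)).map (TensorProduct.comm k Y X).toLinearMap := by
  rw [← LinearMap.comm_comp_lTensor_comp_comm_eq, ← LinearMap.range_comp, ← LinearMap.comp_assoc,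
    LinearMap.range_comp_of_range_eq_top _ (LinearEquiv.range _)]

theorem range_rTensor_inf (A B : Submodule k X) :
    LinearMap.range ((A ⊓ B).subtype.rTensor Y)
      = LinearMap.range (A.subtype.rTensor Y) ⊓ LinearMap.range (B.subtype.rTensor Y) := by
  simp only [range_rTensor_eq_map_comm, range_lTensor_inf]
  exact Submodule.map_inf _ (TensorProduct.comm k Y X).injective

theorem range_rTensor_inf_range_lTensor (A : Submodule k X) (B : Submodule k Y) :
    LinearMap.range (A.subtype.rTensor Y) ⊓ LinearMap.range (B.subtype.lTensor X)
      = LinearMap.range (TensorProduct.map A.subtype B.subtype) := by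
  apply le_antisymm
  · rintro u ⟨⟨s, rfl⟩, ⟨t, ht⟩⟩
    obtain ⟨p, hp⟩ := B.subtype.exists_leftInverse_of_injective B.ker_subtype
    have hproj : (B.subtype ∘ₗ p).lTensor X (A.subtype.rTensor Y s) = A.subtype.rTensor Y s := by
      rw [← ht, ← LinearMap.lTensor_comp_apply, LinearMap.comp_assoc, hp, LinearMap.comp_id]
    rw [← hproj]
    exact ⟨p.lTensor A s, by
      rw [← LinearMap.comp_apply, ← LinearMap.comp_apply, LinearMap.lTensor_comp_rTensor,
        LinearMap.map_comp_lTensor]⟩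
  · rintro _ ⟨t, rfl⟩
    refine ⟨⟨B.subtype.lTensor A t, ?_⟩, ⟨A.subtype.rTensor B t, ?_⟩⟩
    · rw [← LinearMap.comp_apply, LinearMap.rTensor_comp_lTensor]
    · rw [← LinearMap.comp_apply, LinearMap.lTensor_comp_rTensor]

end TensorProduct

/-- Backelin's distributivity criterion for a family of subspaces: one basis of the ambient space
contains a basis of each member. -/
def HasAdaptedBasis {ι : Type*} {X : Type u} [AddCommGroup X] [Module k X]
    (W : ι → Submodule k X) : Prop :=
  ∃ (κ : Type u) (b : Module.Basis κ k X), ∀ i, ∃ S : Set κ, W i = Submodule.span k (b '' S)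

namespace HasAdaptedBasis

variable {ι : Type*} {X Y : Type u} [AddCommGroup X] [Module k X] [AddCommGroup Y] [Module k Y]
  {W : ι → Submodule k X}

theorem map_linearEquiv (hW : HasAdaptedBasis W) (e : X ≃ₗ[k] Y) :
    HasAdaptedBasis fun i => (W i).map e.toLinearMap := by
  obtain ⟨κ, b, hb⟩ := hW
  refine ⟨κ, b.map e, fun i => ?_⟩
  obtain ⟨S, hS⟩ := hb i
  refine ⟨S, ?_⟩
  simp only [hS, Submodule.map_span, Set.image_image]
  rfl

theorem range_rTensor (hW : HasAdaptedBasis W) (Y : Type u) [AddCommGroup Y] [Module k Y] :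
    HasAdaptedBasis fun i => LinearMap.range ((W i).subtype.rTensor Y) := by
  obtain ⟨κ, b, hb⟩ := hW
  let c := Module.Basis.ofVectorSpace k Y
  refine ⟨κ × Module.Basis.ofVectorSpaceIndex k Y, b.tensorProduct c, fun i => ?_⟩
  obtain ⟨S, hS⟩ := hb i
  refine ⟨S ×ˢ Set.univ, le_antisymm ?_ ?_⟩
  · rintro _ ⟨t, rfl⟩
    induction t using TensorProduct.induction_on with
    | zero => simp
    | add s t hs ht => simpa only [map_add] using Submodule.add_mem _ hs ht
    | tmul w y =>
      have hw : (w : X) ∈ Submodule.span k (b '' S) := hS ▸ w.2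
      have hy : y ∈ Submodule.span k (Set.range c) := c.mem_span y
      have := Submodule.apply_mem_map₂ (TensorProduct.mk k X Y) hw hy
      rw [Submodule.map₂_span_span] at this
      refine Submodule.span_mono ?_ this
      rintro _ ⟨_, ⟨s, hs, rfl⟩, _, ⟨j, rfl⟩, rfl⟩
      exact ⟨(s, j), ⟨hs, trivial⟩, by simp⟩
  · rw [Submodule.span_le]
    rintro _ ⟨⟨s, j⟩, ⟨hs, -⟩, rfl⟩
    have hs' : b s ∈ W i := hS ▸ Submodule.subset_span ⟨s, hs, rfl⟩
    exact ⟨⟨b s, hs'⟩ ⊗ₜ c j, by simp⟩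

theorem exists_linearMap_eqOn (hW : HasAdaptedBasis W) {Z : Type*} [AddCommGroup Z] [Module k Z]
    (f : ι → X →ₗ[k] Z) (hf : ∀ i j, Set.EqOn (f i) (f j) (W i ⊓ W j : Submodule k X)) :
    ∃ g : X →ₗ[k] Z, ∀ i, Set.EqOn g (f i) (W i) := by
  classical
  obtain ⟨κ, b, hb⟩ := hW
  choose S hS using hb
  have hmem {i x} (hx : x ∈ S i) : b x ∈ W i := hS i ▸ Submodule.subset_span ⟨x, hx, rfl⟩
  let g : X →ₗ[k] Z :=
    b.constr k fun x => if h : ∃ i, x ∈ S i then f h.choose (b x) else 0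
  refine ⟨g, fun i => ?_⟩
  rw [hS i, LinearMap.eqOn_span_iff]
  rintro _ ⟨x, hx, rfl⟩
  have h : ∃ i, x ∈ S i := ⟨i, hx⟩
  rw [b.constr_basis, dif_pos h]
  exact hf _ _ ⟨hmem h.choose_spec, hmem hx⟩

end HasAdaptedBasis

end LinearAlgebra

section FreeModule

universe u

/-- Multiplication `M ⊗ N → E`, `m ⊗ n ↦ f m * g n`, of two linear maps into an algebra. -/
def mulTensor {k M N E : Type*} [CommSemiring k] [AddCommMonoid M] [Module k M]
    [AddCommMonoid N] [Module k N] [Semiring E] [Algebra k E] (f : M →ₗ[k] E) (g : N →ₗ[k] E) :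
    M ⊗[k] N →ₗ[k] E :=
  LinearMap.mul' k E ∘ₗ TensorProduct.map f g

@[simp]
theorem mulTensor_tmul {k M N E : Type*} [CommSemiring k] [AddCommMonoid M] [Module k M]
    [AddCommMonoid N] [Module k N] [Semiring E] [Algebra k E] (f : M →ₗ[k] E) (g : N →ₗ[k] E)
    (m : M) (n : N) : mulTensor f g (m ⊗ₜ[k] n) = f m * g n :=
  rfl

variable (k : Type*) [Field k] (V : Type u) [AddCommGroup V] [Module k V]
  (X : Type u) [AddCommGroup X] [Module k X]

/-- `V^{⊗n} ⊗ X`, bracketed to the right; bundled so that the recursion carries the module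
structure. -/
def TPow : ℕ → ModuleCat.{u} k
  | 0 => ModuleCat.of k X
  | n + 1 => ModuleCat.of k (V ⊗[k] TPow n)

/-- The free `T(V)`-module `⨁ₙ V^{⊗n} ⊗ X` on the vector space `X`. -/
abbrev FreeMod := DirectSum ℕ fun n => TPow k V X n

/-- The identification of `X` with `V^{⊗0} ⊗ X`. -/
def nilEquiv : X ≃ₗ[k] TPow k V X 0 :=
  LinearEquiv.refl k X

/-- The identification `V ⊗ (V^{⊗n} ⊗ X) = V^{⊗(n+1)} ⊗ X`. -/
def consEquiv (n : ℕ) : V ⊗[k] TPow k V X n ≃ₗ[k] TPow k V X (n + 1) :=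
  LinearEquiv.refl k (V ⊗[k] TPow k V X n)

/-- The identification `(V ⊗ V) ⊗ (V^{⊗n} ⊗ X) = V^{⊗(n+2)} ⊗ X`. -/
def consEquiv₂ (n : ℕ) : (V ⊗[k] V) ⊗[k] TPow k V X n ≃ₗ[k] TPow k V X (n + 2) :=
  TensorProduct.assoc k V V (TPow k V X n) ≪≫ₗ (consEquiv k V X n).lTensor V ≪≫ₗ
    consEquiv k V X (n + 1)

instance finiteDimensional_TPow [FiniteDimensional k V] [FiniteDimensional k X] :
    ∀ n, FiniteDimensional k (TPow k V X n)
  | 0 => Module.Finite.equiv (nilEquiv k V X)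
  | n + 1 =>
    have := finiteDimensional_TPow n
    Module.Finite.equiv (consEquiv k V X n)

/-- The inclusion of the component of degree `n`. -/
abbrev incl (n : ℕ) : TPow k V X n →ₗ[k] FreeMod k V X :=
  DirectSum.lof k ℕ (fun n => TPow k V X n) n

/-- The projection onto the component of degree `n`. -/
abbrev proj (n : ℕ) : FreeMod k V X →ₗ[k] TPow k V X n :=
  DirectSum.component k ℕ (fun n => TPow k V X n) n

/-- The elements of degree at most `d`. -/
def degLE (d : ℕ) : Submodule k (FreeMod k V X) :=
  ⨆ n : Set.Iic d, LinearMap.range (incl k V X n)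

/-- The left action of `V` on the free `T(V)`-module. -/
def lmul : V →ₗ[k] Module.End k (FreeMod k V X) :=
  (DirectSum.toModule k ℕ (V →ₗ[k] FreeMod k V X) fun n =>
    ((TensorProduct.mk k V (TPow k V X n)).compr₂
      (incl k V X (n + 1) ∘ₗ (consEquiv k V X n).toLinearMap)).flip).flip

variable {k V X}

@[simp]
theorem consEquiv₂_tmul_tmul (n : ℕ) (v w : V) (m : TPow k V X n) :
    consEquiv₂ k V X n ((v ⊗ₜ[k] w) ⊗ₜ[k] m)
      = consEquiv k V X (n + 1) (v ⊗ₜ[k] consEquiv k V X n (w ⊗ₜ[k] m)) :=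
  rfl

@[simp]
theorem lmul_incl (v : V) (n : ℕ) (m : TPow k V X n) :
    lmul k V X v (incl k V X n m) = incl k V X (n + 1) (consEquiv k V X n (v ⊗ₜ[k] m)) := by
  simp [lmul]

theorem mulTensor_lmul_lmul_incl (t : V ⊗[k] V) (n : ℕ) (m : TPow k V X n) :
    mulTensor (lmul k V X) (lmul k V X) t (incl k V X n m)
      = incl k V X (n + 2) (consEquiv₂ k V X n (t ⊗ₜ[k] m)) := by
  induction t using TensorProduct.induction_on with
  | zero => simp
  | tmul v w => simp
  | add s t hs ht => simp only [map_add, LinearMap.add_apply, TensorProduct.add_tmul, hs, ht]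

theorem range_incl_le_degLE {n d : ℕ} (h : n ≤ d) :
    LinearMap.range (incl k V X n) ≤ degLE k V X d :=
  le_iSup (fun n : Set.Iic d => LinearMap.range (incl k V X n)) ⟨n, h⟩

theorem incl_mem_degLE {n d : ℕ} (h : n ≤ d) (m : TPow k V X n) :
    incl k V X n m ∈ degLE k V X d :=
  range_incl_le_degLE h ⟨m, rfl⟩

theorem degLE_le {d : ℕ} {N : Submodule k (FreeMod k V X)} :
    degLE k V X d ≤ N ↔ ∀ n ≤ d, ∀ m, incl k V X n m ∈ N := by
  simp [degLE, LinearMap.range_le_iff_comap, Submodule.eq_top_iff']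

theorem degLE_mono : Monotone (degLE k V X) :=
  fun _ _ h => degLE_le.2 fun _ hn m => incl_mem_degLE (hn.trans h) m

theorem degLE_zero : degLE k V X 0 = LinearMap.range (incl k V X 0) := by
  refine le_antisymm (degLE_le.2 fun n hn m => ?_) (range_incl_le_degLE le_rfl)
  obtain rfl := Nat.le_zero.1 hn
  exact LinearMap.mem_range_self _ m

theorem degLE_succ (d : ℕ) :
    degLE k V X (d + 1) = degLE k V X d ⊔ LinearMap.range (incl k V X (d + 1)) := by
  refine le_antisymm (degLE_le.2 fun n hn m => ?_)
    (sup_le (degLE_mono d.le_succ) (range_incl_le_degLE le_rfl))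
  obtain hn | rfl := Nat.le_succ_iff.1 hn
  · exact Submodule.mem_sup_left (incl_mem_degLE hn m)
  · exact Submodule.mem_sup_right (LinearMap.mem_range_self _ m)

theorem degLE_le_ker_proj {d n : ℕ} (h : d < n) :
    degLE k V X d ≤ LinearMap.ker (proj k V X n) :=
  degLE_le.2 fun i hi m => by
    rw [LinearMap.mem_ker, DirectSum.component.of, dif_neg (by omega)]

theorem degLE_le_comap_lmul (v : V) (d : ℕ) :
    degLE k V X d ≤ (degLE k V X (d + 1)).comap (lmul k V X v) :=
  degLE_le.2 fun n hn m => by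
    rw [Submodule.mem_comap, lmul_incl]
    exact incl_mem_degLE (by omega) _

theorem range_incl_succ (n : ℕ) : LinearMap.range (incl k V X (n + 1))
    = Submodule.map₂ (lmul k V X) ⊤ (LinearMap.range (incl k V X n)) := by
  refine le_antisymm ?_ (Submodule.map₂_le.2 ?_)
  · rintro _ ⟨m, rfl⟩
    obtain ⟨t, rfl⟩ := (consEquiv k V X n).surjective m
    induction t using TensorProduct.induction_on with
    | zero => simp
    | tmul v m =>
      rw [← lmul_incl]
      exact Submodule.apply_mem_map₂ _ trivial (LinearMap.mem_range_self _ m)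
    | add s t hs ht => simpa only [map_add] using add_mem hs ht
  · rintro v - _ ⟨m, rfl⟩
    rw [lmul_incl]
    exact LinearMap.mem_range_self _ _

theorem freeMod_induction {p : FreeMod k V X → Prop} (f : FreeMod k V X)
    (add : ∀ f g, p f → p g → p (f + g)) (nil : ∀ x, p (incl k V X 0 (nilEquiv k V X x)))
    (lmul : ∀ v f, p f → p (lmul k V X v f)) : p f := by
  have hzero : p 0 := by simpa using nil 0
  have hincl : ∀ n (m : TPow k V X n), p (incl k V X n m) := by
    intro n
    induction n with
    | zero => exact fun m => nil ((nilEquiv k V X).symm m)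
    | succ n ih =>
      intro m
      obtain ⟨t, rfl⟩ := (consEquiv k V X n).surjective m
      induction t using TensorProduct.induction_on with
      | zero => simpa using hzero
      | tmul v m => simpa using lmul v _ (ih m)
      | add s t hs ht => simpa only [map_add] using add _ _ hs ht
  induction f using DirectSum.induction_on with
  | zero => exact hzero
  | of n m => exact hincl n m
  | add f g hf hg => exact add f g hf hg

theorem exists_mem_degLE (f : FreeMod k V X) : ∃ d, f ∈ degLE k V X d := by
  induction f using freeMod_induction with
  | nil x => exact ⟨0, incl_mem_degLE le_rfl _⟩
  | lmul v f hf => exact hf.imp' (· + 1) fun d hd => degLE_le_comap_lmul v d hd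
  | add f g hf hg =>
    obtain ⟨⟨d, hd⟩, e, he⟩ := And.intro hf hg
    exact ⟨max d e, add_mem (degLE_mono (le_max_left d e) hd) (degLE_mono (le_max_right d e) he)⟩

instance [FiniteDimensional k V] [FiniteDimensional k X] (d : ℕ) :
    FiniteDimensional k (degLE k V X d) :=
  Submodule.finiteDimensional_iSup _

end FreeModule

section DeformedRelations

universe u

variable {k : Type*} [Field k] {V : Type u} [AddCommGroup V] [Module k V]
  (R : Submodule k (V ⊗[k] V)) (X : Type u) [AddCommGroup X] [Module k X]

/-- The subspace `V^{⊗i} ⊗ R ⊗ V^{⊗(n-2-i)} ⊗ X` of `V^{⊗n} ⊗ X`, which is `⊥` if `n < i + 2`. -/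
def relAt : (n : ℕ) → ℕ → Submodule k (TPow k V X n)
  | n + 2, 0 =>
    (LinearMap.range (R.subtype.rTensor (TPow k V X n))).map (consEquiv₂ k V X n).toLinearMap
  | n + 1, i + 1 =>
    (LinearMap.range ((relAt n i).subtype.lTensor V)).map (consEquiv k V X n).toLinearMap
  | 0, _ | 1, 0 => ⊥

theorem relAt_zero (n : ℕ) :
    relAt R X (n + 2) 0 =
      (LinearMap.range (R.subtype.rTensor (TPow k V X n))).map
        (consEquiv₂ k V X n).toLinearMap := by
  rw [relAt]

theorem relAt_succ (n i : ℕ) : relAt R X (n + 1) (i + 1)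
    = (LinearMap.range ((relAt R X n i).subtype.lTensor V)).map
        (consEquiv k V X n).toLinearMap := by
  rw [relAt]

theorem relAt_eq_bot {n i : ℕ} (h : n < i + 2) : relAt R X n i = ⊥ := by
  induction i generalizing n with
  | zero =>
    obtain rfl | rfl : n = 0 ∨ n = 1 := by omega
    all_goals rw [relAt]
  | succ i ih =>
    cases n with
    | zero => rw [relAt]
    | succ n =>
      have hzero : (relAt R X n i).subtype = 0 := by
        rw [ih (by omega)]
        exact LinearMap.ext fun x => (Submodule.mem_bot k).1 x.2
      rw [relAt_succ, hzero, LinearMap.lTensor_zero, LinearMap.range_zero, Submodule.map_bot]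

variable {R X}

theorem map_relAt_zero {Z : Type*} [AddCommGroup Z] [Module k Z] {n : ℕ}
    (f : TPow k V X (n + 2) →ₗ[k] Z) (B : R →ₗ[k] TPow k V X n →ₗ[k] Z)
    (h : ∀ (r : R) m, f (consEquiv₂ k V X n ((r : V ⊗[k] V) ⊗ₜ[k] m)) = B r m) :
    (relAt R X (n + 2) 0).map f = Submodule.map₂ B ⊤ ⊤ := by
  have hB : B = (TensorProduct.mk k R (TPow k V X n)).compr₂
      (f ∘ₗ (consEquiv₂ k V X n).toLinearMap ∘ₗ R.subtype.rTensor (TPow k V X n)) :=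
    LinearMap.ext fun r => LinearMap.ext fun m => (h r m).symm
  rw [hB, relAt_zero, ← Submodule.map_map₂, TensorProduct.map₂_mk_top_top_eq_top, Submodule.map_top,
    LinearMap.range_comp, LinearMap.range_comp]

theorem map_relAt_succ {Z : Type*} [AddCommGroup Z] [Module k Z] {n i : ℕ}
    (f : TPow k V X (n + 1) →ₗ[k] Z) (B : V →ₗ[k] TPow k V X n →ₗ[k] Z)
    (h : ∀ v m, f (consEquiv k V X n (v ⊗ₜ[k] m)) = B v m) :
    (relAt R X (n + 1) (i + 1)).map f = Submodule.map₂ B ⊤ (relAt R X n i) := by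
  have hB : B = (TensorProduct.mk k V (TPow k V X n)).compr₂
      (f ∘ₗ (consEquiv k V X n).toLinearMap) :=
    LinearMap.ext fun v => LinearMap.ext fun m => (h v m).symm
  rw [hB, relAt_succ, ← Submodule.map_map₂, Submodule.map_comp, LinearMap.lTensor,
    TensorProduct.range_map, LinearMap.range_id, Submodule.range_subtype]

variable (L : R →ₗ[k] Module.End k (FreeMod k V X))

/-- The operator that applies `L` to the factor in `R` at position `i` of a tensor of degree `n`.
It is meaningful only on `relAt R X n i`: off this subspace it depends on the choice of a linear
extension of `L` to `V ⊗ V`. -/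
def lowerAt : (n : ℕ) → ℕ → (TPow k V X n →ₗ[k] FreeMod k V X)
  | n + 2, 0 =>
    TensorProduct.lift ((LinearMap.exists_extend L).choose.compl₂ (incl k V X n)) ∘ₗ
      (consEquiv₂ k V X n).symm.toLinearMap
  | n + 1, i + 1 =>
    TensorProduct.lift ((lmul k V X).compl₂ (lowerAt n i)) ∘ₗ (consEquiv k V X n).symm.toLinearMap
  | 0, _ | 1, 0 => 0

theorem lowerAt_zero (n : ℕ) (r : R) (m : TPow k V X n) :
    lowerAt L (n + 2) 0 (consEquiv₂ k V X n ((r : V ⊗[k] V) ⊗ₜ[k] m)) = L r (incl k V X n m) := by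
  have h := LinearMap.congr_fun (LinearMap.exists_extend L).choose_spec r
  rw [LinearMap.comp_apply, Submodule.subtype_apply] at h
  simp [lowerAt, h]

@[simp]
theorem lowerAt_succ (n i : ℕ) (v : V) (m : TPow k V X n) :
    lowerAt L (n + 1) (i + 1) (consEquiv k V X n (v ⊗ₜ[k] m))
      = lmul k V X v (lowerAt L n i m) := by
  simp [lowerAt]

/-- The operators `r - L r` of the deformed relations, with `r` acting by multiplication. -/
def deformedQuad : R →ₗ[k] Module.End k (FreeMod k V X) :=
  mulTensor (lmul k V X) (lmul k V X) ∘ₗ R.subtype - L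

/-- The consequences in leading degree `n` of the relations `r = L r` applied at position `i`. -/
def deformedRel (n i : ℕ) : Submodule k (FreeMod k V X) :=
  (relAt R X n i).map (incl k V X n - lowerAt L n i)

/-- The span of the consequences of the relations `r = L r` of leading degree at most `d`. -/
def relSpan (d : ℕ) : Submodule k (FreeMod k V X) :=
  ⨆ n : Set.Iic d, ⨆ i, deformedRel L n i

theorem deformedRel_zero (n : ℕ) : deformedRel L (n + 2) 0
    = Submodule.map₂ (deformedQuad L) ⊤ (LinearMap.range (incl k V X n)) := by
  rw [← Submodule.map_top, Submodule.map₂_map_right]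
  refine map_relAt_zero _ _ fun r m => ?_
  rw [LinearMap.sub_apply, lowerAt_zero, ← mulTensor_lmul_lmul_incl]
  rfl

theorem deformedRel_succ (n i : ℕ) : deformedRel L (n + 1) (i + 1)
    = Submodule.map₂ (lmul k V X) ⊤ (deformedRel L n i) := by
  rw [deformedRel, deformedRel, Submodule.map₂_map_right]
  exact map_relAt_succ _ _ fun v m => by simp

theorem deformedRel_eq_bot {n i : ℕ} (h : n < i + 2) : deformedRel L n i = ⊥ := by
  rw [deformedRel, relAt_eq_bot R X h, Submodule.map_bot]

variable {L}

theorem relSpan_le {d : ℕ} {N : Submodule k (FreeMod k V X)} :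
    relSpan L d ≤ N ↔ ∀ n ≤ d, ∀ i, deformedRel L n i ≤ N := by
  simp [relSpan]

theorem deformedRel_le_relSpan {n d : ℕ} (h : n ≤ d) (i : ℕ) :
    deformedRel L n i ≤ relSpan L d :=
  relSpan_le.1 le_rfl n h i

theorem relSpan_mono : Monotone (relSpan L) :=
  fun _ _ h => relSpan_le.2 fun _ hn i => deformedRel_le_relSpan (hn.trans h) i

theorem relSpan_eq_bot {d : ℕ} (hd : d < 2) : relSpan L d = ⊥ :=
  eq_bot_iff.2 <| relSpan_le.2 fun n hn i => (deformedRel_eq_bot L (by omega)).le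

theorem relSpan_succ (d : ℕ) : relSpan L (d + 1) = relSpan L d ⊔ ⨆ i, deformedRel L (d + 1) i := by
  refine le_antisymm (relSpan_le.2 fun n hn i => ?_)
    (sup_le (relSpan_mono d.le_succ) (iSup_le fun i => deformedRel_le_relSpan le_rfl i))
  obtain hn | rfl := Nat.le_succ_iff.1 hn
  · exact le_sup_of_le_left (deformedRel_le_relSpan hn i)
  · exact le_sup_of_le_right (le_iSup (deformedRel L (d + 1)) i)

theorem relSpan_le_comap_lmul (v : V) (d : ℕ) :
    relSpan L d ≤ (relSpan L (d + 1)).comap (lmul k V X v) := by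
  refine relSpan_le.2 fun n hn i f hf => deformedRel_le_relSpan (Nat.succ_le_succ hn) (i + 1) ?_
  rw [deformedRel_succ]
  exact Submodule.apply_mem_map₂ _ trivial hf

theorem relSpan_le_of_stable {N : Submodule k (FreeMod k V X)}
    (hlmul : ∀ v, N ≤ N.comap (lmul k V X v)) (hquad : ∀ r f, deformedQuad L r f ∈ N) (d : ℕ) :
    relSpan L d ≤ N := by
  refine relSpan_le.2 fun n _ i => ?_
  induction i generalizing n with
  | zero =>
    obtain hn | ⟨n, rfl⟩ : n < 0 + 2 ∨ ∃ m, n = m + 2 :=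
      (lt_or_ge n 2).imp_right fun h => ⟨n - 2, by omega⟩
    · rw [deformedRel_eq_bot L hn]; exact bot_le
    · rw [deformedRel_zero]
      exact Submodule.map₂_le.2 fun r _ f _ => hquad r f
  | succ i ih =>
    obtain rfl | ⟨n, rfl⟩ : n = 0 ∨ ∃ m, n = m + 1 := by cases n <;> simp
    · rw [deformedRel_eq_bot L (by omega)]; exact bot_le
    · rw [deformedRel_succ]
      exact Submodule.map₂_le.2 fun v _ f hf => hlmul v (ih n (by omega) hf)

theorem degLE_le_comap_deformedQuad (r : R) (d : ℕ) :
    degLE k V X d ≤ (relSpan L (d + 2)).comap (deformedQuad L r) := by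
  refine degLE_le.2 fun n hn m => deformedRel_le_relSpan (Nat.add_le_add_right hn 2) 0 ?_
  rw [deformedRel_zero]
  exact Submodule.apply_mem_map₂ _ trivial ⟨m, rfl⟩

/-- The operators `L r` raise the degree by at most one, whereas multiplication by `r` raises it
by two. -/
def IsLowerOrder (L : R →ₗ[k] Module.End k (FreeMod k V X)) : Prop :=
  ∀ r d, degLE k V X d ≤ (degLE k V X (d + 1)).comap (L r)

theorem IsLowerOrder.map_lowerAt_relAt_le (hL : IsLowerOrder L) (n i : ℕ) :
    (relAt R X (n + 1) i).map (lowerAt L (n + 1) i) ≤ degLE k V X n := by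
  induction n generalizing i with
  | zero => rw [relAt_eq_bot R X (by omega), Submodule.map_bot]; exact bot_le
  | succ n ih =>
    cases i with
    | zero =>
      rw [map_relAt_zero _ (LinearMap.compl₂ L (incl k V X n)) (lowerAt_zero L n),
        Submodule.map₂_le]
      exact fun r _ m _ => hL r n (incl_mem_degLE le_rfl m)
    | succ i =>
      rw [map_relAt_succ _ ((lmul k V X).compl₂ _) (lowerAt_succ L (n + 1) i), Submodule.map₂_le]
      exact fun v _ m hm => degLE_le_comap_lmul v n (ih i ⟨m, hm, rfl⟩)

theorem IsLowerOrder.relSpan_le_degLE (hL : IsLowerOrder L) (d : ℕ) :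
    relSpan L d ≤ degLE k V X d := by
  refine relSpan_le.2 fun n hn i => ?_
  rintro _ ⟨u, hu, rfl⟩
  cases n with
  | zero => simp [(Submodule.mem_bot k).1 (relAt_eq_bot R X (Nat.zero_lt_succ (i + 1)) ▸ hu)]
  | succ n =>
    rw [LinearMap.sub_apply]
    exact sub_mem (incl_mem_degLE hn u)
      (degLE_mono (n.le_succ.trans hn) (hL.map_lowerAt_relAt_le n i ⟨u, hu, rfl⟩))

theorem relSpan_le_comap_of_intertwines {T : Module.End k (FreeMod k V X)} (s : V → V) (t : R → R)
    (hlmul : ∀ v, T * lmul k V X v = lmul k V X (s v) * T)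
    (hquad : ∀ r, T * deformedQuad L r = deformedQuad L (t r) * T)
    (hdeg : ∀ n, LinearMap.range (incl k V X n) ≤ (LinearMap.range (incl k V X n)).comap T)
    (d : ℕ) : relSpan L d ≤ (relSpan L d).comap T := by
  suffices h : ∀ n i, deformedRel L n i ≤ (deformedRel L n i).comap T from
    relSpan_le.2 fun n hn i =>
      (h n i).trans (Submodule.comap_mono (deformedRel_le_relSpan hn i))
  intro n i
  induction i generalizing n with
  | zero =>
    obtain hn | ⟨n, rfl⟩ : n < 0 + 2 ∨ ∃ m, n = m + 2 :=
      (lt_or_ge n 2).imp_right fun h => ⟨n - 2, by omega⟩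
    · rw [deformedRel_eq_bot L hn]; exact bot_le
    · rw [deformedRel_zero, Submodule.map₂_le]
      intro r _ f hf
      rw [Submodule.mem_comap, ← Module.End.mul_apply, hquad]
      exact Submodule.apply_mem_map₂ _ trivial (hdeg n hf)
  | succ i ih =>
    obtain rfl | ⟨n, rfl⟩ : n = 0 ∨ ∃ m, n = m + 1 := by cases n <;> simp
    · rw [deformedRel_eq_bot L (by omega)]; exact bot_le
    · rw [deformedRel_succ, Submodule.map₂_le]
      intro v _ f hf
      rw [Submodule.mem_comap, ← Module.End.mul_apply, hlmul]
      exact Submodule.apply_mem_map₂ _ trivial (ih n hf)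

end DeformedRelations

section Confluence

universe u

variable {k : Type*} [Field k] {V : Type u} [AddCommGroup V] [Module k V]
  {R : Submodule k (V ⊗[k] V)} {X : Type u} [AddCommGroup X] [Module k X]
  {L L' : R →ₗ[k] Module.End k (FreeMod k V X)}

/-- Rewriting a tensor of degree `n + 1` at two of its positions gives results that agree up to
consequences of smaller degree. -/
def IsConfluentAt (L : R →ₗ[k] Module.End k (FreeMod k V X)) (n : ℕ) : Prop :=
  ∀ i j, relAt R X (n + 1) i ⊓ relAt R X (n + 1) j
    ≤ (relSpan L n).comap (lowerAt L (n + 1) i - lowerAt L (n + 1) j)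

-- The adapted basis lets the maps `lowerAt L (n + 1) i` be glued to one map modulo `relSpan L n`.
theorem relSpan_succ_inf_ker_proj_le {n : ℕ} (hL : IsLowerOrder L)
    (hW : HasAdaptedBasis (relAt R X (n + 1))) (hc : IsConfluentAt L n) :
    relSpan L (n + 1) ⊓ LinearMap.ker (proj k V X (n + 1))
      ≤ relSpan L n := by
  obtain ⟨f, hf⟩ := hW.exists_linearMap_eqOn (fun i => (relSpan L n).mkQ ∘ₗ lowerAt L (n + 1) i)
    fun i j u hu => (Submodule.Quotient.eq _).2 (hc i j hu)
  let Ψ := (relSpan L n).mkQ - ((relSpan L n).mkQ ∘ₗ incl k V X (n + 1) - f) ∘ₗ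
    proj k V X (n + 1)
  have hΨ : relSpan L (n + 1) ≤ LinearMap.ker Ψ := by
    rw [relSpan_succ]
    refine sup_le (fun x hx => ?_) (iSup_le fun i => ?_)
    · have hx' := degLE_le_ker_proj n.lt_succ_self (hL.relSpan_le_degLE n hx)
      simp [Ψ, LinearMap.mem_ker.1 hx', hx]
    · rintro _ ⟨u, hu, rfl⟩
      have hlow := degLE_le_ker_proj n.lt_succ_self (hL.map_lowerAt_relAt_le n i ⟨u, hu, rfl⟩)
      have hfu := hf i hu
      simp [Ψ, LinearMap.mem_ker.1 hlow, hfu, DirectSum.component.lof_self]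
  rintro x ⟨hx, hx0⟩
  simpa [Ψ, LinearMap.mem_ker.1 hx0] using hΨ hx

theorem relSpan_inf_degLE_le (hL : IsLowerOrder L) (hW : ∀ n, HasAdaptedBasis (relAt R X (n + 1)))
    (hc : ∀ n, IsConfluentAt L n) (d e : ℕ) : relSpan L e ⊓ degLE k V X d ≤ relSpan L d := by
  induction e with
  | zero => exact inf_le_left.trans (relSpan_mono d.zero_le)
  | succ e ih =>
    obtain h | h := le_or_gt (e + 1) d
    · exact inf_le_left.trans (relSpan_mono h)
    · exact fun x hx => ih ⟨relSpan_succ_inf_ker_proj_le hL (hW e) (hc e)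
        ⟨hx.1, degLE_le_ker_proj h hx.2⟩, hx.2⟩

theorem map_proj_deformedRel (hL : IsLowerOrder L) (n i : ℕ) :
    (deformedRel L (n + 1) i).map (proj k V X (n + 1)) = relAt R X (n + 1) i := by
  rw [deformedRel, ← Submodule.map_comp]
  refine SetLike.coe_injective ((Set.image_congr fun u hu => ?_).trans (Set.image_id _))
  have hlow := degLE_le_ker_proj n.lt_succ_self (hL.map_lowerAt_relAt_le n i ⟨u, hu, rfl⟩)
  simp [LinearMap.mem_ker.1 hlow, DirectSum.component.lof_self]

theorem map_proj_relSpan_succ (hL : IsLowerOrder L) (n : ℕ) :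
    (relSpan L (n + 1)).map (proj k V X (n + 1)) = ⨆ i, relAt R X (n + 1) i := by
  have hlow := (hL.relSpan_le_degLE n).trans (degLE_le_ker_proj n.lt_succ_self)
  rw [relSpan_succ, Submodule.map_sup, Submodule.map_iSup,
    LinearMap.le_ker_iff_map.1 hlow, bot_sup_eq]
  simp only [map_proj_deformedRel hL]

theorem finrank_relSpan_eq [FiniteDimensional k V] [FiniteDimensional k X] (hL : IsLowerOrder L)
    (hL' : IsLowerOrder L') (hW : ∀ n, HasAdaptedBasis (relAt R X (n + 1)))
    (hc : ∀ n, IsConfluentAt L n) (hc' : ∀ n, IsConfluentAt L' n) (d : ℕ) :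
    Module.finrank k (relSpan L d) = Module.finrank k (relSpan L' d) := by
  induction d with
  | zero => rw [relSpan_eq_bot two_pos, relSpan_eq_bot two_pos]
  | succ d ih =>
    have hker {L : R →ₗ[k] Module.End k (FreeMod k V X)} (hL : IsLowerOrder L)
        (hc : ∀ n, IsConfluentAt L n) : relSpan L (d + 1) ⊓
          LinearMap.ker (proj k V X (d + 1)) = relSpan L d :=
      le_antisymm (relSpan_succ_inf_ker_proj_le hL (hW d) (hc d))
        (le_inf (relSpan_mono d.le_succ)
          ((hL.relSpan_le_degLE d).trans (degLE_le_ker_proj d.lt_succ_self)))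
    have := Submodule.finiteDimensional_of_le (hL.relSpan_le_degLE (d + 1))
    have := Submodule.finiteDimensional_of_le (hL'.relSpan_le_degLE (d + 1))
    rw [← finrank_map_add_finrank_inf_ker (relSpan L (d + 1)) (proj k V X (d + 1)),
      ← finrank_map_add_finrank_inf_ker (relSpan L' (d + 1)) (proj k V X (d + 1)),
      hker hL hc, hker hL' hc', map_proj_relSpan_succ hL, map_proj_relSpan_succ hL', ih]

end Confluence

section ConfluenceCriterion

variable {k V : Type} [Field k] [AddCommGroup V] [Module k V] {R : Submodule k (V ⊗[k] V)}
  {X : Type} [AddCommGroup X] [Module k X]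

variable (k V X) in
/-- The identification `(V ⊗ V ⊗ V) ⊗ (V^{⊗n} ⊗ X) = V^{⊗(n+3)} ⊗ X`. -/
def consEquiv₃ (n : ℕ) : (V ⊗[k] (V ⊗[k] V)) ⊗[k] TPow k V X n ≃ₗ[k] TPow k V X (n + 3) :=
  TensorProduct.assoc k V (V ⊗[k] V) (TPow k V X n) ≪≫ₗ (consEquiv₂ k V X n).lTensor V ≪≫ₗ
    consEquiv k V X (n + 2)

theorem consEquiv₃_tmul_tmul (n : ℕ) (v : V) (t : V ⊗[k] V) (m : TPow k V X n) :
    consEquiv₃ k V X n ((v ⊗ₜ[k] t) ⊗ₜ[k] m)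
      = consEquiv k V X (n + 2) (v ⊗ₜ[k] consEquiv₂ k V X n (t ⊗ₜ[k] m)) :=
  rfl

theorem consEquiv₃_inclRV_tmul (n : ℕ) (r : R) (v : V) (m : TPow k V X n) :
    consEquiv₃ k V X n (inclRV k V R (r ⊗ₜ[k] v) ⊗ₜ[k] m)
      = consEquiv₂ k V X (n + 1) ((r : V ⊗[k] V) ⊗ₜ[k] consEquiv k V X n (v ⊗ₜ[k] m)) := by
  change consEquiv₃ k V X n (TensorProduct.assoc k V V V ((r : V ⊗[k] V) ⊗ₜ[k] v) ⊗ₜ[k] m) = _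
  induction (r : V ⊗[k] V) using TensorProduct.induction_on with
  | zero => simp
  | tmul a b => rfl
  | add s t hs ht => simp only [map_add, TensorProduct.add_tmul, hs, ht]

variable (R X) in
theorem relAt_zero_le (n : ℕ) : relAt R X (n + 3) 0
    ≤ (LinearMap.range ((LinearMap.range (inclRV k V R)).subtype.rTensor (TPow k V X n))).map
        (consEquiv₃ k V X n).toLinearMap := by
  rw [relAt_zero]
  rintro _ ⟨_, ⟨t, rfl⟩, rfl⟩
  induction t using TensorProduct.induction_on with
  | zero => simp
  | add s t hs ht => simpa only [map_add] using add_mem hs ht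
  | tmul r t =>
    obtain ⟨t, rfl⟩ := (consEquiv k V X n).surjective t
    induction t using TensorProduct.induction_on with
    | zero => simp
    | add s t hs ht => simpa only [map_add, TensorProduct.tmul_add] using add_mem hs ht
    | tmul v m =>
      exact ⟨_, ⟨⟨_, r ⊗ₜ[k] v, rfl⟩ ⊗ₜ[k] m, rfl⟩, consEquiv₃_inclRV_tmul n r v m⟩

variable (R X) in
theorem relAt_one_le (n : ℕ) : relAt R X (n + 3) 1
    ≤ (LinearMap.range ((LinearMap.range (inclVR k V R)).subtype.rTensor (TPow k V X n))).map
        (consEquiv₃ k V X n).toLinearMap := by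
  rw [← Submodule.map_id (relAt R X (n + 3) 1), map_relAt_succ LinearMap.id
    ((TensorProduct.mk k V (TPow k V X (n + 2))).compr₂ (consEquiv k V X (n + 2)).toLinearMap)
    fun _ _ => rfl, Submodule.map₂_le]
  rintro v - w hw
  rw [relAt_zero] at hw
  obtain ⟨_, ⟨t, rfl⟩, rfl⟩ := hw
  induction t using TensorProduct.induction_on with
  | zero => simp
  | add s t hs ht => simpa only [map_add] using add_mem hs ht
  | tmul r m => exact ⟨_, ⟨⟨_, v ⊗ₜ[k] r, rfl⟩ ⊗ₜ[k] m, rfl⟩, rfl⟩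

variable (R X) in
theorem relAt_add_two_le (n i : ℕ) : relAt R X (n + 2) (i + 2)
    ≤ (LinearMap.range ((relAt R X n i).subtype.lTensor (V ⊗[k] V))).map
        (consEquiv₂ k V X n).toLinearMap := by
  rw [← Submodule.map_id (relAt R X (n + 2) (i + 2)), map_relAt_succ LinearMap.id
    ((TensorProduct.mk k V (TPow k V X (n + 1))).compr₂ (consEquiv k V X (n + 1)).toLinearMap)
    fun _ _ => rfl, Submodule.map₂_le]
  rintro v - w hw
  rw [relAt_succ] at hw
  obtain ⟨_, ⟨t, rfl⟩, rfl⟩ := hw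
  induction t using TensorProduct.induction_on with
  | zero => simp
  | add s t hs ht => simpa only [map_add] using add_mem hs ht
  | tmul v' m => exact ⟨_, ⟨(v ⊗ₜ[k] v') ⊗ₜ[k] m, rfl⟩, rfl⟩

variable {L : R →ₗ[k] Module.End k (FreeMod k V X)}

theorem lowerAt_zero_inclRV (n : ℕ) (x : R ⊗[k] V) (m : TPow k V X n) :
    lowerAt L (n + 3) 0 (consEquiv₃ k V X n (inclRV k V R x ⊗ₜ[k] m))
      = mulTensor L (lmul k V X) x (incl k V X n m) := by
  induction x using TensorProduct.induction_on with
  | zero => simp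
  | tmul r v => rw [consEquiv₃_inclRV_tmul, lowerAt_zero, mulTensor_tmul, Module.End.mul_apply,
      lmul_incl]
  | add s t hs ht => simp only [map_add, TensorProduct.add_tmul, LinearMap.add_apply, hs, ht]

theorem lowerAt_one_inclVR (n : ℕ) (x : V ⊗[k] R) (m : TPow k V X n) :
    lowerAt L (n + 3) 1 (consEquiv₃ k V X n (inclVR k V R x ⊗ₜ[k] m))
      = mulTensor (lmul k V X) L x (incl k V X n m) := by
  induction x using TensorProduct.induction_on with
  | zero => simp
  | tmul v r =>
    have h := consEquiv₃_tmul_tmul n v (r : V ⊗[k] V) m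
    rw [inclVR, TensorProduct.map_tmul, LinearMap.id_apply, Submodule.subtype_apply, h,
      lowerAt_succ, lowerAt_zero, mulTensor_tmul, Module.End.mul_apply]
  | add s t hs ht => simp only [map_add, TensorProduct.add_tmul, LinearMap.add_apply, hs, ht]

theorem lowerAt_overlap_mem {n : ℕ}
    (hover : ∀ x₁ x₂, inclRV k V R x₁ = inclVR k V R x₂ → degLE k V X n ≤
      (relSpan L (n + 2)).comap (mulTensor L (lmul k V X) x₁ - mulTensor (lmul k V X) L x₂)) :
    relAt R X (n + 3) 0 ⊓ relAt R X (n + 3) 1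
      ≤ (relSpan L (n + 2)).comap (lowerAt L (n + 3) 0 - lowerAt L (n + 3) 1) := by
  refine (inf_le_inf (relAt_zero_le R X n) (relAt_one_le R X n)).trans ?_
  rw [← Submodule.map_inf _ (consEquiv₃ k V X n).injective, ← range_rTensor_inf]
  rintro _ ⟨_, ⟨t, rfl⟩, rfl⟩
  induction t using TensorProduct.induction_on with
  | zero => simp
  | add s t hs ht => simpa only [map_add] using add_mem hs ht
  | tmul y m =>
    obtain ⟨_, ⟨x₁, rfl⟩, ⟨x₂, hx⟩⟩ := y
    have h₁ := lowerAt_zero_inclRV (L := L) n x₁ m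
    have h₂ := lowerAt_one_inclVR (L := L) n x₂ m
    rw [hx] at h₂
    have h := hover x₁ x₂ hx.symm (incl_mem_degLE le_rfl m)
    rw [Submodule.mem_comap, LinearMap.sub_apply, ← h₁, ← h₂] at h
    exact h

theorem lowerAt_add_two_tmul (n i : ℕ) (t : V ⊗[k] V) (m : TPow k V X n) :
    lowerAt L (n + 2) (i + 2) (consEquiv₂ k V X n (t ⊗ₜ[k] m))
      = mulTensor (lmul k V X) (lmul k V X) t (lowerAt L n i m) := by
  induction t using TensorProduct.induction_on with
  | zero => simp
  | tmul v w => simp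
  | add s t hs ht => simp only [map_add, TensorProduct.add_tmul, LinearMap.add_apply, hs, ht]

theorem lowerAt_far_mem {n i : ℕ} (hL : IsLowerOrder L)
    (hfar : ∀ r d, relSpan L d ≤ (relSpan L (d + 1)).comap (L r)) :
    relAt R X (n + 2) 0 ⊓ relAt R X (n + 2) (i + 2)
      ≤ (relSpan L (n + 1)).comap (lowerAt L (n + 2) 0 - lowerAt L (n + 2) (i + 2)) := by
  refine (inf_le_inf (relAt_zero R X n).le (relAt_add_two_le R X n i)).trans ?_
  rw [← Submodule.map_inf _ (consEquiv₂ k V X n).injective, range_rTensor_inf_range_lTensor]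
  rintro _ ⟨_, ⟨t, rfl⟩, rfl⟩
  induction t using TensorProduct.induction_on with
  | zero => simp
  | add s t hs ht => simpa only [map_add] using add_mem hs ht
  | tmul r m =>
    obtain ⟨m, hm⟩ := m
    have hsplit : L r (incl k V X n m)
        - mulTensor (lmul k V X) (lmul k V X) (r : V ⊗[k] V) (lowerAt L n i m)
          = L r (incl k V X n m - lowerAt L n i m) - deformedQuad L r (lowerAt L n i m) := by
      simp [deformedQuad]
    have hlow : deformedQuad L r (lowerAt L n i m) ∈ relSpan L (n + 1) := by
      cases n with
      | zero =>
        rw [(Submodule.mem_bot k).1 ((relAt_eq_bot R X (n := 0) (by omega)).le hm), map_zero,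
          map_zero]
        exact zero_mem _
      | succ n => exact degLE_le_comap_deformedQuad r n (hL.map_lowerAt_relAt_le n i ⟨m, hm, rfl⟩)
    have hmem := sub_mem
      (Submodule.mem_comap.1 (hfar r n (deformedRel_le_relSpan le_rfl i ⟨m, hm, rfl⟩))) hlow
    rw [LinearMap.sub_apply, ← hsplit, ← lowerAt_zero, ← lowerAt_add_two_tmul] at hmem
    exact hmem

theorem lowerAt_succ_succ_mem {n i j d : ℕ} (h : relAt R X n i ⊓ relAt R X n j
      ≤ (relSpan L d).comap (lowerAt L n i - lowerAt L n j)) :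
    relAt R X (n + 1) (i + 1) ⊓ relAt R X (n + 1) (j + 1)
      ≤ (relSpan L (d + 1)).comap (lowerAt L (n + 1) (i + 1) - lowerAt L (n + 1) (j + 1)) := by
  rw [relAt_succ, relAt_succ, ← Submodule.map_inf _ (consEquiv k V X n).injective,
    ← range_lTensor_inf]
  rintro _ ⟨_, ⟨t, rfl⟩, rfl⟩
  induction t using TensorProduct.induction_on with
  | zero => simp
  | add s t hs ht => simpa only [map_add] using add_mem hs ht
  | tmul v m =>
    have hv := relSpan_le_comap_lmul v d (h m.2)
    rw [LinearMap.sub_apply, Submodule.mem_comap, map_sub, ← lowerAt_succ, ← lowerAt_succ] at hv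
    exact hv

theorem isConfluentAt_of_overlap (hL : IsLowerOrder L)
    (hfar : ∀ r d, relSpan L d ≤ (relSpan L (d + 1)).comap (L r))
    (hover : ∀ x₁ x₂, inclRV k V R x₁ = inclVR k V R x₂ → ∀ d, degLE k V X d ≤
      (relSpan L (d + 2)).comap (mulTensor L (lmul k V X) x₁ - mulTensor (lmul k V X) L x₂))
    (n : ℕ) : IsConfluentAt L n := by
  induction n with
  | zero =>
    intro i j
    rw [relAt_eq_bot R X (by omega), bot_inf_eq]
    exact bot_le
  | succ n ih =>
    intro i j
    wlog h : i ≤ j generalizing i j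
    · rw [inf_comm]
      intro u hu
      rw [← neg_sub, Submodule.mem_comap, LinearMap.neg_apply]
      exact neg_mem (this j i (by omega) hu)
    match i, j, h with
    | 0, 0, _ => intro u _; simp
    | 0, 1, _ =>
      cases n with
      | zero =>
        rw [relAt_eq_bot R X (i := 1) (by omega), inf_bot_eq]
        exact bot_le
      | succ n => exact lowerAt_overlap_mem fun x₁ x₂ h => hover x₁ x₂ h n
    | 0, j + 2, _ => exact lowerAt_far_mem hL hfar
    | i + 1, j + 1, _ => exact lowerAt_succ_succ_mem (ih i j)

end ConfluenceCriterion

section Koszul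

variable (k V : Type) [Field k] [AddCommGroup V] [Module k V]

/-- The identification `V ⊗ V^{⊗(m+1)} = V^{⊗(m+2)}` for the powers `Vpow`. -/
def vpowCons (m : ℕ) : V ⊗[k] Vpow k V m ≃ₗ[k] Vpow k V (m + 1) :=
  LinearEquiv.refl k (V ⊗[k] Vpow k V m)

/-- The identification `(V ⊗ V) ⊗ V^{⊗(m+1)} = V^{⊗(m+3)}` for the powers `Vpow`. -/
def vpowCons₂ (m : ℕ) : (V ⊗[k] V) ⊗[k] Vpow k V m ≃ₗ[k] Vpow k V (m + 2) :=
  TensorProduct.assoc k V V (Vpow k V m)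

/-- The identification `V^{⊗(m+1)} ⊗ X` for the powers `Vpow` with the same space for `TPow`. -/
def vpowEquiv (X : Type) [AddCommGroup X] [Module k X] :
    ∀ m, Vpow k V m ⊗[k] X ≃ₗ[k] TPow k V X (m + 1)
  | 0 => (nilEquiv k V X).lTensor V ≪≫ₗ consEquiv k V X 0
  | m + 1 => (vpowCons k V m).symm.rTensor X ≪≫ₗ TensorProduct.assoc k V (Vpow k V m) X ≪≫ₗ
      (vpowEquiv X m).lTensor V ≪≫ₗ consEquiv k V X (m + 1)

variable {k V} (R : Submodule k (V ⊗[k] V))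

theorem Wsub_add_two_zero (m : ℕ) : Wsub k V R (m + 2) 0
    = LinearMap.range ((vpowCons₂ k V m).toLinearMap ∘ₗ R.subtype.rTensor (Vpow k V m)) :=
  (LinearMap.range_comp _ _).symm

theorem Wsub_succ_succ (m i : ℕ) : Wsub k V R (m + 1) (i + 1)
    = LinearMap.range ((vpowCons k V m).toLinearMap ∘ₗ (Wsub k V R m i).subtype.lTensor V) := by
  cases m with
  | zero =>
    have h : (Wsub k V R 0 i).subtype = 0 := LinearMap.ext fun x => (Submodule.mem_bot k).1 x.2
    rw [h, LinearMap.lTensor_zero, LinearMap.comp_zero, LinearMap.range_zero]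
    rfl
  | succ m => rfl

variable (X : Type) [AddCommGroup X] [Module k X]

theorem vpowEquiv_comp_rTensor_vpowCons (m : ℕ) {Y : Type} [AddCommGroup Y] [Module k Y]
    (f : Y →ₗ[k] Vpow k V m) :
    (vpowEquiv k V X (m + 1)).toLinearMap ∘ₗ
        LinearMap.rTensor X ((vpowCons k V m).toLinearMap ∘ₗ f.lTensor V)
      = (consEquiv k V X (m + 1)).toLinearMap ∘ₗ
        LinearMap.lTensor V ((vpowEquiv k V X m).toLinearMap ∘ₗ f.rTensor X) ∘ₗ
        (TensorProduct.assoc k V Y X).toLinearMap :=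
  TensorProduct.ext_threefold fun _ _ _ => rfl

theorem vpowEquiv_comp_rTensor_vpowCons₂ (m : ℕ) {Y : Type} [AddCommGroup Y] [Module k Y]
    (f : Y →ₗ[k] V ⊗[k] V) :
    (vpowEquiv k V X (m + 2)).toLinearMap ∘ₗ
        LinearMap.rTensor X ((vpowCons₂ k V m).toLinearMap ∘ₗ f.rTensor (Vpow k V m))
      = (consEquiv₂ k V X (m + 1)).toLinearMap ∘ₗ f.rTensor (TPow k V X (m + 1)) ∘ₗ
        ((vpowEquiv k V X m).lTensor Y).toLinearMap ∘ₗ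
        (TensorProduct.assoc k Y (Vpow k V m) X).toLinearMap := by
  have h : (vpowEquiv k V X (m + 2)).toLinearMap ∘ₗ
        LinearMap.rTensor X (vpowCons₂ k V m).toLinearMap
      = (consEquiv₂ k V X (m + 1)).toLinearMap ∘ₗ
        ((vpowEquiv k V X m).lTensor (V ⊗[k] V)).toLinearMap ∘ₗ
        (TensorProduct.assoc k (V ⊗[k] V) (Vpow k V m) X).toLinearMap :=
    TensorProduct.ext_fourfold fun _ _ _ _ => rfl
  exact TensorProduct.ext_threefold fun y w x => LinearMap.congr_fun h ((f y ⊗ₜ w) ⊗ₜ x)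

theorem relAt_eq_map_Wsub (m i : ℕ) : relAt R X (m + 1) i
    = (LinearMap.range ((Wsub k V R m i).subtype.rTensor X)).map
        (vpowEquiv k V X m).toLinearMap := by
  induction m generalizing i with
  | zero =>
    have h : (Wsub k V R 0 i).subtype = 0 := LinearMap.ext fun x => (Submodule.mem_bot k).1 x.2
    rw [relAt_eq_bot R X (by omega), h, LinearMap.rTensor_zero, LinearMap.range_zero,
      Submodule.map_bot]
  | succ m ih =>
    match m, i with
    | m, i + 1 =>
      rw [Wsub_succ_succ, ← LinearMap.rTensor_range, ← LinearMap.range_comp,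
        vpowEquiv_comp_rTensor_vpowCons, ← LinearMap.comp_assoc,
        LinearMap.range_comp_of_range_eq_top _ (LinearEquiv.range _), LinearMap.range_comp,
        LinearMap.lTensor_range, LinearMap.range_comp, ← ih, relAt_succ]
    | 0, 0 =>
      have h : (vpowEquiv k V X 1).toLinearMap = (consEquiv₂ k V X 0).toLinearMap :=
        TensorProduct.ext_threefold fun _ _ _ => rfl
      rw [relAt_zero, h]
      rfl
    | m + 1, 0 =>
      rw [Wsub_add_two_zero, ← LinearMap.rTensor_range, ← LinearMap.range_comp,
        vpowEquiv_comp_rTensor_vpowCons₂, ← LinearMap.comp_assoc,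
        LinearMap.range_comp_of_range_eq_top, LinearMap.range_comp, relAt_zero]
      rw [← LinearEquiv.coe_trans, LinearEquiv.range]

theorem hasAdaptedBasis_relAt (hK : IsKoszul k V R) (m : ℕ) :
    HasAdaptedBasis (relAt R X (m + 1)) := by
  have hW : HasAdaptedBasis (Wsub k V R m) := hK m
  rw [funext (relAt_eq_map_Wsub R X m)]
  exact (hW.range_rTensor X).map_linearEquiv (vpowEquiv k V X m)

end Koszul

section MulTensor

variable {k M N P E : Type*} [CommSemiring k] [AddCommMonoid M] [Module k M]
  [AddCommMonoid N] [Module k N] [AddCommMonoid P] [Module k P]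

theorem mulTensor_map [Semiring E] [Algebra k E] {M' N' : Type*} [AddCommMonoid M'] [Module k M']
    [AddCommMonoid N'] [Module k N'] (f : M →ₗ[k] E) (g : N →ₗ[k] E) (p : M' →ₗ[k] M)
    (q : N' →ₗ[k] N) (t : M' ⊗[k] N') :
    mulTensor f g (TensorProduct.map p q t) = mulTensor (f ∘ₗ p) (g ∘ₗ q) t :=
  congrArg (LinearMap.mul' k E) (DFunLike.congr_fun (TensorProduct.map_comp f g p q).symm t)

theorem mulTensor_assoc [Semiring E] [Algebra k E] (f : M →ₗ[k] E) (g : N →ₗ[k] E) (h : P →ₗ[k] E)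
    (t : (M ⊗[k] N) ⊗[k] P) :
    mulTensor f (mulTensor g h) (TensorProduct.assoc k M N P t) =
      mulTensor (mulTensor f g) h t := by
  suffices mulTensor f (mulTensor g h) ∘ₗ (TensorProduct.assoc k M N P).toLinearMap
      = mulTensor (mulTensor f g) h from DFunLike.congr_fun this t
  ext m n p
  simp [mul_assoc]

theorem mulTensor_add_left [Semiring E] [Algebra k E] (f f' : M →ₗ[k] E) (g : N →ₗ[k] E) :
    mulTensor (f + f') g = mulTensor f g + mulTensor f' g := by
  simp only [mulTensor, TensorProduct.map_add_left, LinearMap.comp_add]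

theorem mulTensor_add_right [Semiring E] [Algebra k E] (f : M →ₗ[k] E) (g g' : N →ₗ[k] E) :
    mulTensor f (g + g') = mulTensor f g + mulTensor f g' := by
  simp only [mulTensor, TensorProduct.map_add_right, LinearMap.comp_add]

theorem mulTensor_mem [Semiring E] [Algebra k E] {f : M →ₗ[k] E} {g : N →ₗ[k] E}
    {S : Submodule k E} (h : ∀ m n, f m * g n ∈ S) (t : M ⊗[k] N) : mulTensor f g t ∈ S := by
  induction t using TensorProduct.induction_on with
  | zero => simp
  | tmul m n => exact h m n
  | add s t hs ht => simpa using add_mem hs ht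

theorem map_mulTensor [Semiring E] [Algebra k E] {F : Type*} [Semiring F] [Algebra k F]
    (φ : E →ₐ[k] F) (f : M →ₗ[k] E) (g : N →ₗ[k] E) (t : M ⊗[k] N) :
    φ (mulTensor f g t) = mulTensor (φ.toLinearMap ∘ₗ f) (φ.toLinearMap ∘ₗ g) t := by
  suffices φ.toLinearMap ∘ₗ mulTensor f g = mulTensor (φ.toLinearMap ∘ₗ f) (φ.toLinearMap ∘ₗ g)
    from DFunLike.congr_fun this t
  ext m n
  simp

theorem semiconjBy_mulTensor [Semiring E] [Algebra k E] {u : E} {f : M →ₗ[k] E} {g : N →ₗ[k] E}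
    {a : M →ₗ[k] M} {b : N →ₗ[k] N} (hf : ∀ m, SemiconjBy u (f m) (f (a m)))
    (hg : ∀ n, SemiconjBy u (g n) (g (b n))) (t : M ⊗[k] N) :
    SemiconjBy u (mulTensor f g t) (mulTensor f g (TensorProduct.map a b t)) := by
  induction t using TensorProduct.induction_on with
  | zero => simp
  | tmul m n => exact (hf m).mul_right (hg n)
  | add s t hs ht => simpa only [map_add] using hs.add_right ht

end MulTensor

section CovariantPair

variable {k G V : Type} [Field k] [Group G] [AddCommGroup V] [Module k V]

/-- An algebra `E` with linear maps from `V` and from `kG` that satisfy the group action relations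
`g v = ᵍv g` of the skew group algebra. -/
@[ext]
structure CovariantPair (ρ : Representation k G V) (E : Type*) [Ring E] [Algebra k E] where
  /-- the images of the vectors -/
  vec : V →ₗ[k] E
  /-- the images of the elements of the group algebra -/
  grp : MonoidAlgebra k G →ₐ[k] E
  grp_of_mul_vec (g : G) (v : V) :
    grp (MonoidAlgebra.of k G g) * vec v = vec (ρ g v) * grp (MonoidAlgebra.of k G g)

theorem sigma_of_tmul (ρ : Representation k G V) (g : G) (v : V) :
    sigma k G V ρ (MonoidAlgebra.of k G g ⊗ₜ v) = ρ g v ⊗ₜ MonoidAlgebra.of k G g := by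
  simp [sigma]

namespace CovariantPair

variable {ρ : Representation k G V} {E : Type*} [Ring E] [Algebra k E] (P : CovariantPair ρ E)

/-- The value `Σ vᵢ xᵢ` in `E` of an element of `V ⊗ kG`. -/
def evalVG : V ⊗[k] MonoidAlgebra k G →ₗ[k] E :=
  mulTensor P.vec P.grp.toLinearMap

/-- The value `Σ vᵢ wᵢ xᵢ` in `E` of an element of `V ⊗ (V ⊗ kG)`. -/
def evalVVG : V ⊗[k] (V ⊗[k] MonoidAlgebra k G) →ₗ[k] E :=
  mulTensor P.vec P.evalVG

theorem evalVG_sigma (t : MonoidAlgebra k G ⊗[k] V) :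
    P.evalVG (sigma k G V ρ t) = mulTensor P.grp.toLinearMap P.vec t := by
  induction t using TensorProduct.induction_on with
  | zero => simp
  | tmul x v =>
    induction x using MonoidAlgebra.induction_on with
    | of g =>
      rw [sigma_of_tmul]
      exact (P.grp_of_mul_vec g v).symm
    | add x y hx hy => simp only [TensorProduct.add_tmul, map_add, hx, hy]
    | smul c x hx => simp only [← TensorProduct.smul_tmul', map_smul, hx]
  | add s t hs ht => simp only [map_add, hs, ht]

theorem semiconjBy_grp (g : G) (x : MonoidAlgebra k G) :
    SemiconjBy (P.grp (MonoidAlgebra.of k G g)) (P.grp x) (P.grp (conjKG k G g x)) := by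
  simp only [SemiconjBy, ← map_mul, conjKG, LinearMap.comp_apply, LinearMap.mulLeft_apply,
    LinearMap.mulRight_apply, mul_assoc]
  rw [inv_mul_cancel, map_one, mul_one]

theorem semiconjBy_evalVG (g : G) (t : V ⊗[k] MonoidAlgebra k G) :
    SemiconjBy (P.grp (MonoidAlgebra.of k G g)) (P.evalVG t) (P.evalVG (conjVG k G V ρ g t)) :=
  semiconjBy_mulTensor (P.grp_of_mul_vec g) (P.semiconjBy_grp g) t

variable {R : Submodule k (V ⊗[k] V)} (α : R →ₗ[k] V ⊗[k] MonoidAlgebra k G)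
  (β : R →ₗ[k] MonoidAlgebra k G)

/-- The value `α(r) + β(r)` in `E` of the lower order terms of the quadratic relations. -/
def lower : R →ₗ[k] E :=
  P.evalVG ∘ₗ α + P.grp.toLinearMap ∘ₗ β

/-- The defect `r - α(r) - β(r)` in `E` of the quadratic relations. -/
def defect : R →ₗ[k] E :=
  mulTensor P.vec P.vec ∘ₗ R.subtype - P.lower α β

theorem evalVVG_Theta (x₁ : R ⊗[k] V) (x₂ : V ⊗[k] R) :
    P.evalVVG (Theta k G V R ρ α x₁ x₂)
      = mulTensor P.evalVG P.vec (TensorProduct.map α LinearMap.id x₁)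
        - P.evalVVG (TensorProduct.map LinearMap.id α x₂) := by
  have hsigma : P.evalVG ∘ₗ sigma k G V ρ = mulTensor P.grp.toLinearMap P.vec :=
    LinearMap.ext P.evalVG_sigma
  rw [Theta, map_sub, evalVVG, mulTensor_map, LinearMap.comp_id, hsigma, mulTensor_assoc]
  rfl

theorem mulTensor_lower_sub_mulTensor_lower (x₁ : R ⊗[k] V) (x₂ : V ⊗[k] R) :
    mulTensor (P.lower α β) P.vec x₁ - mulTensor P.vec (P.lower α β) x₂
      = P.evalVVG (Theta k G V R ρ α x₁ x₂)
        - P.evalVG (TensorProduct.map LinearMap.id β x₂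
          - sigma k G V ρ (TensorProduct.map β LinearMap.id x₁)) := by
  have hβ : P.evalVG (TensorProduct.map LinearMap.id β x₂)
      = mulTensor P.vec (P.grp.toLinearMap ∘ₗ β) x₂ := mulTensor_map _ _ _ _ _
  rw [map_sub, evalVG_sigma, evalVVG_Theta, hβ]
  simp only [lower, evalVVG, mulTensor_map, mulTensor_add_left, mulTensor_add_right,
    LinearMap.comp_id, LinearMap.add_apply]
  abel

theorem mulTensor_defect_grp (y : R ⊗[k] MonoidAlgebra k G) :
    mulTensor (P.defect α β) P.grp.toLinearMap y
      = P.evalVVG (inclRG k G V R y) - P.evalVG (αext k G V R α y) - P.grp (βext k G V R β y) := by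
  induction y using TensorProduct.induction_on with
  | zero => simp
  | add s t hs ht => simp only [map_add, hs, ht]; abel
  | tmul r x =>
    have hα : P.evalVG (αext k G V R α (r ⊗ₜ x)) = P.evalVG (α r) * P.grp x := by
      simp only [αext, LinearMap.comp_apply, TensorProduct.map_tmul, LinearMap.id_apply]
      induction α r using TensorProduct.induction_on with
      | zero => simp
      | tmul v y => simp [evalVG, mul_assoc]
      | add s t hs ht => simp only [TensorProduct.add_tmul, map_add, hs, ht, add_mul]
    have hr : P.evalVVG (inclRG k G V R (r ⊗ₜ x))
        = mulTensor P.vec P.vec (r : V ⊗[k] V) * P.grp x :=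
      mulTensor_assoc P.vec P.vec P.grp.toLinearMap (r.1 ⊗ₜ x)
    rw [mulTensor_tmul, hα, hr]
    simp [defect, lower, βext, sub_mul, add_mul, sub_sub]

variable (hR : ∀ (g : G) (x : V ⊗[k] V), x ∈ R → TensorProduct.map (ρ g) (ρ g) x ∈ R)

theorem semiconjBy_lower (hα : ∀ g r, α (rActR k G V R ρ hR g r) = conjVG k G V ρ g (α r))
    (hβ : ∀ g r, β (rActR k G V R ρ hR g r) = conjKG k G g (β r)) (g : G) (r : R) :
    SemiconjBy (P.grp (MonoidAlgebra.of k G g)) (P.lower α β r)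
      (P.lower α β (rActR k G V R ρ hR g r)) := by
  simpa [lower, hα, hβ] using (P.semiconjBy_evalVG g (α r)).add_right (P.semiconjBy_grp g (β r))

theorem semiconjBy_quad (g : G) (r : R) :
    SemiconjBy (P.grp (MonoidAlgebra.of k G g)) (mulTensor P.vec P.vec (r : V ⊗[k] V))
      (mulTensor P.vec P.vec (rActR k G V R ρ hR g r : V ⊗[k] V)) :=
  semiconjBy_mulTensor (P.grp_of_mul_vec g) (P.grp_of_mul_vec g) _

end CovariantPair

end CovariantPair

section FreePair

variable {k G V X : Type} [Field k] [Group G] [AddCommGroup V] [Module k V] [AddCommGroup X]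
  [Module k X]

/-- The diagonal action of `G` on `V^{⊗n} ⊗ X`. -/
def tpowRep (ρ : Representation k G V) (τ : Representation k G X) :
    (n : ℕ) → Representation k G (TPow k V X n)
  | 0 => τ
  | n + 1 => ρ.tprod (tpowRep ρ τ n)

/-- The free `T(V)`-module on a representation of `G`, with `G` acting diagonally; it is the module
induced from `kG` to `T(V) ⋊ G`. -/
def freePair (ρ : Representation k G V) (τ : Representation k G X) :
    CovariantPair ρ (Module.End k (FreeMod k V X)) where
  vec := lmul k V X
  grp := (Representation.directSum (tpowRep ρ τ)).asAlgebraHom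
  grp_of_mul_vec g v := by
    refine DirectSum.linearMap_ext k fun n => LinearMap.ext fun m => ?_
    simp only [Representation.asAlgebraHom_of, Module.End.mul_apply, LinearMap.comp_apply,
      Representation.directSum_apply, DirectSum.lmap_lof, lmul_incl]
    rfl

variable (ρ : Representation k G V) (τ : Representation k G X)

theorem freePair_grp_of_incl (g : G) (n : ℕ) (m : TPow k V X n) :
    (freePair ρ τ).grp (MonoidAlgebra.of k G g) (incl k V X n m)
      = incl k V X n (tpowRep ρ τ n g m) := by
  simp only [freePair, Representation.asAlgebraHom_of, Representation.directSum_apply,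
    DirectSum.lmap_lof]

variable {ρ τ}

theorem le_comap_freePair_grp {N : Submodule k (FreeMod k V X)}
    (h : ∀ g, N ≤ N.comap ((freePair ρ τ).grp (MonoidAlgebra.of k G g))) (x : MonoidAlgebra k G) :
    N ≤ N.comap ((freePair ρ τ).grp x) := by
  intro f hf
  rw [Submodule.mem_comap]
  induction x using MonoidAlgebra.induction_on with
  | of g => exact h g hf
  | add x y hx hy => simpa using add_mem hx hy
  | smul c x hx => simpa using N.smul_mem c hx

theorem range_incl_le_comap_freePair_grp_of (g : G) (n : ℕ) :
    LinearMap.range (incl k V X n) ≤ (LinearMap.range (incl k V X n)).comap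
      ((freePair ρ τ).grp (MonoidAlgebra.of k G g)) := by
  rintro _ ⟨m, rfl⟩
  rw [Submodule.mem_comap, freePair_grp_of_incl]
  exact LinearMap.mem_range_self _ _

theorem degLE_le_comap_freePair_grp (x : MonoidAlgebra k G) (d : ℕ) :
    degLE k V X d ≤ (degLE k V X d).comap ((freePair ρ τ).grp x) :=
  le_comap_freePair_grp (fun g => degLE_le.2 fun _ hn m =>
    range_incl_le_degLE hn (range_incl_le_comap_freePair_grp_of g _ ⟨m, rfl⟩)) x

theorem le_comap_freePair_lower {R : Submodule k (V ⊗[k] V)} {M N : Submodule k (FreeMod k V X)}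
    (hMN : M ≤ N) (hvec : ∀ v, M ≤ N.comap (lmul k V X v))
    (hgrp : ∀ x, M ≤ M.comap ((freePair ρ τ).grp x)) (α : R →ₗ[k] V ⊗[k] MonoidAlgebra k G)
    (β : R →ₗ[k] MonoidAlgebra k G) (r : R) :
    M ≤ N.comap ((freePair ρ τ).lower α β r) := by
  intro f hf
  have hα : (freePair ρ τ).evalVG (α r) ∈ N.comap (LinearMap.applyₗ (R := k) f) :=
    mulTensor_mem (fun v x => hvec v (hgrp x hf)) (α r)
  exact add_mem hα (hMN (hgrp (β r) hf))

variable {R : Submodule k (V ⊗[k] V)} {α : R →ₗ[k] V ⊗[k] MonoidAlgebra k G}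
  {β : R →ₗ[k] MonoidAlgebra k G}

variable (ρ τ α β) in
theorem isLowerOrder_freePair_lower : IsLowerOrder ((freePair ρ τ).lower α β) :=
  fun r d => le_comap_freePair_lower (degLE_mono d.le_succ) (fun v => degLE_le_comap_lmul v d)
    (fun x => degLE_le_comap_freePair_grp x d) α β r

theorem freePair_defect :
    (freePair ρ τ).defect α β = deformedQuad ((freePair ρ τ).lower α β) :=
  rfl

/-- Invariance of the parameters under the action `(ᵍα)(r) = ᵍ(α(ᵍ⁻¹r))` of `G`. -/
def IsInvariant (ρ : Representation k G V)
    (hR : ∀ (g : G) (x : V ⊗[k] V), x ∈ R → TensorProduct.map (ρ g) (ρ g) x ∈ R)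
    (α : R →ₗ[k] V ⊗[k] MonoidAlgebra k G) (β : R →ₗ[k] MonoidAlgebra k G) : Prop :=
  (∀ g r, α (rActR k G V R ρ hR g r) = conjVG k G V ρ g (α r)) ∧
    ∀ g r, β (rActR k G V R ρ hR g r) = conjKG k G g (β r)

variable {hR : ∀ (g : G) (x : V ⊗[k] V), x ∈ R → TensorProduct.map (ρ g) (ρ g) x ∈ R}

theorem relSpan_le_comap_freePair_grp (hinv : IsInvariant ρ hR α β) (x : MonoidAlgebra k G)
    (d : ℕ) : relSpan ((freePair ρ τ).lower α β) d
      ≤ (relSpan ((freePair ρ τ).lower α β) d).comap ((freePair ρ τ).grp x) := by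
  refine le_comap_freePair_grp (fun g => ?_) x
  refine relSpan_le_comap_of_intertwines (ρ g) (rActR k G V R ρ hR g)
    ((freePair ρ τ).grp_of_mul_vec g) (fun r => ?_) (range_incl_le_comap_freePair_grp_of g) d
  exact ((freePair ρ τ).semiconjBy_quad hR g r).sub_right
    ((freePair ρ τ).semiconjBy_lower α β hR hinv.1 hinv.2 g r)

/-- The obstructions to confluence vanish: every overlap `x ∈ (R ⊗ V) ∩ (V ⊗ R)` resolves by means
of an element `y ∈ R ⊗ kG`. These are conditions (i)–(iii) before projection to `S ⋊ G`. -/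
def OverlapsResolve (ρ : Representation k G V) (α : R →ₗ[k] V ⊗[k] MonoidAlgebra k G)
    (β : R →ₗ[k] MonoidAlgebra k G) : Prop :=
  ∀ (x₁ : R ⊗[k] V) (x₂ : V ⊗[k] R), inclRV k V R x₁ = inclVR k V R x₂ →
    ∃ y : R ⊗[k] MonoidAlgebra k G, inclRG k G V R y = Theta k G V R ρ α x₁ x₂ ∧
      αext k G V R α y = TensorProduct.map LinearMap.id β x₂
        - sigma k G V ρ (TensorProduct.map β LinearMap.id x₁) ∧
      βext k G V R β y = 0

theorem isConfluentAt_freePair_lower (hinv : IsInvariant ρ hR α β)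
    (hres : OverlapsResolve ρ α β) (n : ℕ) : IsConfluentAt ((freePair ρ τ).lower α β) n := by
  refine isConfluentAt_of_overlap (isLowerOrder_freePair_lower ρ τ α β) (fun r d => ?_)
    (fun x₁ x₂ hx d f hf => ?_) n
  · exact le_comap_freePair_lower (relSpan_mono d.le_succ) (fun v => relSpan_le_comap_lmul v d)
      (fun x => relSpan_le_comap_freePair_grp hinv x d) α β r
  · obtain ⟨y, hΘ, hα, hβ⟩ := hres x₁ x₂ hx
    have hover : mulTensor ((freePair ρ τ).lower α β) (lmul k V X) x₁
        - mulTensor (lmul k V X) ((freePair ρ τ).lower α β) x₂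
        = mulTensor ((freePair ρ τ).defect α β) (freePair ρ τ).grp.toLinearMap y := by
      rw [CovariantPair.mulTensor_defect_grp, hΘ, hα, hβ, map_zero, sub_zero]
      exact (freePair ρ τ).mulTensor_lower_sub_mulTensor_lower α β x₁ x₂
    have hmem : mulTensor ((freePair ρ τ).defect α β) (freePair ρ τ).grp.toLinearMap y
        ∈ (relSpan ((freePair ρ τ).lower α β) (d + 2)).comap (LinearMap.applyₗ (R := k) f) :=
      mulTensor_mem (fun r x => degLE_le_comap_deformedQuad r d
        (degLE_le_comap_freePair_grp (ρ := ρ) (τ := τ) x d hf)) y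
    rw [Submodule.mem_comap, hover]
    exact hmem

end FreePair

section EvalFree

variable {k G V : Type} [Field k] [Group G] [AddCommGroup V] [Module k V]

/-- The free `T(V)`-module on `kG`, that is `T(V) ⋊ G` as a left module over itself. -/
abbrev regPair (ρ : Representation k G V) :
    CovariantPair ρ (Module.End k (FreeMod k V (MonoidAlgebra k G))) :=
  freePair ρ (Representation.leftRegular k G)

theorem regPair_grp_incl_zero (ρ : Representation k G V) (x y : MonoidAlgebra k G) :
    (regPair ρ).grp x (incl k V _ 0 (nilEquiv k V _ y)) =
      incl k V _ 0 (nilEquiv k V _ (x * y)) := by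
  induction x using MonoidAlgebra.induction_on with
  | of g =>
    rw [freePair_grp_of_incl, ← Representation.asAlgebraHom_ofMulAction_smul_eq_mul,
      Representation.asAlgebraHom_of]
    rfl
  | add x x' hx hx' => simp only [map_add, LinearMap.add_apply, add_mul, hx, hx']
  | smul c x hx => simp only [map_smul, LinearMap.smul_apply, smul_mul_assoc, hx]

section Intertwining

variable {X Y E : Type*} [AddCommGroup X] [Module k X] [Ring E] [Algebra k E] [AddCommGroup Y]
  [Module k Y] [Module E Y] {e : X →ₗ[k] Y}

theorem apply_mulTensor_of_intertwines {M N : Type*} [AddCommMonoid M] [Module k M]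
    [AddCommMonoid N] [Module k N] {f : M →ₗ[k] Module.End k X} {g : N →ₗ[k] Module.End k X}
    {f' : M →ₗ[k] E} {g' : N →ₗ[k] E} (hf : ∀ m x, e (f m x) = f' m • e x)
    (hg : ∀ n x, e (g n x) = g' n • e x) (t : M ⊗[k] N) (x : X) :
    e (mulTensor f g t x) = mulTensor f' g' t • e x := by
  induction t using TensorProduct.induction_on with
  | zero => simp
  | tmul m n => simp only [mulTensor_tmul, Module.End.mul_apply, hf, hg, mul_smul]
  | add s t hs ht => simp only [map_add, LinearMap.add_apply, add_smul, hs, ht]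

theorem CovariantPair.apply_defect_of_intertwines {ρ : Representation k G V}
    {P : CovariantPair ρ (Module.End k X)} {Q : CovariantPair ρ E}
    (hvec : ∀ v x, e (P.vec v x) = Q.vec v • e x) (hgrp : ∀ y x, e (P.grp y x) = Q.grp y • e x)
    {R : Submodule k (V ⊗[k] V)} (α : R →ₗ[k] V ⊗[k] MonoidAlgebra k G)
    (β : R →ₗ[k] MonoidAlgebra k G) (r : R) (x : X) :
    e (P.defect α β r x) = Q.defect α β r • e x := by
  have hquad : e (mulTensor P.vec P.vec (r : V ⊗[k] V) x) = mulTensor Q.vec Q.vec r.1 • e x :=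
    apply_mulTensor_of_intertwines hvec hvec r.1 x
  have hα : e (P.evalVG (α r) x) = Q.evalVG (α r) • e x :=
    apply_mulTensor_of_intertwines hvec hgrp (α r) x
  have hβ : e (P.grp (β r) x) = Q.grp (β r) • e x := hgrp (β r) x
  simp only [defect, lower, LinearMap.sub_apply, LinearMap.add_apply, LinearMap.comp_apply,
    Submodule.subtype_apply, AlgHom.toLinearMap_apply, map_sub, map_add, sub_smul, add_smul, hquad,
    hα, hβ]

end Intertwining

namespace CovariantPair

variable {ρ : Representation k G V} {E : Type*} [Ring E] [Algebra k E] (P : CovariantPair ρ E)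

/-- The value in `E` of an element of `V^{⊗n} ⊗ kG`. -/
def evalTPow : (n : ℕ) → TPow k V (MonoidAlgebra k G) n →ₗ[k] E
  | 0 => P.grp.toLinearMap ∘ₗ (nilEquiv k V _).symm.toLinearMap
  | n + 1 => mulTensor P.vec (evalTPow n) ∘ₗ (consEquiv k V _ n).symm.toLinearMap

/-- The canonical map `T(V) ⋊ G → E`, where `T(V) ⋊ G` is regarded as `⨁ₙ V^{⊗n} ⊗ kG`. -/
def evalFree : FreeMod k V (MonoidAlgebra k G) →ₗ[k] E :=
  DirectSum.toModule k ℕ E P.evalTPow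

theorem evalFree_incl_zero (x : MonoidAlgebra k G) :
    P.evalFree (incl k V _ 0 (nilEquiv k V _ x)) = P.grp x := by
  rw [evalFree, DirectSum.toModule_lof]
  rfl

theorem evalFree_lmul (v : V) (f : FreeMod k V (MonoidAlgebra k G)) :
    P.evalFree (lmul k V _ v f) = P.vec v * P.evalFree f := by
  suffices P.evalFree ∘ₗ lmul k V _ v = LinearMap.mulLeft k (P.vec v) ∘ₗ P.evalFree from
    DFunLike.congr_fun this f
  refine DirectSum.linearMap_ext k fun n => LinearMap.ext fun m => ?_
  simp only [LinearMap.comp_apply, lmul_incl, evalFree, DirectSum.toModule_lof]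
  rfl

theorem evalFree_grp (x : MonoidAlgebra k G) (f : FreeMod k V (MonoidAlgebra k G)) :
    P.evalFree ((regPair ρ).grp x f) = P.grp x * P.evalFree f := by
  induction x using MonoidAlgebra.induction_on with
  | of g =>
    induction f using freeMod_induction with
    | add f f' hf hf' => simp only [map_add, mul_add, hf, hf']
    | nil x => rw [regPair_grp_incl_zero, evalFree_incl_zero, evalFree_incl_zero, map_mul]
    | lmul v f hf =>
      have hcov := DFunLike.congr_fun ((regPair ρ).grp_of_mul_vec g v) f
      simp only [Module.End.mul_apply] at hcov
      rw [← show (regPair ρ).vec = lmul k V _ from rfl, hcov]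
      refine (P.evalFree_lmul _ _).trans ?_
      rw [hf, ← mul_assoc, ← P.grp_of_mul_vec, mul_assoc]
      exact congrArg _ (P.evalFree_lmul v f).symm
  | add x y hx hy => simp only [map_add, LinearMap.add_apply, add_mul, hx, hy]
  | smul c x hx => simp only [map_smul, LinearMap.smul_apply, smul_mul_assoc, hx]

variable {R : Submodule k (V ⊗[k] V)} {α : R →ₗ[k] V ⊗[k] MonoidAlgebra k G}
  {β : R →ₗ[k] MonoidAlgebra k G}

theorem relSpan_le_ker_evalFree (h : P.defect α β = 0) (d : ℕ) :
    relSpan ((regPair ρ).lower α β) d ≤ LinearMap.ker P.evalFree := by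
  refine relSpan_le_of_stable (fun v f hf => ?_) (fun r f => ?_) d
  · rw [Submodule.mem_comap, LinearMap.mem_ker, evalFree_lmul, LinearMap.mem_ker.1 hf, mul_zero]
  · rw [LinearMap.mem_ker, ← freePair_defect,
      apply_defect_of_intertwines (Q := P) P.evalFree_lmul P.evalFree_grp, h,
      LinearMap.zero_apply, zero_smul]

end CovariantPair

end EvalFree

section HAlg

variable {k G V : Type} [Field k] [Group G] [AddCommGroup V] [Module k V]
  {ρ : Representation k G V}

namespace CovariantPair

variable {E F : Type*} [Ring E] [Algebra k E] [Ring F] [Algebra k F]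

/-- The composite of a covariant pair with an algebra homomorphism. -/
def map (P : CovariantPair ρ E) (φ : E →ₐ[k] F) : CovariantPair ρ F where
  vec := φ.toLinearMap ∘ₗ P.vec
  grp := φ.comp P.grp
  grp_of_mul_vec g v := by
    simp only [AlgHom.comp_apply, LinearMap.comp_apply, AlgHom.toLinearMap_apply, ← map_mul,
      P.grp_of_mul_vec]

theorem evalFree_map (P : CovariantPair ρ E) (φ : E →ₐ[k] F)
    (f : FreeMod k V (MonoidAlgebra k G)) : (P.map φ).evalFree f = φ (P.evalFree f) := by
  induction f using freeMod_induction with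
  | add f g hf hg => simp only [map_add, hf, hg]
  | nil x => rw [evalFree_incl_zero, evalFree_incl_zero]; rfl
  | lmul v f hf => rw [evalFree_lmul, evalFree_lmul, map_mul, hf]; rfl

/-- The covariant pair induced on the quotient by an invariant subspace. -/
def quotient {M : Type*} [AddCommGroup M] [Module k M] (P : CovariantPair ρ (Module.End k M))
    (N : Submodule k M) (hvec : ∀ v, N ≤ N.comap (P.vec v)) (hgrp : ∀ x, N ≤ N.comap (P.grp x)) :
    CovariantPair ρ (Module.End k (M ⧸ N)) where
  vec := N.mapQLinear N ∘ₗ P.vec.codRestrict (N.compatibleMaps N) hvec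
  grp := AlgHom.ofLinearMap
    (N.mapQLinear N ∘ₗ P.grp.toLinearMap.codRestrict (N.compatibleMaps N) hgrp)
    (Submodule.linearMap_qext N <| LinearMap.ext fun m =>
      congrArg (fun T : Module.End k M => N.mkQ (T m)) (map_one P.grp))
    (fun x y => Submodule.linearMap_qext N <| LinearMap.ext fun m =>
      congrArg (fun T : Module.End k M => N.mkQ (T m)) (map_mul P.grp x y))
  grp_of_mul_vec g v := Submodule.linearMap_qext N <| LinearMap.ext fun m =>
    congrArg (fun T : Module.End k M => N.mkQ (T m)) (P.grp_of_mul_vec g v)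

end CovariantPair

variable {R : Submodule k (V ⊗[k] V)} {α : R →ₗ[k] V ⊗[k] MonoidAlgebra k G}
  {β : R →ₗ[k] MonoidAlgebra k G}

theorem toH_eq_of_rel {a b : FreeAlg k G V} (h : GRel k G V R ρ 0 α β a b) :
    toH k G V R ρ 0 α β a = toH k G V R ρ 0 α β b :=
  RingQuot.mkAlgHom_rel k h

variable (ρ α β) in
/-- The generators `V` and `kG` of `H_{0,α,β}`. -/
def hPair : CovariantPair ρ (HAlg k G V R ρ 0 α β) where
  vec := (toH k G V R ρ 0 α β).toLinearMap ∘ₗ vIn k G V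
  grp := AlgHom.ofLinearMap ((toH k G V R ρ 0 α β).toLinearMap ∘ₗ gIn k G V)
    ((toH_eq_of_rel .unit).trans (map_one _))
    (fun x y => (toH_eq_of_rel (.gmul x y)).symm.trans (map_mul _ _ _))
  grp_of_mul_vec g v := by
    have h := toH_eq_of_rel (GRel.act (R := R) (ρ := ρ) (lam := 0) (α := α) (β := β) g v)
    rwa [LinearMap.zero_apply, map_zero, add_zero, map_mul, map_mul] at h

theorem hPair_defect : (hPair ρ α β).defect α β = 0 := by
  ext r
  have h := toH_eq_of_rel (α := α) (β := β) (ρ := ρ) (.quad r)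
  simp only [map_add, mulVV, embVG, ← mulTensor.eq_1, map_mulTensor] at h
  exact sub_eq_zero.2 h

theorem exists_algHom_map_hPair_eq {E : Type} [Ring E] [Algebra k E] (P : CovariantPair ρ E)
    (hP : P.defect α β = 0) : ∃ φ : HAlg k G V R ρ 0 α β →ₐ[k] E, (hPair ρ α β).map φ = P := by
  let φ₀ : FreeAlg k G V →ₐ[k] E := TensorAlgebra.lift k (P.grp.toLinearMap.coprod P.vec)
  have hg (x : MonoidAlgebra k G) : φ₀ (gIn k G V x) = P.grp x := by simp [φ₀, gIn]
  have hv (v : V) : φ₀ (vIn k G V v) = P.vec v := by simp [φ₀, vIn]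
  have hquad (r : R) : φ₀ (mulVV k G V r) = φ₀ (embVG k G V (α r) + gIn k G V (β r)) := by
    have hgφ : φ₀.toLinearMap ∘ₗ gIn k G V = P.grp.toLinearMap := LinearMap.ext hg
    have hvφ : φ₀.toLinearMap ∘ₗ vIn k G V = P.vec := LinearMap.ext hv
    simp only [map_add, mulVV, embVG, ← mulTensor.eq_1, map_mulTensor, hgφ, hvφ, hg]
    exact sub_eq_zero.1 (DFunLike.congr_fun hP r)
  have hrel ⦃a b : FreeAlg k G V⦄ (h : GRel k G V R ρ 0 α β a b) : φ₀ a = φ₀ b := by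
    cases h with
    | unit => rw [hg, map_one, map_one]
    | gmul x y => rw [map_mul, hg, hg, hg, map_mul]
    | act g v => rw [LinearMap.zero_apply, map_zero, add_zero, map_mul, map_mul, hv, hv, hg,
        P.grp_of_mul_vec]
    | quad r => exact hquad r
  have hφ (a : FreeAlg k G V) :
      RingQuot.liftAlgHom k ⟨φ₀, hrel⟩ (toH k G V R ρ 0 α β a) = φ₀ a :=
    RingQuot.liftAlgHom_mkAlgHom_apply k φ₀ hrel a
  refine ⟨RingQuot.liftAlgHom k ⟨φ₀, hrel⟩, ?_⟩
  exact CovariantPair.ext (LinearMap.ext fun v => (hφ _).trans (hv v))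
    (AlgHom.ext fun x => (hφ _).trans (hg x))

theorem evalFree_quotient_apply {N : Submodule k (FreeMod k V (MonoidAlgebra k G))}
    (hvec : ∀ v, N ≤ N.comap ((regPair ρ).vec v)) (hgrp : ∀ x, N ≤ N.comap ((regPair ρ).grp x))
    (f : FreeMod k V (MonoidAlgebra k G)) : ((regPair ρ).quotient N hvec hgrp).evalFree f
      (N.mkQ (incl k V _ 0 (nilEquiv k V _ 1))) = N.mkQ f := by
  induction f using freeMod_induction with
  | add f g hf hg => simp only [map_add, LinearMap.add_apply, hf, hg]
  | nil x =>
    rw [CovariantPair.evalFree_incl_zero]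
    exact congrArg N.mkQ ((regPair_grp_incl_zero ρ x 1).trans (by rw [mul_one]))
  | lmul v f hf =>
    rw [CovariantPair.evalFree_lmul, Module.End.mul_apply, hf]
    rfl

theorem ker_evalFree_hPair_le {N : Submodule k (FreeMod k V (MonoidAlgebra k G))}
    (hvec : ∀ v, N ≤ N.comap ((regPair ρ).vec v)) (hgrp : ∀ x, N ≤ N.comap ((regPair ρ).grp x))
    (hquad : ∀ r f, (regPair ρ).defect α β r f ∈ N) :
    LinearMap.ker (hPair ρ α β).evalFree ≤ N := by
  intro f hf
  have hdefect : ((regPair ρ).quotient N hvec hgrp).defect α β = 0 :=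
    LinearMap.ext fun r => Submodule.linearMap_qext N <| LinearMap.ext fun f =>
      (CovariantPair.apply_defect_of_intertwines (e := N.mkQ)
        (Q := (regPair ρ).quotient N hvec hgrp) (fun _ _ => rfl) (fun _ _ => rfl)
        α β r f).symm.trans ((Submodule.Quotient.mk_eq_zero N).2 (hquad r f))
  obtain ⟨φ, hφ⟩ := exists_algHom_map_hPair_eq _ hdefect
  rw [← Submodule.Quotient.mk_eq_zero N, ← Submodule.mkQ_apply,
    ← evalFree_quotient_apply hvec hgrp, ← hφ, CovariantPair.evalFree_map, LinearMap.mem_ker.1 hf,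
    map_zero, LinearMap.zero_apply]

variable {hR : ∀ (g : G) (x : V ⊗[k] V), x ∈ R → TensorProduct.map (ρ g) (ρ g) x ∈ R}

theorem ker_evalFree_hPair (hinv : IsInvariant ρ hR α β) :
    LinearMap.ker (hPair ρ α β).evalFree = ⨆ d, relSpan ((regPair ρ).lower α β) d := by
  have hle := le_iSup (relSpan ((regPair ρ).lower α β))
  refine le_antisymm (ker_evalFree_hPair_le
      (fun v => iSup_le fun d => (relSpan_le_comap_lmul v d).trans (Submodule.comap_mono (hle _)))
      (fun x => iSup_le fun d =>
        (relSpan_le_comap_freePair_grp hinv x d).trans (Submodule.comap_mono (hle d)))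
      fun r f => ?_)
    (iSup_le ((hPair ρ α β).relSpan_le_ker_evalFree hPair_defect))
  obtain ⟨d, hd⟩ := exists_mem_degLE f
  exact hle (d + 2) (degLE_le_comap_deformedQuad r d hd)

theorem degLE_inf_ker_evalFree_hPair (hK : IsKoszul k V R) (hinv : IsInvariant ρ hR α β)
    (hres : OverlapsResolve ρ α β) (d : ℕ) :
    degLE k V _ d ⊓ LinearMap.ker (hPair ρ α β).evalFree
      = relSpan ((regPair ρ).lower α β) d := by
  have hL := isLowerOrder_freePair_lower ρ (Representation.leftRegular k G) α β
  refine le_antisymm ?_ (le_inf (hL.relSpan_le_degLE d)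
    ((hPair ρ α β).relSpan_le_ker_evalFree hPair_defect d))
  rw [ker_evalFree_hPair hinv, inf_comm, relSpan_mono.directed_le.iSup_inf_eq]
  exact iSup_le fun e => relSpan_inf_degLE_le hL (hasAdaptedBasis_relAt R _ hK)
    (isConfluentAt_freePair_lower hinv hres) d e

end HAlg

section Filtration

variable {k G V : Type} [Field k] [Group G] [AddCommGroup V] [Module k V]
  {ρ : Representation k G V}

namespace CovariantPair

variable {E : Type*} [Ring E] [Algebra k E] (P : CovariantPair ρ E)

theorem range_grp_mul_range_vec_le :
    LinearMap.range P.grp.toLinearMap * LinearMap.range P.vec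
      ≤ LinearMap.range P.vec * LinearMap.range P.grp.toLinearMap := by
  rw [Submodule.mul_le]
  rintro _ ⟨x, rfl⟩ _ ⟨v, rfl⟩
  rw [← mulTensor_tmul, ← evalVG_sigma]
  exact mulTensor_mem (fun v x => Submodule.mul_mem_mul (LinearMap.mem_range_self _ v)
    (LinearMap.mem_range_self _ x)) _

theorem map_evalFree_range_incl_zero :
    (LinearMap.range (incl k V _ 0)).map P.evalFree = LinearMap.range P.grp.toLinearMap := by
  rw [← LinearMap.range_comp, ← LinearEquiv.range_comp (nilEquiv k V (MonoidAlgebra k G))]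
  exact congrArg LinearMap.range (LinearMap.ext P.evalFree_incl_zero)

theorem map_evalFree_range_incl_succ (n : ℕ) :
    (LinearMap.range (incl k V _ (n + 1))).map P.evalFree
      = LinearMap.range P.vec * (LinearMap.range (incl k V _ n)).map P.evalFree := by
  rw [range_incl_succ]
  refine le_antisymm (Submodule.map_le_iff_le_comap.2 (Submodule.map₂_le.2 fun v _ f hf => ?_))
    (Submodule.mul_le.2 ?_)
  · rw [Submodule.mem_comap, evalFree_lmul]
    exact Submodule.mul_mem_mul ⟨v, rfl⟩ (Submodule.mem_map_of_mem hf)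
  · rintro _ ⟨v, rfl⟩ _ ⟨f, hf, rfl⟩
    rw [← evalFree_lmul]
    exact Submodule.mem_map_of_mem (Submodule.apply_mem_map₂ _ trivial hf)

theorem map_evalFree_range_incl_mul (n : ℕ) :
    (LinearMap.range (incl k V _ n)).map P.evalFree
        * (LinearMap.range P.vec * LinearMap.range P.grp.toLinearMap)
      = (LinearMap.range (incl k V _ (n + 1))).map P.evalFree := by
  have hgrp : LinearMap.range P.grp.toLinearMap = Subalgebra.toSubmodule P.grp.range := rfl
  induction n with
  | succ n ih => rw [map_evalFree_range_incl_succ, mul_assoc, ih, ← map_evalFree_range_incl_succ]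
  | zero =>
    rw [map_evalFree_range_incl_succ, map_evalFree_range_incl_zero]
    refine le_antisymm ?_ (le_mul_of_one_le_left' (Submodule.one_le.2 ⟨1, map_one P.grp⟩))
    calc LinearMap.range P.grp.toLinearMap
          * (LinearMap.range P.vec * LinearMap.range P.grp.toLinearMap)
        ≤ LinearMap.range P.vec * LinearMap.range P.grp.toLinearMap
          * LinearMap.range P.grp.toLinearMap := by
          rw [← mul_assoc]
          exact mul_le_mul_left P.range_grp_mul_range_vec_le _
      _ = LinearMap.range P.vec * LinearMap.range P.grp.toLinearMap := by
          rw [mul_assoc, hgrp, (Subalgebra.isIdempotentElem_toSubmodule _).eq]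

end CovariantPair

variable {R : Submodule k (V ⊗[k] V)} {α : R →ₗ[k] V ⊗[k] MonoidAlgebra k G}
  {β : R →ₗ[k] MonoidAlgebra k G}

theorem map_toH_grT_zero : (grT k G V 0).map (toH k G V R ρ 0 α β).toLinearMap
    = LinearMap.range (hPair ρ α β).grp.toLinearMap := by
  have hadjoin : (Algebra.adjoin k (Set.range (gIn k G V))).map (toH k G V R ρ 0 α β)
      = (hPair ρ α β).grp.range := by
    rw [AlgHom.map_adjoin, ← Set.range_comp, ← Algebra.adjoin_eq (hPair ρ α β).grp.range]
    rfl
  rw [grT, ← Subalgebra.map_toSubmodule, hadjoin]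
  rfl

theorem map_toH_grT (n : ℕ) : (grT k G V n).map (toH k G V R ρ 0 α β).toLinearMap
    = (LinearMap.range (incl k V _ n)).map (hPair ρ α β).evalFree := by
  induction n with
  | zero => rw [map_toH_grT_zero, CovariantPair.map_evalFree_range_incl_zero]
  | succ n ih =>
    have hvec : (LinearMap.range (vIn k G V)).map (toH k G V R ρ 0 α β).toLinearMap
        = LinearMap.range (hPair ρ α β).vec := (LinearMap.range_comp _ _).symm
    rw [grT, Submodule.map_mul, Submodule.map_mul, ih, map_toH_grT_zero, hvec,
      CovariantPair.map_evalFree_range_incl_mul]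

theorem filtH_eq_map_degLE (d : ℕ) :
    filtH k G V R ρ 0 α β d = (degLE k V _ d).map (hPair ρ α β).evalFree := by
  induction d with
  | zero => rw [filtH, filtT, map_toH_grT, degLE_zero]
  | succ d ih => rw [filtH, filtT, Submodule.map_sup, ← filtH, ih, map_toH_grT, degLE_succ,
      Submodule.map_sup]

theorem isPBW_iff_finrank_degLE_inf_ker [Finite G] [FiniteDimensional k V] :
    IsPBW k G V R ρ 0 α β ↔ ∀ d,
      Module.finrank k ↥(degLE k V _ d ⊓ LinearMap.ker (hPair ρ α β).evalFree)
        = Module.finrank k ↥(degLE k V _ d ⊓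
            LinearMap.ker (hPair ρ (0 : R →ₗ[k] V ⊗[k] MonoidAlgebra k G) 0).evalFree) := by
  refine forall_congr' fun d => ?_
  rw [filtH_eq_map_degLE, filtH_eq_map_degLE]
  have h := finrank_map_add_finrank_inf_ker (degLE k V _ d) (hPair ρ α β).evalFree
  have h₀ := finrank_map_add_finrank_inf_ker (degLE k V _ d)
    (hPair ρ (0 : R →ₗ[k] V ⊗[k] MonoidAlgebra k G) 0).evalFree
  omega

end Filtration

section LowIncl

universe u

variable (k : Type*) [Field k] (V : Type u) [AddCommGroup V] [Module k V]
  (X : Type u) [AddCommGroup X] [Module k X]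

/-- The identification `V ⊗ X = V^{⊗1} ⊗ X`. -/
def oneEquiv : V ⊗[k] X ≃ₗ[k] TPow k V X 1 :=
  (nilEquiv k V X).lTensor V ≪≫ₗ consEquiv k V X 0

/-- The identification `V ⊗ (V ⊗ X) = V^{⊗2} ⊗ X`. -/
def twoEquiv : V ⊗[k] (V ⊗[k] X) ≃ₗ[k] TPow k V X 2 :=
  (oneEquiv k V X).lTensor V ≪≫ₗ consEquiv k V X 1

/-- The embedding of the components of degrees two, one and zero. -/
def lowIncl : (V ⊗[k] (V ⊗[k] X)) × (V ⊗[k] X) × X →ₗ[k] FreeMod k V X :=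
  (incl k V X 2 ∘ₗ (twoEquiv k V X).toLinearMap).coprod
    ((incl k V X 1 ∘ₗ (oneEquiv k V X).toLinearMap).coprod
      (incl k V X 0 ∘ₗ (nilEquiv k V X).toLinearMap))

variable {k V X}

theorem lowIncl_apply (q : (V ⊗[k] (V ⊗[k] X)) × (V ⊗[k] X) × X) :
    lowIncl k V X q = incl k V X 2 (twoEquiv k V X q.1)
      + (incl k V X 1 (oneEquiv k V X q.2.1) + incl k V X 0 (nilEquiv k V X q.2.2)) :=
  rfl

theorem incl_one_oneEquiv_tmul (v : V) (x : X) :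
    incl k V X 1 (oneEquiv k V X (v ⊗ₜ x)) = lmul k V X v (incl k V X 0 (nilEquiv k V X x)) :=
  (lmul_incl v 0 _).symm

theorem incl_two_twoEquiv_tmul (v : V) (t : V ⊗[k] X) :
    incl k V X 2 (twoEquiv k V X (v ⊗ₜ t)) = lmul k V X v (incl k V X 1 (oneEquiv k V X t)) :=
  (lmul_incl v 1 _).symm

theorem lowIncl_injective : Function.Injective (lowIncl k V X) := by
  refine (injective_iff_map_eq_zero _).2 fun ⟨s, t, x⟩ h => ?_
  rw [lowIncl_apply] at h
  have hs := congrArg (proj k V X 2) h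
  have ht := congrArg (proj k V X 1) h
  have hx := congrArg (proj k V X 0) h
  simp only [map_add, map_zero, DirectSum.component.of] at hs ht hx
  simp_all

theorem lowIncl_mem_degLE (q : (V ⊗[k] (V ⊗[k] X)) × (V ⊗[k] X) × X) :
    lowIncl k V X q ∈ degLE k V X 2 :=
  add_mem (incl_mem_degLE le_rfl _)
    (add_mem (incl_mem_degLE one_le_two _) (incl_mem_degLE zero_le_two _))

end LowIncl

section LowDegree

theorem inclRG_injective {k G V : Type} [Field k] [AddCommGroup V] [Module k V]
    {R : Submodule k (V ⊗[k] V)} : Function.Injective (inclRG k G V R) :=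
  (TensorProduct.assoc k V V (MonoidAlgebra k G)).injective.comp
    (Module.Flat.rTensor_preserves_injective_linearMap _ R.subtype_injective)

variable {k G V : Type} [Field k] [Group G] [AddCommGroup V] [Module k V]
  {ρ : Representation k G V} {R : Submodule k (V ⊗[k] V)}

namespace CovariantPair

variable {E : Type*} [Ring E] [Algebra k E] (P : CovariantPair ρ E)

theorem evalFree_incl_one (t : V ⊗[k] MonoidAlgebra k G) :
    P.evalFree (incl k V _ 1 (oneEquiv k V _ t)) = P.evalVG t := by
  induction t using TensorProduct.induction_on with
  | zero => simp
  | tmul v x => rw [incl_one_oneEquiv_tmul, evalFree_lmul, evalFree_incl_zero]; rfl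
  | add s t hs ht => simp only [map_add, hs, ht]

theorem evalFree_incl_two (s : V ⊗[k] (V ⊗[k] MonoidAlgebra k G)) :
    P.evalFree (incl k V _ 2 (twoEquiv k V _ s)) = P.evalVVG s := by
  induction s using TensorProduct.induction_on with
  | zero => simp
  | tmul v t => rw [incl_two_twoEquiv_tmul, evalFree_lmul, evalFree_incl_one]; rfl
  | add s t hs ht => simp only [map_add, hs, ht]

theorem evalFree_lowIncl
    (q : (V ⊗[k] (V ⊗[k] MonoidAlgebra k G)) × (V ⊗[k] MonoidAlgebra k G) × MonoidAlgebra k G) :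
    P.evalFree (lowIncl k V _ q) = P.evalVVG q.1 + (P.evalVG q.2.1 + P.grp q.2.2) := by
  rw [lowIncl_apply, map_add, map_add, evalFree_incl_two, evalFree_incl_one, evalFree_incl_zero]

end CovariantPair

theorem regPair_evalVG_incl_zero (t : V ⊗[k] MonoidAlgebra k G) :
    (regPair ρ).evalVG t (incl k V _ 0 (nilEquiv k V _ 1)) = incl k V _ 1 (oneEquiv k V _ t) := by
  induction t using TensorProduct.induction_on with
  | zero => simp
  | tmul v x =>
    rw [incl_one_oneEquiv_tmul, ← mul_one x, ← regPair_grp_incl_zero ρ, mul_one]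
    rfl
  | add s t hs ht => simp only [map_add, LinearMap.add_apply, hs, ht]

theorem regPair_evalVVG_incl_zero (s : V ⊗[k] (V ⊗[k] MonoidAlgebra k G)) :
    (regPair ρ).evalVVG s (incl k V _ 0 (nilEquiv k V _ 1)) = incl k V _ 2 (twoEquiv k V _ s) := by
  induction s using TensorProduct.induction_on with
  | zero => simp
  | tmul v t =>
    rw [incl_two_twoEquiv_tmul, ← regPair_evalVG_incl_zero (ρ := ρ)]
    rfl
  | add s t hs ht => simp only [map_add, LinearMap.add_apply, hs, ht]

/-- The element `y - α(y) - β(y)` of `T(V) ⋊ G`, by components of degrees two, one and zero, for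
`y` in `R ⊗ kG`. -/
def relTerms (α : R →ₗ[k] V ⊗[k] MonoidAlgebra k G) (β : R →ₗ[k] MonoidAlgebra k G) :
    R ⊗[k] MonoidAlgebra k G →ₗ[k]
      (V ⊗[k] (V ⊗[k] MonoidAlgebra k G)) × (V ⊗[k] MonoidAlgebra k G) × MonoidAlgebra k G :=
  (inclRG k G V R).prod ((-αext k G V R α).prod (-βext k G V R β))

theorem relTerms_apply (α : R →ₗ[k] V ⊗[k] MonoidAlgebra k G) (β : R →ₗ[k] MonoidAlgebra k G)
    (y : R ⊗[k] MonoidAlgebra k G) :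
    relTerms α β y = (inclRG k G V R y, -αext k G V R α y, -βext k G V R β y) :=
  rfl

theorem relTerms_injective (α : R →ₗ[k] V ⊗[k] MonoidAlgebra k G) (β : R →ₗ[k] MonoidAlgebra k G) :
    Function.Injective (relTerms α β) :=
  fun _ _ h => inclRG_injective (congrArg Prod.fst h)

variable {α : R →ₗ[k] V ⊗[k] MonoidAlgebra k G} {β : R →ₗ[k] MonoidAlgebra k G}

theorem lowIncl_relTerms (y : R ⊗[k] MonoidAlgebra k G) : lowIncl k V _ (relTerms α β y)
    = mulTensor ((regPair ρ).defect α β) (regPair ρ).grp.toLinearMap y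
        (incl k V _ 0 (nilEquiv k V _ 1)) := by
  rw [CovariantPair.mulTensor_defect_grp, LinearMap.sub_apply, LinearMap.sub_apply,
    regPair_evalVVG_incl_zero, regPair_evalVG_incl_zero, regPair_grp_incl_zero, mul_one,
    lowIncl_apply]
  simp only [relTerms_apply, map_neg]
  abel

theorem range_lowIncl_relTerms_le_relSpan :
    LinearMap.range (lowIncl k V _ ∘ₗ relTerms α β) ≤ relSpan ((regPair ρ).lower α β) 2 := by
  rintro _ ⟨y, rfl⟩
  rw [LinearMap.comp_apply, lowIncl_relTerms (ρ := ρ)]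
  have h : mulTensor ((regPair ρ).defect α β) (regPair ρ).grp.toLinearMap y
      ∈ (relSpan ((regPair ρ).lower α β) 2).comap
        (LinearMap.applyₗ (R := k) (incl k V _ 0 (nilEquiv k V _ 1))) :=
    mulTensor_mem (fun r x => degLE_le_comap_deformedQuad r 0
      (degLE_le_comap_freePair_grp x 0 (incl_mem_degLE le_rfl _))) y
  exact h

theorem relSpan_two_le_range_lowIncl_relTerms :
    relSpan ((regPair ρ).lower α β) 2 ≤ LinearMap.range (lowIncl k V _ ∘ₗ relTerms α β) := by
  refine relSpan_le.2 fun n hn i => ?_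
  obtain h | ⟨rfl, rfl⟩ : n < i + 2 ∨ n = 2 ∧ i = 0 := by omega
  · rw [deformedRel_eq_bot _ h]
    exact bot_le
  · rw [deformedRel_zero, Submodule.map₂_le]
    rintro r - _ ⟨m, rfl⟩
    obtain ⟨x, rfl⟩ := (nilEquiv k V _).surjective m
    refine ⟨r ⊗ₜ x, ?_⟩
    rw [LinearMap.comp_apply, lowIncl_relTerms (ρ := ρ), mulTensor_tmul, ← mul_one x,
      ← regPair_grp_incl_zero ρ, mul_one]
    rfl

end LowDegree

section PBW

variable {k G V : Type} [Field k] [Group G] [AddCommGroup V] [Module k V]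
  {ρ : Representation k G V} {R : Submodule k (V ⊗[k] V)}
  {hR : ∀ (g : G) (x : V ⊗[k] V), x ∈ R → TensorProduct.map (ρ g) (ρ g) x ∈ R}

theorem isInvariant_zero : IsInvariant ρ hR 0 0 :=
  ⟨fun _ _ => (map_zero _).symm, fun _ _ => (map_zero _).symm⟩

theorem overlapsResolve_zero :
    OverlapsResolve ρ (0 : R →ₗ[k] V ⊗[k] MonoidAlgebra k G) 0 := fun x₁ x₂ _ =>
  ⟨0, by simp [Theta], by simp, map_zero _⟩

variable {α : R →ₗ[k] V ⊗[k] MonoidAlgebra k G} {β : R →ₗ[k] MonoidAlgebra k G}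

theorem isPBW_of_overlapsResolve [Finite G] [FiniteDimensional k V] (hK : IsKoszul k V R)
    (hinv : IsInvariant ρ hR α β) (hres : OverlapsResolve ρ α β) : IsPBW k G V R ρ 0 α β := by
  refine isPBW_iff_finrank_degLE_inf_ker.2 fun d => ?_
  rw [degLE_inf_ker_evalFree_hPair hK hinv hres,
    degLE_inf_ker_evalFree_hPair hK (isInvariant_zero (hR := hR)) overlapsResolve_zero]
  exact finrank_relSpan_eq (isLowerOrder_freePair_lower _ _ _ _)
    (isLowerOrder_freePair_lower _ _ _ _) (hasAdaptedBasis_relAt R _ hK)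
    (isConfluentAt_freePair_lower hinv hres)
    (isConfluentAt_freePair_lower (isInvariant_zero (hR := hR)) overlapsResolve_zero) d

theorem finrank_relSpan_two : Module.finrank k (relSpan ((regPair ρ).lower α β) 2)
    = Module.finrank k (R ⊗[k] MonoidAlgebra k G) := by
  rw [le_antisymm relSpan_two_le_range_lowIncl_relTerms range_lowIncl_relTerms_le_relSpan]
  exact LinearMap.finrank_range_of_inj (lowIncl_injective.comp (relTerms_injective α β))

variable (ρ α β) in
/-- The generators of `H_{0,α,β}` satisfy no relations of degree at most two besides the
consequences `y = α(y) + β(y)`, for `y` in `R ⊗ kG`, of the defining ones. -/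
def NoNewRelations : Prop :=
  ∀ s t x, (hPair ρ α β).evalVVG s + ((hPair ρ α β).evalVG t + (hPair ρ α β).grp x) = 0 →
    ∃ y, relTerms α β y = (s, t, x)

theorem noNewRelations_of_isPBW [Finite G] [FiniteDimensional k V]
    (hR : ∀ (g : G) (x : V ⊗[k] V), x ∈ R → TensorProduct.map (ρ g) (ρ g) x ∈ R)
    (hK : IsKoszul k V R) (h : IsPBW k G V R ρ 0 α β) : NoNewRelations ρ α β := by
  intro s t x hstx
  have hle : relSpan ((regPair ρ).lower α β) 2
      ≤ degLE k V _ 2 ⊓ LinearMap.ker (hPair ρ α β).evalFree :=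
    le_inf ((isLowerOrder_freePair_lower _ _ α β).relSpan_le_degLE 2)
      ((hPair ρ α β).relSpan_le_ker_evalFree hPair_defect 2)
  have hfinrank : Module.finrank k (relSpan ((regPair ρ).lower α β) 2)
      = Module.finrank k ↥(degLE k V _ 2 ⊓ LinearMap.ker (hPair ρ α β).evalFree) := by
    rw [isPBW_iff_finrank_degLE_inf_ker.1 h,
      degLE_inf_ker_evalFree_hPair hK (isInvariant_zero (hR := hR)) overlapsResolve_zero,
      finrank_relSpan_two, finrank_relSpan_two]
  have hmem : lowIncl k V _ (s, t, x) ∈ relSpan ((regPair ρ).lower α β) 2 := by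
    rw [Submodule.eq_of_le_of_finrank_eq hle hfinrank]
    exact ⟨lowIncl_mem_degLE _, (CovariantPair.evalFree_lowIncl _ _).trans hstx⟩
  obtain ⟨y, hy⟩ := relSpan_two_le_range_lowIncl_relTerms hmem
  exact ⟨y, lowIncl_injective hy⟩

variable (ρ α β) in
/-- Conditions (i)–(iii) of the theorem, upon projection to `S ⋊ G`. An overlap in
`(V ⊗ R) ∩ (R ⊗ V)` is encoded by its two presentations. -/
def SkewOverlapConditions : Prop :=
  (∀ (x₁ : R ⊗[k] V) (x₂ : V ⊗[k] R), inclRV k V R x₁ = inclVR k V R x₂ →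
    embVGVA k G V R ρ (TensorProduct.map α LinearMap.id x₁)
      = embVVGA k G V R ρ (TensorProduct.map LinearMap.id α x₂)) ∧
  (∀ (x₁ : R ⊗[k] V) (x₂ : V ⊗[k] R), inclRV k V R x₁ = inclVR k V R x₂ →
    ∀ y : R ⊗[k] MonoidAlgebra k G, inclRG k G V R y = Theta k G V R ρ α x₁ x₂ →
      embVGA k G V R ρ (αext k G V R α y)
        = embVGA k G V R ρ (TensorProduct.map LinearMap.id β x₂)
          - embGVA k G V R ρ (TensorProduct.map β LinearMap.id x₁)) ∧
  (∀ (x₁ : R ⊗[k] V) (x₂ : V ⊗[k] R), inclRV k V R x₁ = inclVR k V R x₂ →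
    ∀ y : R ⊗[k] MonoidAlgebra k G, inclRG k G V R y = Theta k G V R ρ α x₁ x₂ →
      gA k G V R ρ (βext k G V R β y) = 0)

namespace NoNewRelations

theorem eq_zero (h : NoNewRelations ρ α β) {t : V ⊗[k] MonoidAlgebra k G} {x : MonoidAlgebra k G}
    (htx : (hPair ρ α β).evalVG t + (hPair ρ α β).grp x = 0) : t = 0 ∧ x = 0 := by
  obtain ⟨y, hy⟩ := h 0 t x (by rwa [map_zero, zero_add])
  obtain rfl : y = 0 := inclRG_injective ((congrArg Prod.fst hy).trans (map_zero _).symm)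
  simpa [Prod.ext_iff, eq_comm] using hy

theorem evalVG_injective (h : NoNewRelations ρ α β) :
    Function.Injective (hPair ρ α β).evalVG :=
  (injective_iff_map_eq_zero _).2 fun _ ht => (h.eq_zero (x := 0) (by simpa using ht)).1

theorem grp_injective (h : NoNewRelations ρ α β) : Function.Injective (hPair ρ α β).grp :=
  (injective_iff_map_eq_zero _).2 fun _ hx => (h.eq_zero (t := 0) (by simpa using hx)).2

/-- Conjugating the relation `r = α(r) + β(r)` by `g` yields a second relation with leading term
`ᵍr`, which must agree with the defining one. -/
theorem isInvariant (h : NoNewRelations ρ α β) : IsInvariant ρ hR α β := by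
  suffices hgr : ∀ g r, α (rActR k G V R ρ hR g r) - conjVG k G V ρ g (α r) = 0 ∧
      β (rActR k G V R ρ hR g r) - conjKG k G g (β r) = 0 from
    ⟨fun g r => sub_eq_zero.1 (hgr g r).1, fun g r => sub_eq_zero.1 (hgr g r).2⟩
  intro g r
  set P := hPair ρ α β
  have hlower (r : R) :
      mulTensor P.vec P.vec (r : V ⊗[k] V) = P.evalVG (α r) + P.grp (β r) :=
    sub_eq_zero.1 (DFunLike.congr_fun hPair_defect r)
  have hunit : IsUnit (P.grp (MonoidAlgebra.of k G g)) :=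
    ((Group.isUnit g).map (MonoidAlgebra.of k G)).map P.grp
  have hquad := P.semiconjBy_quad hR g r
  rw [hlower, hlower] at hquad
  have hconj := (P.semiconjBy_evalVG g (α r)).add_right (P.semiconjBy_grp g (β r))
  refine h.eq_zero ?_
  rw [map_sub, map_sub, sub_add_sub_comm, sub_eq_zero]
  exact hunit.mul_right_cancel (hquad.eq.symm.trans hconj.eq)

theorem overlapsResolve (h : NoNewRelations ρ α β) : OverlapsResolve ρ α β := by
  intro x₁ x₂ hx
  set P := hPair ρ α β
  have hlower : P.lower α β = mulTensor P.vec P.vec ∘ₗ R.subtype :=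
    (sub_eq_zero.1 hPair_defect).symm
  have hover : mulTensor (P.lower α β) P.vec x₁ = mulTensor P.vec (P.lower α β) x₂ :=
    calc mulTensor (P.lower α β) P.vec x₁
        = mulTensor P.vec (mulTensor P.vec P.vec) (inclRV k V R x₁) := by
          rw [inclRV, LinearMap.comp_apply, LinearEquiv.coe_coe, mulTensor_assoc, mulTensor_map,
            hlower, LinearMap.comp_id]
      _ = mulTensor P.vec (P.lower α β) x₂ := by
          rw [hx, inclVR, mulTensor_map, hlower, LinearMap.comp_id]
  have hzero := P.mulTensor_lower_sub_mulTensor_lower α β x₁ x₂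
  rw [hover, sub_self] at hzero
  obtain ⟨y, hy⟩ := h (Theta k G V R ρ α x₁ x₂) (-(TensorProduct.map LinearMap.id β x₂
    - sigma k G V ρ (TensorProduct.map β LinearMap.id x₁))) 0
    (by rw [map_neg, map_zero, add_zero, ← sub_eq_add_neg, ← hzero])
  simp only [relTerms_apply, Prod.mk.injEq, neg_inj, neg_eq_zero] at hy
  exact ⟨y, hy⟩

theorem embVGVA_eq_embVVGA_iff
    (h : NoNewRelations ρ (0 : R →ₗ[k] V ⊗[k] MonoidAlgebra k G) 0) (x₁ : R ⊗[k] V)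
    (x₂ : V ⊗[k] R) : embVGVA k G V R ρ (TensorProduct.map α LinearMap.id x₁)
        = embVVGA k G V R ρ (TensorProduct.map LinearMap.id α x₂)
      ↔ ∃ y, inclRG k G V R y = Theta k G V R ρ α x₁ x₂ := by
  rw [← sub_eq_zero]
  change mulTensor (hPair ρ 0 0).evalVG (hPair ρ 0 0).vec (TensorProduct.map α LinearMap.id x₁)
    - (hPair ρ 0 0).evalVVG (TensorProduct.map LinearMap.id α x₂) = 0 ↔ _
  rw [← CovariantPair.evalVVG_Theta]
  constructor
  · intro hΘ
    obtain ⟨y, hy⟩ := h (Theta k G V R ρ α x₁ x₂) 0 0 (by simpa using hΘ)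
    exact ⟨y, congrArg Prod.fst hy⟩
  · rintro ⟨y, hy⟩
    have hdefect := (hPair ρ (0 : R →ₗ[k] V ⊗[k] MonoidAlgebra k G) 0).mulTensor_defect_grp 0 0 y
    simpa [hPair_defect, hy, mulTensor, αext, βext, eq_comm] using hdefect

theorem embVGA_eq_sub_iff (h : NoNewRelations ρ (0 : R →ₗ[k] V ⊗[k] MonoidAlgebra k G) 0)
    (t t' : V ⊗[k] MonoidAlgebra k G) (u : MonoidAlgebra k G ⊗[k] V) :
    embVGA k G V R ρ t = embVGA k G V R ρ t' - embGVA k G V R ρ u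
      ↔ t = t' - sigma k G V ρ u := by
  rw [← h.evalVG_injective.eq_iff, map_sub, CovariantPair.evalVG_sigma]
  rfl

theorem gA_eq_zero_iff (h : NoNewRelations ρ (0 : R →ₗ[k] V ⊗[k] MonoidAlgebra k G) 0)
    (x : MonoidAlgebra k G) : gA k G V R ρ x = 0 ↔ x = 0 :=
  map_eq_zero_iff (hPair ρ 0 0).grp h.grp_injective

theorem overlapsResolve_iff (h : NoNewRelations ρ (0 : R →ₗ[k] V ⊗[k] MonoidAlgebra k G) 0) :
    OverlapsResolve ρ α β ↔ SkewOverlapConditions ρ α β := by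
  simp only [SkewOverlapConditions, h.embVGVA_eq_embVVGA_iff, h.embVGA_eq_sub_iff, h.gA_eq_zero_iff]
  constructor
  · intro hres
    refine ⟨fun x₁ x₂ hx => (hres x₁ x₂ hx).imp fun y hy => hy.1, fun x₁ x₂ hx y hy => ?_,
      fun x₁ x₂ hx y hy => ?_⟩
    all_goals
      obtain ⟨y', hy', hα, hβ⟩ := hres x₁ x₂ hx
      obtain rfl := inclRG_injective (hy.trans hy'.symm)
      assumption
  · rintro ⟨hΘ, hα, hβ⟩ x₁ x₂ hx
    obtain ⟨y, hy⟩ := hΘ x₁ x₂ hx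
    exact ⟨y, hy, hα x₁ x₂ hx y hy, hβ x₁ x₂ hx y hy⟩

end NoNewRelations

end PBW

end DeformKoszul

theorem pbw_deformation_preserving_group_action_general
    {k G V : Type} [Field k] [Group G] [Finite G] [AddCommGroup V] [Module k V]
    [FiniteDimensional k V] {ρ : Representation k G V} {R : Submodule k (V ⊗[k] V)}
    {α : R →ₗ[k] V ⊗[k] MonoidAlgebra k G} {β : R →ₗ[k] MonoidAlgebra k G}
    (hR : ∀ (g : G) (x : V ⊗[k] V), x ∈ R → TensorProduct.map (ρ g) (ρ g) x ∈ R)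
    (hK : IsKoszul k V R) :
    IsPBW k G V R ρ 0 α β ↔ IsInvariant ρ hR α β ∧ SkewOverlapConditions ρ α β := by
  have hskew : NoNewRelations ρ (0 : R →ₗ[k] V ⊗[k] MonoidAlgebra k G) 0 :=
    noNewRelations_of_isPBW hR hK fun _ => rfl
  rw [← hskew.overlapsResolve_iff]
  constructor
  · intro hPBW
    have hnew := noNewRelations_of_isPBW hR hK hPBW
    exact ⟨hnew.isInvariant, hnew.overlapsResolve⟩
  · rintro ⟨hinv, hres⟩
    exact isPBW_of_overlapsResolve hK hinv hres

/-- **Theorem 2.3** of Shepler–Witherspoon, "Deforming group actions on Koszul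
algebras" (= Theorem 5.4 of their "Poincaré–Birkhoff–Witt theorems" [quad], rephrased).
Let `G` be a finite group, `V` a finite dimensional `kG`-module and `S = T(V)/(R)` a
Koszul algebra with `R ⊆ V ⊗ V` closed under the `G`-action.  A filtered quadratic
algebra `H` is a PBW deformation of `S ⋊ G` preserving the action of `G` iff
`H ≅ H_{0,α,β}` for `G`-invariant parameters `α : R → V ⊗ kG`, `β : R → kG`
satisfying (i)–(iii); stated per parameters:  `H_{0,α,β}` (i.e. `H_{λ,α,β}` with
`λ = 0`, which is what it means for the deformation to preserve the group action) is a
PBW deformation of `S ⋊ G` iff `α` and `β` are `G`-invariant and (i)–(iii) hold upon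
projection to `S ⋊ G`.  Here `G` acts on parameters by `(ᵍα)(r) = ᵍ(α(ᵍ⁻¹ r))` with
`ᵍ(v ⊗ h) = ᵍv ⊗ ghg⁻¹`, and an element `x ∈ (V ⊗ R) ∩ (R ⊗ V)` is encoded by its two
presentations `x₁ ∈ R ⊗ V`, `x₂ ∈ V ⊗ R`; condition (i) guarantees that the element
`((1 ⊗ σ)(α ⊗ 1) − 1 ⊗ α)(x)` of (ii) and (iii) lies in `R ⊗ kG`, encoded by the
(necessarily unique) `y` with `inclRG y = Theta x₁ x₂`. -/
theorem pbw_deformation_preserving_group_action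
    (k G V : Type) [Field k] [Group G] [Fintype G] [AddCommGroup V] [Module k V]
    [FiniteDimensional k V] (h2 : (2 : k) ≠ 0)
    (ρ : Representation k G V) (R : Submodule k (V ⊗[k] V))
    (hR : ∀ (g : G), ∀ x ∈ R, TensorProduct.map (ρ g) (ρ g) x ∈ R)
    (hKoszul : IsKoszul k V R)
    (α : R →ₗ[k] (V ⊗[k] MonoidAlgebra k G))
    (β : R →ₗ[k] MonoidAlgebra k G) :
    IsPBW k G V R ρ 0 α β ↔
      -- G-invariance of α :  ᵍα = α
      ((∀ (g : G) (r : R), α (rActR k G V R ρ hR g r) = conjVG k G V ρ g (α r)) ∧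
      -- G-invariance of β :  ᵍβ = β
      (∀ (g : G) (r : R), β (rActR k G V R ρ hR g r) = conjKG k G g (β r)) ∧
      -- (i)  α⊗1 − 1⊗α = 0  on (V⊗R) ∩ (R⊗V)
      (∀ (x₁ : (R : Submodule k (V ⊗[k] V)) ⊗[k] V) (x₂ : V ⊗[k] (R : Submodule k (V ⊗[k] V))),
        inclRV k V R x₁ = inclVR k V R x₂ →
          embVGVA k G V R ρ ((TensorProduct.map α LinearMap.id) x₁)
            = embVVGA k G V R ρ ((TensorProduct.map LinearMap.id α) x₂)) ∧
      -- (ii)  α((1⊗σ)(α⊗1) − 1⊗α) = 1⊗β − β⊗1  on (V⊗R) ∩ (R⊗V)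
      (∀ (x₁ : (R : Submodule k (V ⊗[k] V)) ⊗[k] V) (x₂ : V ⊗[k] (R : Submodule k (V ⊗[k] V))),
        inclRV k V R x₁ = inclVR k V R x₂ →
        ∀ y : (R : Submodule k (V ⊗[k] V)) ⊗[k] MonoidAlgebra k G,
          inclRG k G V R y = Theta k G V R ρ α x₁ x₂ →
          embVGA k G V R ρ (αext k G V R α y)
            = embVGA k G V R ρ ((TensorProduct.map LinearMap.id β) x₂)
              - embGVA k G V R ρ ((TensorProduct.map β LinearMap.id) x₁)) ∧
      -- (iii)  β((1⊗σ)(α⊗1) − 1⊗α) = 0  on (V⊗R) ∩ (R⊗V)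
      (∀ (x₁ : (R : Submodule k (V ⊗[k] V)) ⊗[k] V) (x₂ : V ⊗[k] (R : Submodule k (V ⊗[k] V))),
        inclRV k V R x₁ = inclVR k V R x₂ →
        ∀ y : (R : Submodule k (V ⊗[k] V)) ⊗[k] MonoidAlgebra k G,
          inclRG k G V R y = Theta k G V R ρ α x₁ x₂ →
          gA k G V R ρ (βext k G V R β y) = 0)) :=
  (pbw_deformation_preserving_group_action_general hR hKoszul).trans and_assoc
end
end

section
/- If the algebra H_{λ,α,β} is a PBW deformation of S⋊G, then H_{λ,α,β} is the fiber at t = 1 of a graded deformation of A = S⋊G: there exists a graded deformation A_t of S⋊G over k[t] such that H_{λ,α,β} ≅ A_t|_{t=1} as filtered algebras. -/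
open TensorProduct

noncomputable section

namespace DeformKoszul

variable (k G V : Type) [Field k] [Group G] [AddCommGroup V] [Module k V]

variable (R : Submodule k (V ⊗[k] V))

variable (ρ : Representation k G V)

variable (lam : MonoidAlgebra k G ⊗[k] V →ₗ[k] MonoidAlgebra k G)
    (α : R →ₗ[k] (V ⊗[k] MonoidAlgebra k G))
    (β : R →ₗ[k] MonoidAlgebra k G)

variable (hR : ∀ (g : G) (x : V ⊗[k] V), x ∈ R → TensorProduct.map (ρ g) (ρ g) x ∈ R)

/-- The degree-`d` graded piece of `S ⋊ G = H_{0,0,0}`. -/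
def grA (d : ℕ) : Submodule k (SkewA k G V R ρ) :=
  (grT k G V d).map (toH k G V R ρ 0 0 0).toLinearMap

end DeformKoszul

open DeformKoszul

/-!
Both `S ⋊ G` and `H_{λ,α,β}` are quotients of the free algebra on `kG ⊕ V`, and every homogeneous
relation of `S ⋊ G` is the leading form of a relation of `H_{λ,α,β}`. A linear map
`s : S ⋊ G → H_{λ,α,β}` that lifts homogeneous elements to the free algebra therefore maps the
degree filtration of `S ⋊ G` onto that of `H_{λ,α,β}`; equality of dimensions makes `s` an
isomorphism, and it respects products up to terms of lower degree. Homogenizing `s` identifies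
`(S ⋊ G)[t]` with the Rees algebra of `H_{λ,α,β}`, a subalgebra of `H_{λ,α,β}[t]`. The transported
product on `(S ⋊ G)[t]` is the graded deformation, and evaluation at `t = 1` recovers `H_{λ,α,β}`.
-/

namespace DeformKoszul

open DirectSum

section DegreeLT

variable {k M N : Type*} [CommSemiring k] [AddCommMonoid M] [Module k M] [AddCommMonoid N]
  [Module k N] (ℳ : ℕ → Submodule k M)

/-- The elements of degree less than `n` with respect to a family `ℳ` of homogeneous parts.
Strict inequality makes the filtration start at `0`, so that lower order terms in degree `0`
vanish; `degreeLT ℳ (d + 1)` is the usual filtration by degree at most `d`. -/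
def degreeLT (n : ℕ) : Submodule k M := ⨆ i < n, ℳ i

variable {ℳ}

theorem degreeLT_le {n : ℕ} {P : Submodule k M} : degreeLT ℳ n ≤ P ↔ ∀ i < n, ℳ i ≤ P :=
  iSup₂_le_iff

theorem le_degreeLT {i n : ℕ} (h : i < n) : ℳ i ≤ degreeLT ℳ n :=
  degreeLT_le.1 le_rfl i h

theorem degreeLT_mono : Monotone (degreeLT ℳ) := fun _ _ h =>
  degreeLT_le.2 fun _ hi => le_degreeLT (hi.trans_le h)

@[simp]
theorem degreeLT_zero : degreeLT ℳ 0 = ⊥ := by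
  simp [degreeLT]

theorem degreeLT_succ (n : ℕ) : degreeLT ℳ (n + 1) = degreeLT ℳ n ⊔ ℳ n :=
  Nat.iSup_lt_succ ℳ n

theorem map_degreeLT (f : M →ₗ[k] N) (n : ℕ) :
    (degreeLT ℳ n).map f = degreeLT (fun i => (ℳ i).map f) n := by
  simp only [degreeLT, Submodule.map_iSup]

instance [∀ i, Module.Finite k (ℳ i)] (n : ℕ) : Module.Finite k (degreeLT ℳ n) := by
  induction n with
  | zero => rw [degreeLT_zero]; infer_instance
  | succ n ih =>
    rw [degreeLT_succ]
    exact Module.Finite.of_fg <|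
      (Module.Finite.iff_fg.1 ih).sup (Module.Finite.iff_fg.1 inferInstance)

theorem exists_mem_degreeLT [Decomposition ℳ] (x : M) : ∃ n, x ∈ degreeLT ℳ n := by
  induction x using Decomposition.inductionOn ℳ with
  | zero => exact ⟨0, zero_mem _⟩
  | @homogeneous i x => exact ⟨i + 1, le_degreeLT i.lt_succ_self x.2⟩
  | add x y hx hy =>
    obtain ⟨m, hm⟩ := hx
    obtain ⟨n, hn⟩ := hy
    exact ⟨max m n, add_mem (degreeLT_mono (le_max_left m n) hm)
      (degreeLT_mono (le_max_right m n) hn)⟩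

theorem decompose_eq_zero_of_mem_degreeLT [Decomposition ℳ] {x : M} {n i : ℕ}
    (hx : x ∈ degreeLT ℳ n) (h : n ≤ i) : (decompose ℳ x i : M) = 0 := by
  suffices degreeLT ℳ n ≤ LinearMap.ker
      ((ℳ i).subtype ∘ₗ component k ℕ (fun i => ℳ i) i ∘ₗ (decomposeLinearEquiv ℳ).toLinearMap) from
    this hx
  exact degreeLT_le.2 fun j hj y hy => decompose_of_mem_ne ℳ hy (hj.trans_le h).ne

variable {A : Type*} [Semiring A] [Algebra k A] {𝒜 : ℕ → Submodule k A}
  [SetLike.GradedMonoid 𝒜]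

theorem mul_mem_degreeLT_left {m n : ℕ} {x y : A} (hx : x ∈ 𝒜 m) (hy : y ∈ degreeLT 𝒜 n) :
    x * y ∈ degreeLT 𝒜 (m + n) := by
  suffices degreeLT 𝒜 n ≤ (degreeLT 𝒜 (m + n)).comap (LinearMap.mulLeft k x) from this hy
  exact degreeLT_le.2 fun i hi z hz =>
    le_degreeLT (Nat.add_lt_add_left hi m) (SetLike.mul_mem_graded hx hz)

theorem mul_mem_degreeLT_right {m n : ℕ} {x y : A} (hx : x ∈ degreeLT 𝒜 n) (hy : y ∈ 𝒜 m) :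
    x * y ∈ degreeLT 𝒜 (n + m) := by
  suffices degreeLT 𝒜 n ≤ (degreeLT 𝒜 (n + m)).comap (LinearMap.mulRight k y) from this hx
  exact degreeLT_le.2 fun i hi z hz =>
    le_degreeLT (Nat.add_lt_add_right hi m) (SetLike.mul_mem_graded hz hy)

end DegreeLT

section GradedDeformation

variable {k A B : Type*} [CommSemiring k] [Semiring A] [Algebra k A] [Semiring B] [Algebra k B]

/-- The maps `μ j` are the coefficients of the star product `a * b = ∑ j, μ j (a ⊗ b) t ^ j` of a
graded deformation over `k[t]` of the algebra `A` with homogeneous parts `𝒜`. -/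
structure IsGradedDeformation (𝒜 : ℕ → Submodule k A) (μ : ℕ → A ⊗[k] A →ₗ[k] A) : Prop where
  zero : μ 0 = LinearMap.mul' k A
  one : ∀ j, 1 ≤ j → ∀ a : A, μ j (1 ⊗ₜ[k] a) = 0 ∧ μ j (a ⊗ₜ[k] 1) = 0
  homogeneous : ∀ (j p q : ℕ) (a b : A), a ∈ 𝒜 p → b ∈ 𝒜 q →
    μ j (a ⊗ₜ[k] b) ∈ 𝒜 (p + q - j) ∧ (p + q < j → μ j (a ⊗ₜ[k] b) = 0)
  assoc : ∀ (n : ℕ) (a b c : A),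
    ∑ ij ∈ Finset.HasAntidiagonal.antidiagonal n, μ ij.1 (μ ij.2 (a ⊗ₜ[k] b) ⊗ₜ[k] c) =
      ∑ ij ∈ Finset.HasAntidiagonal.antidiagonal n, μ ij.1 (a ⊗ₜ[k] μ ij.2 (b ⊗ₜ[k] c))

/-- `f` is an isomorphism of filtered algebras from `B`, filtered by `ℱ`, to the fiber at `t = 1`
of the deformation of `A` with star product coefficients `μ`, filtered by `𝒢`. The sum in `map_mul`
is finite if the deformation is graded. -/
structure IsFilteredFiberIso (ℱ : ℕ → Submodule k B) (𝒢 : ℕ → Submodule k A)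
    (μ : ℕ → A ⊗[k] A →ₗ[k] A) (f : B ≃ₗ[k] A) : Prop where
  map_one : f 1 = 1
  map_mul : ∀ x y : B, f (x * y) = ∑ᶠ j : ℕ, μ j (f x ⊗ₜ[k] f y)
  map_filtration : ∀ d, (ℱ d).map (f : B →ₗ[k] A) = 𝒢 d

end GradedDeformation

section Rees

open Polynomial

variable {k A B : Type*} [CommRing k] [Ring A] [Algebra k A] [Ring B] [Algebra k B]
  (𝒜 : ℕ → Submodule k A) [GradedAlgebra 𝒜] (s : A ≃ₗ[k] B)

/-- A linear identification of a graded algebra `A` with an algebra `B` is multiplicative to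
leading order if the product it transports to `A` differs from that of `A` by terms of lower
degree. -/
def IsMulToLeadingOrder : Prop :=
  ∀ ⦃p q : ℕ⦄ ⦃a b : A⦄, a ∈ 𝒜 p → b ∈ 𝒜 q → s.symm (s a * s b) - a * b ∈ degreeLT 𝒜 (p + q)

/-- The homogenization `∑ p, s aₚ X ^ p` of `s a`, where `aₚ` are the homogeneous components
of `a`. -/
def homogenize : A →ₗ[k] B[X] :=
  toModule k ℕ B[X] (fun p => (monomial p).restrictScalars k ∘ₗ s.toLinearMap ∘ₗ (𝒜 p).subtype) ∘ₗ
    (decomposeLinearEquiv 𝒜).toLinearMap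

/-- The `k[X]`-linear extension of `homogenize` to `A[X]`. When `s` is multiplicative to leading
order, its range is the Rees algebra of `B`. -/
def reesMap : A[X] →ₗ[k] B[X] :=
  lsum fun j => LinearMap.mulRight k (X ^ j) ∘ₗ homogenize 𝒜 s

/-- The `j`-th coefficient of the left inverse of `reesMap`. -/
def reesCoeff (j : ℕ) : B[X] →ₗ[k] A :=
  lsum fun n => if j ≤ n then GradedAlgebra.proj 𝒜 (n - j) ∘ₗ s.symm.toLinearMap else 0

/-- The coefficient of `t ^ j` of the star product obtained by multiplying homogenizations in the
Rees algebra. -/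
def starCoeff (j : ℕ) : A ⊗[k] A →ₗ[k] A :=
  reesCoeff 𝒜 s j ∘ₗ LinearMap.mul' k B[X] ∘ₗ
    TensorProduct.map (homogenize 𝒜 s) (homogenize 𝒜 s)

variable {𝒜 s}

theorem homogenize_of_mem {p : ℕ} {a : A} (ha : a ∈ 𝒜 p) :
    homogenize 𝒜 s a = monomial p (s a) := by
  lift a to 𝒜 p using ha
  simp [homogenize]

theorem reesMap_monomial (j : ℕ) (a : A) :
    reesMap 𝒜 s (monomial j a) = homogenize 𝒜 s a * X ^ j := by
  simp [reesMap, lsum]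

theorem reesMap_monomial_of_mem {p : ℕ} {a : A} (ha : a ∈ 𝒜 p) (j : ℕ) :
    reesMap 𝒜 s (monomial j a) = monomial (p + j) (s a) := by
  rw [reesMap_monomial, homogenize_of_mem ha, monomial_mul_X_pow]

theorem reesMap_mul_X_pow (f : A[X]) (j : ℕ) :
    reesMap 𝒜 s (f * X ^ j) = reesMap 𝒜 s f * X ^ j := by
  induction f using Polynomial.induction_on' with
  | add f g hf hg => simp only [add_mul, map_add, hf, hg]
  | monomial i a => rw [monomial_mul_X_pow, reesMap_monomial, reesMap_monomial, pow_add, mul_assoc]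

theorem reesCoeff_monomial (j n : ℕ) (b : B) :
    reesCoeff 𝒜 s j (monomial n b) =
      if j ≤ n then (decompose 𝒜 (s.symm b) (n - j) : A) else 0 := by
  refine (sum_monomial_index b _ (LinearMap.map_zero _)).trans ?_
  dsimp only
  split_ifs <;> rfl

theorem reesCoeff_reesMap (j : ℕ) (f : A[X]) : reesCoeff 𝒜 s j (reesMap 𝒜 s f) = f.coeff j := by
  induction f using Polynomial.induction_on' with
  | add f g hf hg => simp only [map_add, coeff_add, hf, hg]
  | monomial i a =>
    induction a using Decomposition.inductionOn 𝒜 with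
    | zero => simp
    | add a b ha hb => simp only [map_add, coeff_add, ha, hb]
    | @homogeneous p a =>
      rw [reesMap_monomial_of_mem a.2, reesCoeff_monomial, s.symm_apply_apply, coeff_monomial]
      split_ifs with hj hij hij
      · rw [hij, Nat.add_sub_cancel, decompose_of_mem_same 𝒜 a.2]
      · exact decompose_of_mem_ne 𝒜 a.2 (by omega)
      · omega
      · rfl

theorem starCoeff_tmul (j : ℕ) (a b : A) :
    starCoeff 𝒜 s j (a ⊗ₜ[k] b) = reesCoeff 𝒜 s j (homogenize 𝒜 s a * homogenize 𝒜 s b) :=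
  rfl

theorem starCoeff_of_mem {p q : ℕ} {a b : A} (ha : a ∈ 𝒜 p) (hb : b ∈ 𝒜 q) (j : ℕ) :
    starCoeff 𝒜 s j (a ⊗ₜ[k] b) =
      if j ≤ p + q then (decompose 𝒜 (s.symm (s a * s b)) (p + q - j) : A) else 0 := by
  rw [starCoeff_tmul, homogenize_of_mem ha, homogenize_of_mem hb, monomial_mul_monomial,
    reesCoeff_monomial]

theorem monomial_mem_range_reesMap {a : A} {n : ℕ} (ha : a ∈ degreeLT 𝒜 (n + 1)) :
    monomial n (s a) ∈ LinearMap.range (reesMap 𝒜 s) := by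
  suffices degreeLT 𝒜 (n + 1) ≤ (LinearMap.range (reesMap 𝒜 s)).comap
      ((monomial n).restrictScalars k ∘ₗ s.toLinearMap) from this ha
  refine degreeLT_le.2 fun i hi c hc => ⟨monomial (n - i) c, ?_⟩
  rw [reesMap_monomial_of_mem hc, Nat.add_sub_cancel' (Nat.le_of_lt_succ hi)]
  rfl

theorem homogenize_mul_homogenize_mem_range (hs : IsMulToLeadingOrder 𝒜 s) (a b : A) :
    homogenize 𝒜 s a * homogenize 𝒜 s b ∈ LinearMap.range (reesMap 𝒜 s) := by
  induction a using Decomposition.inductionOn 𝒜 with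
  | zero => simp
  | add a a' ha ha' => rw [map_add, add_mul]; exact add_mem ha ha'
  | @homogeneous p a =>
    induction b using Decomposition.inductionOn 𝒜 with
    | zero => simp
    | add b b' hb hb' => rw [map_add, mul_add]; exact add_mem hb hb'
    | @homogeneous q b =>
      have hab : s.symm (s a * s b) ∈ degreeLT 𝒜 (p + q + 1) := by
        rw [← sub_add_cancel (s.symm (s a * s b)) (a * b : A), degreeLT_succ]
        exact Submodule.add_mem_sup (hs a.2 b.2) (SetLike.mul_mem_graded a.2 b.2)
      rw [homogenize_of_mem a.2, homogenize_of_mem b.2, monomial_mul_monomial]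
      simpa only [s.apply_symm_apply] using monomial_mem_range_reesMap (s := s) hab

theorem reesCoeff_apply_reesMap {L : B[X] →ₗ[k] B[X]} (hX : ∀ f j, L (f * X ^ j) = L f * X ^ j)
    (hL : ∀ a, L (homogenize 𝒜 s a) ∈ LinearMap.range (reesMap 𝒜 s)) (n : ℕ) (f : A[X]) :
    reesCoeff 𝒜 s n (L (reesMap 𝒜 s f)) =
      ∑ ij ∈ Finset.HasAntidiagonal.antidiagonal n,
        reesCoeff 𝒜 s ij.1 (L (homogenize 𝒜 s (f.coeff ij.2))) := by
  induction f using Polynomial.induction_on' with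
  | add f g hf hg => simp only [map_add, coeff_add, hf, hg, Finset.sum_add_distrib]
  | monomial i a =>
    obtain ⟨P, hP⟩ := hL a
    have hterm (j : ℕ) : reesCoeff 𝒜 s j (L (homogenize 𝒜 s a)) = P.coeff j := by
      rw [← hP, reesCoeff_reesMap]
    rw [reesMap_monomial, hX, ← hP, ← reesMap_mul_X_pow, reesCoeff_reesMap, coeff_mul]
    refine Finset.sum_congr rfl fun ij _ => ?_
    rw [coeff_X_pow, coeff_monomial]
    rcases eq_or_ne i ij.2 with hi | hi
    · rw [if_pos hi.symm, if_pos hi, mul_one, hterm]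
    · rw [if_neg hi.symm, if_neg hi, mul_zero, map_zero, map_zero, map_zero]

theorem decompose_symm_mul (hs : IsMulToLeadingOrder 𝒜 s) {p q : ℕ} {a b : A} (ha : a ∈ 𝒜 p)
    (hb : b ∈ 𝒜 q) : (decompose 𝒜 (s.symm (s a * s b)) (p + q) : A) = a * b := by
  have h := decompose_eq_zero_of_mem_degreeLT (hs ha hb) le_rfl
  rwa [decompose_sub, DirectSum.sub_apply, AddSubgroupClass.coe_sub,
    decompose_of_mem_same 𝒜 (SetLike.mul_mem_graded ha hb), sub_eq_zero] at h

theorem starCoeff_zero (hs : IsMulToLeadingOrder 𝒜 s) :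
    starCoeff 𝒜 s 0 = LinearMap.mul' k A := by
  ext a b
  change starCoeff 𝒜 s 0 (a ⊗ₜ[k] b) = a * b
  induction a using Decomposition.inductionOn 𝒜 with
  | zero => simp
  | add a a' ha ha' => rw [TensorProduct.add_tmul, map_add, ha, ha', add_mul]
  | @homogeneous p a =>
    induction b using Decomposition.inductionOn 𝒜 with
    | zero => simp
    | add b b' hb hb' => rw [TensorProduct.tmul_add, map_add, hb, hb', mul_add]
    | @homogeneous q b =>
      rw [starCoeff_of_mem a.2 b.2, if_pos (Nat.zero_le _), Nat.sub_zero,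
        decompose_symm_mul hs a.2 b.2]

theorem homogenize_one (h1 : s 1 = 1) : homogenize 𝒜 s 1 = 1 := by
  rw [homogenize_of_mem SetLike.GradedOne.one_mem, h1, monomial_zero_one]

theorem reesCoeff_homogenize {j : ℕ} (hj : j ≠ 0) (a : A) :
    reesCoeff 𝒜 s j (homogenize 𝒜 s a) = 0 := by
  rw [← mul_one (homogenize 𝒜 s a), ← pow_zero X, ← reesMap_monomial, reesCoeff_reesMap,
    coeff_monomial_of_ne _ hj]

theorem starCoeff_assoc (hs : IsMulToLeadingOrder 𝒜 s) (n : ℕ) (a b c : A) :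
    ∑ ij ∈ Finset.HasAntidiagonal.antidiagonal n,
        starCoeff 𝒜 s ij.1 (starCoeff 𝒜 s ij.2 (a ⊗ₜ[k] b) ⊗ₜ[k] c) =
      ∑ ij ∈ Finset.HasAntidiagonal.antidiagonal n,
        starCoeff 𝒜 s ij.1 (a ⊗ₜ[k] starCoeff 𝒜 s ij.2 (b ⊗ₜ[k] c)) := by
  obtain ⟨P, hP⟩ := homogenize_mul_homogenize_mem_range hs a b
  obtain ⟨Q, hQ⟩ := homogenize_mul_homogenize_mem_range hs b c
  have hleft := reesCoeff_apply_reesMap (L := LinearMap.mulRight k (homogenize 𝒜 s c))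
    (fun f j => by simp only [LinearMap.mulRight_apply, mul_assoc, X_pow_mul])
    (homogenize_mul_homogenize_mem_range hs · c) n P
  have hright := reesCoeff_apply_reesMap (L := LinearMap.mulLeft k (homogenize 𝒜 s a))
    (fun f j => by simp only [LinearMap.mulLeft_apply, mul_assoc])
    (homogenize_mul_homogenize_mem_range hs a) n Q
  simp only [LinearMap.mulRight_apply, LinearMap.mulLeft_apply] at hleft hright
  simp only [starCoeff_tmul, ← hP, ← hQ, reesCoeff_reesMap, ← hleft, ← hright]
  rw [hP, hQ, mul_assoc]

theorem isGradedDeformation_starCoeff (hs : IsMulToLeadingOrder 𝒜 s) (h1 : s 1 = 1) :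
    IsGradedDeformation 𝒜 (starCoeff 𝒜 s) where
  zero := starCoeff_zero hs
  one j hj a := by
    simp only [starCoeff_tmul, homogenize_one h1, one_mul, mul_one,
      reesCoeff_homogenize (Nat.one_le_iff_ne_zero.1 hj), and_self]
  homogeneous j p q a b ha hb := by
    rw [starCoeff_of_mem ha hb]
    refine ⟨?_, fun h => if_neg h.not_ge⟩
    split_ifs
    exacts [SetLike.coe_mem _, zero_mem _]
  assoc := starCoeff_assoc hs

theorem eval_one_homogenize (a : A) : (homogenize 𝒜 s a).eval 1 = s a := by
  induction a using Decomposition.inductionOn 𝒜 with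
  | zero => simp
  | add a b ha hb => rw [map_add, eval_add, ha, hb, map_add]
  | @homogeneous p a => rw [homogenize_of_mem a.2, eval_monomial, one_pow, mul_one]

theorem eval_one_mul (f g : B[X]) : (f * g).eval 1 = f.eval 1 * g.eval 1 :=
  eval₂_mul_noncomm _ _ fun _ => Commute.one_right _

theorem eval_one_reesMap (f : A[X]) : (reesMap 𝒜 s f).eval 1 = s (f.eval 1) := by
  induction f using Polynomial.induction_on' with
  | add f g hf hg => simp only [map_add, eval_add, hf, hg]
  | monomial j a =>
    rw [reesMap_monomial, eval_mul_X_pow, eval_one_homogenize, eval_monomial, one_pow, one_pow,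
      mul_one, mul_one]

theorem eval_one_eq_finsum (f : A[X]) : f.eval 1 = ∑ᶠ j, f.coeff j := by
  rw [eval_eq_sum, Polynomial.sum, finsum_eq_sum_of_support_subset (s := f.support) _ (by simp)]
  simp only [one_pow, mul_one]

theorem symm_mul_eq_finsum_starCoeff (hs : IsMulToLeadingOrder 𝒜 s) (x y : B) :
    s.symm (x * y) = ∑ᶠ j, starCoeff 𝒜 s j (s.symm x ⊗ₜ[k] s.symm y) := by
  obtain ⟨P, hP⟩ := homogenize_mul_homogenize_mem_range hs (s.symm x) (s.symm y)
  have hxy : x * y = s (P.eval 1) := by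
    rw [← eval_one_reesMap (𝒜 := 𝒜), hP, eval_one_mul, eval_one_homogenize, eval_one_homogenize,
      s.apply_symm_apply, s.apply_symm_apply]
  simp only [hxy, s.symm_apply_apply, starCoeff_tmul, ← hP, reesCoeff_reesMap, eval_one_eq_finsum]

end Rees

section GradedQuotient

variable {ι k T A : Type*} [CommSemiring k] [Semiring T] [Algebra k T] [Semiring A] [Algebra k A]

/-- The images under an algebra map of the homogeneous parts of a graded algebra. -/
def imageGrading (𝒯 : ι → Submodule k T) (f : T →ₐ[k] A) (i : ι) : Submodule k A :=
  (𝒯 i).map f.toLinearMap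

instance [AddMonoid ι] (𝒯 : ι → Submodule k T) [SetLike.GradedMonoid 𝒯] (f : T →ₐ[k] A) :
    SetLike.GradedMonoid (imageGrading 𝒯 f) where
  one_mem := ⟨1, SetLike.GradedOne.one_mem, map_one f⟩
  mul_mem := by
    rintro i j _ _ ⟨x, hx, rfl⟩ ⟨y, hy, rfl⟩
    exact ⟨x * y, SetLike.mul_mem_graded hx hy, map_mul f x y⟩

variable [DecidableEq ι] [AddMonoid ι] (𝒯 : ι → Submodule k T) [GradedAlgebra 𝒯]
  {r : T → T → Prop}

/-- The algebra map from a graded algebra to the direct sum of the images of its homogeneous parts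
under an algebra map. -/
def toImageGrading (f : T →ₐ[k] A) : T →ₐ[k] ⨁ i, imageGrading 𝒯 f i :=
  AlgHom.comp
    (DirectSum.toAlgebra k (fun i => 𝒯 i)
      (fun i => lof k ι (fun i => imageGrading 𝒯 f i) i ∘ₗ f.toLinearMap.submoduleMap (𝒯 i))
      (congrArg (of (fun i => imageGrading 𝒯 f i) 0) (Subtype.ext (map_one f)))
      fun x y => (congrArg (of (fun i => imageGrading 𝒯 f i) _)
        (Subtype.ext (map_mul f (x : T) y))).trans (of_mul_of _ _).symm)
    (decomposeAlgEquiv 𝒯).toAlgHom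

variable {𝒯}

theorem toImageGrading_of_mem (f : T →ₐ[k] A) {i : ι} {x : T} (hx : x ∈ 𝒯 i) :
    toImageGrading 𝒯 f x = of (fun i => imageGrading 𝒯 f i) i ⟨f x, x, hx, rfl⟩ := by
  rw [toImageGrading, AlgHom.comp_apply, AlgEquiv.coe_toAlgHom, decomposeAlgEquiv_apply,
    decompose_of_mem 𝒯 hx]
  exact toAddMonoid_of (fun i => (lof k ι (fun i => imageGrading 𝒯 f i) i ∘ₗ
    f.toLinearMap.submoduleMap (𝒯 i)).toAddMonoidHom) i (⟨x, hx⟩ : 𝒯 i)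

/-- A quotient of a graded algebra by relations between homogeneous elements of equal degrees is
graded. -/
abbrev ringQuotGradedAlgebra (h : ∀ x y, r x y → ∃ d, x ∈ 𝒯 d ∧ y ∈ 𝒯 d) :
    GradedAlgebra (imageGrading 𝒯 (RingQuot.mkAlgHom k r)) :=
  GradedAlgebra.ofAlgHom _
    (RingQuot.liftAlgHom k ⟨toImageGrading 𝒯 (RingQuot.mkAlgHom k r), fun x y hxy => by
      obtain ⟨d, hx, hy⟩ := h x y hxy
      simp only [toImageGrading_of_mem _ hx, toImageGrading_of_mem _ hy,
        RingQuot.mkAlgHom_rel k hxy]⟩)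
    (by
      ext x
      induction x using Decomposition.inductionOn 𝒯 with
      | zero => simp
      | add x y hx hy => rw [map_add, hx, hy, map_add]
      | @homogeneous i x =>
        simp [toImageGrading_of_mem _ x.2])
    (by
      rintro i ⟨_, x, hx, rfl⟩
      simp [toImageGrading_of_mem _ hx])

end GradedQuotient

section LeadingForms

variable {k T B : Type*} [CommRing k] [Ring T] [Algebra k T] [Ring B] [Algebra k B]
  (𝒯 : ℕ → Submodule k T) (π : T →ₐ[k] B)

/-- The elements congruent modulo the kernel of `π` to elements of degree less than `d`. An element
of `𝒯 d` lies in `leadingForms 𝒯 π d` if and only if it is the leading form of a relation, that is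
of an element of `ker π`. -/
def leadingForms (d : ℕ) : Submodule k T :=
  ((degreeLT 𝒯 d).map π.toLinearMap).comap π.toLinearMap

variable {𝒯 π}

theorem mul_mem_leadingForms_left [SetLike.GradedMonoid 𝒯] {m n : ℕ} {x y : T} (hx : x ∈ 𝒯 m)
    (hy : y ∈ leadingForms 𝒯 π n) : x * y ∈ leadingForms 𝒯 π (m + n) := by
  obtain ⟨z, hz, hzy⟩ := hy
  refine ⟨x * z, mul_mem_degreeLT_left hx hz, ?_⟩
  simp only [AlgHom.toLinearMap_apply, map_mul] at hzy ⊢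
  rw [hzy]

theorem mul_mem_leadingForms_right [SetLike.GradedMonoid 𝒯] {m n : ℕ} {x y : T}
    (hx : x ∈ leadingForms 𝒯 π n) (hy : y ∈ 𝒯 m) : x * y ∈ leadingForms 𝒯 π (n + m) := by
  obtain ⟨z, hz, hzx⟩ := hx
  refine ⟨z * y, mul_mem_degreeLT_right hz hy, ?_⟩
  simp only [AlgHom.toLinearMap_apply, map_mul] at hzx ⊢
  rw [hzx]

variable [GradedAlgebra 𝒯]

variable (𝒯 π) in
/-- The two-sided ideal generated by the leading forms of the elements of `ker π`; the quotient
of `T` by it is the associated graded algebra of `B`. -/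
def leadingIdeal : Ideal T where
  carrier := {x | ∀ n, (decompose 𝒯 x n : T) ∈ leadingForms 𝒯 π n}
  zero_mem' n := by simp
  add_mem' hx hy n := by
    rw [decompose_add, DirectSum.add_apply, Submodule.coe_add]
    exact add_mem (hx n) (hy n)
  smul_mem' c x hx := by
    rw [smul_eq_mul]
    induction c using Decomposition.inductionOn 𝒯 with
    | zero => simp
    | add c c' hc hc' =>
      intro n
      rw [add_mul, decompose_add, DirectSum.add_apply, Submodule.coe_add]
      exact add_mem (hc n) (hc' n)
    | @homogeneous i c =>
      intro n
      rcases le_or_gt i n with hin | hin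
      · obtain ⟨j, rfl⟩ := Nat.exists_eq_add_of_le hin
        rw [coe_decompose_mul_add_of_left_mem 𝒯 c.2]
        exact mul_mem_leadingForms_left c.2 (hx j)
      · rw [coe_decompose_mul_of_left_mem_of_not_le 𝒯 c.2 hin.not_ge]
        exact zero_mem _

instance : (leadingIdeal 𝒯 π).IsTwoSided where
  mul_mem_of_left {x} y hx := by
    induction y using Decomposition.inductionOn 𝒯 with
    | zero => simp
    | add y y' hy hy' => rw [mul_add]; exact add_mem hy hy'
    | @homogeneous i y =>
      intro n
      rcases le_or_gt i n with hin | hin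
      · obtain ⟨j, rfl⟩ := Nat.exists_eq_add_of_le' hin
        rw [coe_decompose_mul_add_of_right_mem 𝒯 y.2]
        exact mul_mem_leadingForms_right (hx j) y.2
      · rw [coe_decompose_mul_of_right_mem_of_not_le 𝒯 y.2 hin.not_ge]
        exact zero_mem _

theorem mem_leadingIdeal_iff_of_mem {d : ℕ} {x : T} (hx : x ∈ 𝒯 d) :
    x ∈ leadingIdeal 𝒯 π ↔ x ∈ leadingForms 𝒯 π d := by
  refine ⟨fun h => decompose_of_mem_same 𝒯 hx ▸ h d, fun h n => ?_⟩
  rcases eq_or_ne d n with rfl | hdn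
  · rwa [decompose_of_mem_same 𝒯 hx]
  · rw [decompose_of_mem_ne 𝒯 hx hdn]
    exact zero_mem _

theorem mem_leadingForms_of_mkAlgHom_eq_zero {r : T → T → Prop}
    (hr : ∀ x y, r x y → ∃ d, x ∈ 𝒯 d ∧ y ∈ 𝒯 d ∧ x - y ∈ leadingForms 𝒯 π d) {d : ℕ} {x : T}
    (hx : x ∈ 𝒯 d) (h0 : RingQuot.mkAlgHom k r x = 0) : x ∈ leadingForms 𝒯 π d := by
  let φ : RingQuot r →ₐ[k] T ⧸ leadingIdeal 𝒯 π :=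
    RingQuot.liftAlgHom k ⟨Ideal.Quotient.mkₐ k (leadingIdeal 𝒯 π), fun y z hyz => by
      obtain ⟨e, hy, hz, hyz⟩ := hr y z hyz
      exact Ideal.Quotient.eq.2 ((mem_leadingIdeal_iff_of_mem (sub_mem hy hz)).2 hyz)⟩
  have hφ : φ (RingQuot.mkAlgHom k r x) = Ideal.Quotient.mk _ x :=
    RingQuot.liftAlgHom_mkAlgHom_apply ..
  rw [h0, map_zero, eq_comm, Ideal.Quotient.eq_zero_iff_mem] at hφ
  exact (mem_leadingIdeal_iff_of_mem hx).1 hφ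

end LeadingForms

section GradedLift

variable {k T A B : Type*} [CommRing k] [Ring T] [Ring A] [Ring B] [Algebra k T] [Algebra k A]
  [Algebra k B]

/-- The linear map `s` lifts `π₀` along `π` degree by degree: every homogeneous element of `A` has
a homogeneous representative in `T` of the same degree that `π` maps to its image under `s`. -/
def IsGradedLift (𝒯 : ℕ → Submodule k T) (π₀ : T →ₐ[k] A) (π : T →ₐ[k] B) (s : A →ₗ[k] B) :
    Prop :=
  ∀ ⦃d : ℕ⦄ ⦃a : A⦄, a ∈ imageGrading 𝒯 π₀ d → ∃ x ∈ 𝒯 d, π₀ x = a ∧ π x = s a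

variable {𝒯 : ℕ → Submodule k T} {π₀ : T →ₐ[k] A} {π : T →ₐ[k] B} {s : A →ₗ[k] B}

namespace IsGradedLift

variable (hs : IsGradedLift 𝒯 π₀ π s)
  (hker : ∀ ⦃d : ℕ⦄ ⦃x : T⦄, x ∈ 𝒯 d → π₀ x = 0 → x ∈ leadingForms 𝒯 π d)

include hs hker

theorem sub_mem {d : ℕ} {x : T} (hx : x ∈ 𝒯 d) :
    π x - s (π₀ x) ∈ (degreeLT 𝒯 d).map π.toLinearMap := by
  obtain ⟨y, hy, hyx, hys⟩ := hs ⟨x, hx, rfl⟩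
  rw [AlgHom.toLinearMap_apply] at hyx hys
  rw [← hys, ← map_sub]
  exact hker (Submodule.sub_mem _ hx hy) (by rw [map_sub, hyx, sub_self])

theorem map_one [SetLike.GradedMonoid 𝒯] : s 1 = 1 := by
  have h := hs.sub_mem hker (SetLike.GradedOne.one_mem (A := 𝒯))
  rwa [degreeLT_zero, Submodule.map_bot, Submodule.mem_bot, _root_.map_one, _root_.map_one,
    sub_eq_zero, eq_comm] at h

theorem map_degreeLT (n : ℕ) :
    (degreeLT (imageGrading 𝒯 π₀) n).map s = (degreeLT 𝒯 n).map π.toLinearMap := by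
  induction n with
  | zero => simp
  | succ n ih =>
    rw [degreeLT_succ, degreeLT_succ, Submodule.map_sup, Submodule.map_sup, ih]
    apply le_antisymm
    · refine sup_le_sup_left ?_ _
      rintro _ ⟨a, ha, rfl⟩
      obtain ⟨x, hx, -, hxs⟩ := hs ha
      exact ⟨x, hx, hxs⟩
    · refine sup_le le_sup_left ?_
      rintro _ ⟨x, hx, rfl⟩
      rw [AlgHom.toLinearMap_apply, ← sub_add_cancel (π x) (s (π₀ x))]
      exact Submodule.add_mem_sup (hs.sub_mem hker hx) ⟨_, ⟨x, hx, rfl⟩, rfl⟩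

theorem surjective [Decomposition 𝒯] (hπ : Function.Surjective π) : Function.Surjective s := by
  intro b
  obtain ⟨x, rfl⟩ := hπ b
  obtain ⟨n, hn⟩ := exists_mem_degreeLT (ℳ := 𝒯) x
  obtain ⟨a, -, ha⟩ := (hs.map_degreeLT hker n).ge ⟨x, hn, rfl⟩
  exact ⟨a, ha⟩

end IsGradedLift

theorem IsGradedLift.isMulToLeadingOrder [SetLike.GradedMonoid 𝒯]
    [GradedAlgebra (imageGrading 𝒯 π₀)] {e : A ≃ₗ[k] B}
    (he : IsGradedLift 𝒯 π₀ π e.toLinearMap)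
    (hker : ∀ ⦃d : ℕ⦄ ⦃x : T⦄, x ∈ 𝒯 d → π₀ x = 0 → x ∈ leadingForms 𝒯 π d) :
    IsMulToLeadingOrder (imageGrading 𝒯 π₀) e := by
  intro p q a b ha hb
  obtain ⟨x, hx, rfl, hxe⟩ := he ha
  obtain ⟨y, hy, rfl, hye⟩ := he hb
  obtain ⟨c, hc, hce⟩ := (he.map_degreeLT hker (p + q)).ge
    (he.sub_mem hker (SetLike.mul_mem_graded hx hy))
  rw [map_mul, map_mul, hxe, hye] at hce
  suffices c = e.symm (e (π₀ x) * e (π₀ y)) - π₀ x * π₀ y from this ▸ hc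
  rw [← e.symm_apply_apply c, ← e.symm_apply_apply (π₀ x * π₀ y), ← map_sub]
  exact congrArg e.symm hce

end GradedLift

section GradedLiftOfField

variable {k T A B : Type*} [Field k] [Ring T] [Ring A] [Ring B] [Algebra k T] [Algebra k A]
  [Algebra k B] {𝒯 : ℕ → Submodule k T} {π₀ : T →ₐ[k] A} {π : T →ₐ[k] B} {s : A →ₗ[k] B}

variable (𝒯 π₀ π) in
theorem exists_isGradedLift [Decomposition (imageGrading 𝒯 π₀)] :
    ∃ s : A →ₗ[k] B, IsGradedLift 𝒯 π₀ π s := by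
  have hlift (d : ℕ) : ∃ σ : imageGrading 𝒯 π₀ d →ₗ[k] 𝒯 d, ∀ a, π₀ (σ a) = a := by
    obtain ⟨σ, hσ⟩ := (π₀.toLinearMap.submoduleMap (𝒯 d)).exists_rightInverse_of_surjective
      (LinearMap.range_eq_top.2 (π₀.toLinearMap.submoduleMap_surjective (𝒯 d)))
    exact ⟨σ, fun a => congrArg Subtype.val (LinearMap.congr_fun hσ a)⟩
  choose σ hσ using hlift
  refine ⟨toModule k ℕ B (fun d => π.toLinearMap ∘ₗ (𝒯 d).subtype ∘ₗ σ d) ∘ₗ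
    (decomposeLinearEquiv (imageGrading 𝒯 π₀)).toLinearMap, fun d a ha => ?_⟩
  lift a to imageGrading 𝒯 π₀ d using ha
  refine ⟨σ d a, (σ d a).2, hσ d a, ?_⟩
  rw [LinearMap.comp_apply, LinearEquiv.coe_coe, decomposeLinearEquiv_apply, decompose_coe]
  symm
  exact toModule_lof (M := fun i => imageGrading 𝒯 π₀ i) k d a

theorem IsGradedLift.injective [Decomposition (imageGrading 𝒯 π₀)]
    [∀ d, FiniteDimensional k (imageGrading 𝒯 π₀ d)]
    (hs : IsGradedLift 𝒯 π₀ π s)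
    (hker : ∀ ⦃d : ℕ⦄ ⦃x : T⦄, x ∈ 𝒯 d → π₀ x = 0 → x ∈ leadingForms 𝒯 π d)
    (hrank : ∀ d, Module.finrank k ((degreeLT 𝒯 (d + 1)).map π.toLinearMap) =
      Module.finrank k ((degreeLT 𝒯 (d + 1)).map π₀.toLinearMap)) : Function.Injective s := by
  refine (injective_iff_map_eq_zero s).2 fun a ha => ?_
  obtain ⟨n, hn⟩ := exists_mem_degreeLT (ℳ := imageGrading 𝒯 π₀) a
  replace hn := degreeLT_mono n.le_succ hn
  have hrank' : Module.finrank k (degreeLT (imageGrading 𝒯 π₀) (n + 1)) =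
      Module.finrank k ((degreeLT (imageGrading 𝒯 π₀) (n + 1)).map s) := by
    rw [hs.map_degreeLT hker, hrank, DeformKoszul.map_degreeLT]
    rfl
  have hinj : Function.Injective (s.submoduleMap (degreeLT (imageGrading 𝒯 π₀) (n + 1))) :=
    (LinearMap.injective_iff_surjective_of_finrank_eq_finrank hrank').2
      (s.submoduleMap_surjective _)
  exact congrArg Subtype.val ((injective_iff_map_eq_zero _).1 hinj ⟨a, hn⟩ (Subtype.ext ha))

end GradedLiftOfField

section PBW

variable {k T B : Type*} [Field k] [Ring T] [Algebra k T] [Ring B] [Algebra k B]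
  {𝒯 : ℕ → Submodule k T} [GradedAlgebra 𝒯] {r : T → T → Prop} {π : T →ₐ[k] B}

theorem exists_isGradedDeformation_of_finrank_eq (hπ : Function.Surjective π)
    (hr : ∀ x y, r x y → ∃ d, x ∈ 𝒯 d ∧ y ∈ 𝒯 d ∧ x - y ∈ leadingForms 𝒯 π d)
    [∀ d, FiniteDimensional k (imageGrading 𝒯 (RingQuot.mkAlgHom k r) d)]
    (hrank : ∀ d, Module.finrank k ((degreeLT 𝒯 (d + 1)).map π.toLinearMap) =
      Module.finrank k ((degreeLT 𝒯 (d + 1)).map (RingQuot.mkAlgHom k r).toLinearMap)) :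
    ∃ μ, IsGradedDeformation (imageGrading 𝒯 (RingQuot.mkAlgHom k r)) μ ∧
      ∃ f : B ≃ₗ[k] RingQuot r, IsFilteredFiberIso
        (fun d => (degreeLT 𝒯 (d + 1)).map π.toLinearMap)
        (fun d => (degreeLT 𝒯 (d + 1)).map (RingQuot.mkAlgHom k r).toLinearMap) μ f := by
  let _ : GradedAlgebra (imageGrading 𝒯 (RingQuot.mkAlgHom k r)) :=
    ringQuotGradedAlgebra fun x y hxy => (hr x y hxy).imp fun _ h => ⟨h.1, h.2.1⟩
  have hker ⦃d : ℕ⦄ ⦃x : T⦄ (hx : x ∈ 𝒯 d) (h0 : RingQuot.mkAlgHom k r x = 0) :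
      x ∈ leadingForms 𝒯 π d := mem_leadingForms_of_mkAlgHom_eq_zero hr hx h0
  obtain ⟨s, hs⟩ := exists_isGradedLift 𝒯 (RingQuot.mkAlgHom k r) π
  let e := LinearEquiv.ofBijective s ⟨hs.injective hker hrank, hs.surjective hker hπ⟩
  have he : IsMulToLeadingOrder (imageGrading 𝒯 (RingQuot.mkAlgHom k r)) e :=
    IsGradedLift.isMulToLeadingOrder hs hker
  have h1 : e 1 = 1 := hs.map_one hker
  refine ⟨starCoeff _ e, isGradedDeformation_starCoeff he h1, e.symm,
    e.symm_apply_eq.2 h1.symm, symm_mul_eq_finsum_starCoeff he, fun d => ?_⟩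
  exact (Submodule.map_symm_eq_iff e).2
    ((congrArg (Submodule.map _) (map_degreeLT _ _)).trans (hs.map_degreeLT hker (d + 1)))

end PBW

section FreeAlgebraGrading

theorem mul_mem_range_lof {k T : Type*} [CommSemiring k] [Semiring T] [Algebra k T]
    {𝒯 : ℕ → Submodule k T} [SetLike.GradedMonoid 𝒯] {i j : ℕ} {x y : ⨁ i, 𝒯 i}
    (hx : x ∈ LinearMap.range (lof k ℕ (fun i => 𝒯 i) i))
    (hy : y ∈ LinearMap.range (lof k ℕ (fun i => 𝒯 i) j)) :
    x * y ∈ LinearMap.range (lof k ℕ (fun i => 𝒯 i) (i + j)) := by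
  obtain ⟨a, rfl⟩ := hx
  obtain ⟨b, rfl⟩ := hy
  exact ⟨_, (of_mul_of (A := fun i => 𝒯 i) a b).symm⟩

variable {k G V : Type} [Field k] [AddCommGroup V] [Module k V]

theorem grT_zero :
    grT k G V 0 = Subalgebra.toSubmodule (Algebra.adjoin k (Set.range (gIn k G V))) := by
  rw [grT]

theorem grT_succ (n : ℕ) :
    grT k G V (n + 1) = grT k G V n * (LinearMap.range (vIn k G V) * grT k G V 0) := by
  conv_lhs => rw [grT]

theorem one_mem_grT : (1 : FreeAlg k G V) ∈ grT k G V 0 := by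
  rw [grT_zero]
  exact one_mem (Algebra.adjoin k _)

theorem gIn_mem_grT (x : MonoidAlgebra k G) : gIn k G V x ∈ grT k G V 0 := by
  rw [grT_zero]
  exact Algebra.subset_adjoin ⟨x, rfl⟩

theorem vIn_mem_grT (v : V) : vIn k G V v ∈ grT k G V 1 := by
  rw [grT_succ, ← one_mul (vIn k G V v), ← mul_one (vIn k G V v)]
  exact Submodule.mul_mem_mul one_mem_grT (Submodule.mul_mem_mul ⟨v, rfl⟩ one_mem_grT)

theorem grT_mul_grT_zero (p : ℕ) : grT k G V p * grT k G V 0 = grT k G V p := by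
  have h0 : grT k G V 0 * grT k G V 0 = grT k G V 0 := by
    rw [grT_zero]
    exact Subalgebra.isIdempotentElem_toSubmodule _
  cases p with
  | zero => exact h0
  | succ p => rw [grT_succ, mul_assoc, mul_assoc, h0]

theorem grT_mul_grT (p q : ℕ) : grT k G V p * grT k G V q = grT k G V (p + q) := by
  induction q with
  | zero => exact grT_mul_grT_zero p
  | succ q ih => rw [← Nat.add_assoc, grT_succ, grT_succ (p + q), ← mul_assoc, ih]

instance : SetLike.GradedMonoid (grT k G V) where
  one_mem := one_mem_grT
  mul_mem p q _ _ hx hy := by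
    rw [← grT_mul_grT]
    exact Submodule.mul_mem_mul hx hy

theorem mulVV_mem_grT (x : V ⊗[k] V) : mulVV k G V x ∈ grT k G V 2 := by
  induction x using TensorProduct.induction_on with
  | zero => rw [map_zero]; exact zero_mem _
  | tmul v w => exact SetLike.mul_mem_graded (vIn_mem_grT v) (vIn_mem_grT w)
  | add x y hx hy => rw [map_add]; exact add_mem hx hy

theorem embVG_mem_grT (x : V ⊗[k] MonoidAlgebra k G) : embVG k G V x ∈ grT k G V 1 := by
  induction x using TensorProduct.induction_on with
  | zero => rw [map_zero]; exact zero_mem _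
  | tmul v a => exact SetLike.mul_mem_graded (vIn_mem_grT v) (gIn_mem_grT a)
  | add x y hx hy => rw [map_add]; exact add_mem hx hy

variable (k G V) in
/-- The algebra map from the free algebra to the direct sum of its homogeneous parts that sends the
generators in `kG` to degree `0` and those in `V` to degree `1`. -/
def toDirectSumGrT : FreeAlg k G V →ₐ[k] ⨁ i, grT k G V i :=
  TensorAlgebra.lift k <| LinearMap.coprod
    (lof k ℕ (fun i => grT k G V i) 0 ∘ₗ (gIn k G V).codRestrict (grT k G V 0) gIn_mem_grT)
    (lof k ℕ (fun i => grT k G V i) 1 ∘ₗ (vIn k G V).codRestrict (grT k G V 1) vIn_mem_grT)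

theorem toDirectSumGrT_gIn (x : MonoidAlgebra k G) :
    toDirectSumGrT k G V (gIn k G V x) =
      lof k ℕ (fun i => grT k G V i) 0 ⟨gIn k G V x, gIn_mem_grT x⟩ :=
  (TensorAlgebra.lift_ι_apply _ _).trans
    (LinearMap.congr_fun (LinearMap.coprod_inl _ _) x)

theorem toDirectSumGrT_vIn (v : V) :
    toDirectSumGrT k G V (vIn k G V v) =
      lof k ℕ (fun i => grT k G V i) 1 ⟨vIn k G V v, vIn_mem_grT v⟩ :=
  (TensorAlgebra.lift_ι_apply _ _).trans
    (LinearMap.congr_fun (LinearMap.coprod_inr _ _) v)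

theorem coeAlgHom_toDirectSumGrT (x : FreeAlg k G V) :
    DirectSum.coeAlgHom (grT k G V) (toDirectSumGrT k G V x) = x := by
  suffices (DirectSum.coeAlgHom (grT k G V)).comp (toDirectSumGrT k G V) = AlgHom.id k _ from
    DFunLike.congr_fun this x
  refine TensorAlgebra.hom_ext (LinearMap.prod_ext (LinearMap.ext fun a => ?_)
    (LinearMap.ext fun v => ?_))
  · exact (congrArg _ (toDirectSumGrT_gIn a)).trans (coeAlgHom_of ..)
  · exact (congrArg _ (toDirectSumGrT_vIn v)).trans (coeAlgHom_of ..)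

theorem toDirectSumGrT_mem_range_lof_zero {x : FreeAlg k G V} (hx : x ∈ grT k G V 0) :
    toDirectSumGrT k G V x ∈ LinearMap.range (lof k ℕ (fun i => grT k G V i) 0) := by
  rw [grT_zero] at hx
  induction hx using Algebra.adjoin_induction with
  | mem x hx =>
    obtain ⟨a, rfl⟩ := hx
    exact ⟨_, (toDirectSumGrT_gIn a).symm⟩
  | algebraMap c => exact ⟨_, ((toDirectSumGrT k G V).commutes c).symm⟩
  | add x y _ _ hx hy => rw [map_add]; exact add_mem hx hy
  | mul x y _ _ hx hy => rw [map_mul]; exact mul_mem_range_lof hx hy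

theorem toDirectSumGrT_mem_range_lof {i : ℕ} {x : FreeAlg k G V} (hx : x ∈ grT k G V i) :
    toDirectSumGrT k G V x ∈ LinearMap.range (lof k ℕ (fun i => grT k G V i) i) := by
  induction i generalizing x with
  | zero => exact toDirectSumGrT_mem_range_lof_zero hx
  | succ i ih =>
    rw [grT_succ] at hx
    induction hx using Submodule.mul_induction_on' with
    | add x _ y _ hx hy => rw [map_add]; exact add_mem hx hy
    | mem_mul_mem x hx y hy =>
      rw [map_mul]
      refine mul_mem_range_lof (ih hx) ?_
      induction hy using Submodule.mul_induction_on' with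
      | add y _ z _ hy hz => rw [map_add]; exact add_mem hy hz
      | mem_mul_mem v hv z hz =>
        obtain ⟨v, rfl⟩ := hv
        rw [map_mul]
        exact mul_mem_range_lof ⟨_, (toDirectSumGrT_vIn v).symm⟩
          (toDirectSumGrT_mem_range_lof_zero hz)

instance : GradedAlgebra (grT k G V) :=
  GradedAlgebra.ofAlgHom _ (toDirectSumGrT k G V) (AlgHom.ext coeAlgHom_toDirectSumGrT)
    fun i x => by
      obtain ⟨y, hy⟩ := toDirectSumGrT_mem_range_lof x.2
      have hxy : (y : FreeAlg k G V) = x := by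
        rw [← coeAlgHom_toDirectSumGrT (x : FreeAlg k G V), ← hy]
        exact (coeAlgHom_of ..).symm
      rw [← hy, Subtype.ext hxy]
      rfl

theorem filtT_eq_degreeLT (d : ℕ) : filtT k G V d = degreeLT (grT k G V) (d + 1) := by
  induction d with
  | zero => rw [filtT, degreeLT_succ, degreeLT_zero, bot_sup_eq]
  | succ d ih => rw [filtT, ih, ← degreeLT_succ]

end FreeAlgebraGrading

section KoszulDeformation

variable {k G V : Type} [Field k] [Group G] [AddCommGroup V] [Module k V]
  {R : Submodule k (V ⊗[k] V)} {ρ : Representation k G V}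
  {lam : MonoidAlgebra k G ⊗[k] V →ₗ[k] MonoidAlgebra k G}
  {α : R →ₗ[k] V ⊗[k] MonoidAlgebra k G} {β : R →ₗ[k] MonoidAlgebra k G}

theorem toH_eq_of_gRel {x y : FreeAlg k G V} (h : GRel k G V R ρ lam α β x y) :
    toH k G V R ρ lam α β x = toH k G V R ρ lam α β y :=
  RingQuot.mkAlgHom_rel k h

variable (R ρ lam α β) in
/-- The algebra map `kG → H_{λ,α,β}`. -/
def groupAlgebraToH : MonoidAlgebra k G →ₐ[k] HAlg k G V R ρ lam α β :=
  AlgHom.ofLinearMap ((toH k G V R ρ lam α β).toLinearMap ∘ₗ gIn k G V)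
    ((toH_eq_of_gRel .unit).trans (map_one _))
    fun x y => ((toH_eq_of_gRel (.gmul x y)).symm.trans (map_mul _ _ _))

theorem map_grT_zero_le_range_groupAlgebraToH :
    (grT k G V 0).map (toH k G V R ρ lam α β).toLinearMap ≤
      LinearMap.range (groupAlgebraToH R ρ lam α β).toLinearMap := by
  suffices Algebra.adjoin k (Set.range (gIn k G V)) ≤
      (groupAlgebraToH R ρ lam α β).range.comap (toH k G V R ρ lam α β) by
    rw [grT]
    exact Submodule.map_le_iff_le_comap.2 this
  refine Algebra.adjoin_le ?_
  rintro _ ⟨x, rfl⟩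
  exact ⟨x, rfl⟩

theorem finiteDimensional_map_grT [Finite G] [FiniteDimensional k V] (d : ℕ) :
    FiniteDimensional k ((grT k G V d).map (toH k G V R ρ lam α β).toLinearMap) := by
  have : Module.Finite k (MonoidAlgebra k G) :=
    Module.Finite.equiv (MonoidAlgebra.coeffLinearEquiv (R := k) (S := k) (M := G)).symm
  have h0 : ((grT k G V 0).map (toH k G V R ρ lam α β).toLinearMap).FG :=
    Module.Finite.iff_fg.1 (Submodule.finiteDimensional_of_le map_grT_zero_le_range_groupAlgebraToH)
  rw [FiniteDimensional, Module.Finite.iff_fg]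
  induction d with
  | zero => exact h0
  | succ d ih =>
    rw [grT, Submodule.map_mul, Submodule.map_mul]
    exact ih.mul (((Module.Finite.iff_fg.1 inferInstance).map _).mul h0)

variable (lam α β) in
theorem sub_mem_leadingForms_of_gRel {x y : FreeAlg k G V} (h : GRel k G V R ρ 0 0 0 x y) :
    ∃ d, x ∈ grT k G V d ∧ y ∈ grT k G V d ∧
      x - y ∈ leadingForms (grT k G V) (toH k G V R ρ lam α β) d := by
  have gIn_mem_degreeLT {n : ℕ} (a : MonoidAlgebra k G) :
      gIn k G V a ∈ degreeLT (grT k G V) (n + 1) :=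
    le_degreeLT n.succ_pos (gIn_mem_grT a)
  cases h with
  | unit =>
    refine ⟨0, gIn_mem_grT 1, one_mem_grT, 0, zero_mem _, ?_⟩
    simp [toH_eq_of_gRel .unit]
  | gmul a b =>
    refine ⟨0, SetLike.mul_mem_graded (gIn_mem_grT a) (gIn_mem_grT b), gIn_mem_grT _, 0,
      zero_mem _, ?_⟩
    rw [map_zero, AlgHom.toLinearMap_apply, map_sub, toH_eq_of_gRel (.gmul a b), sub_self]
  | act g v =>
    have hact := toH_eq_of_gRel (R := R) (ρ := ρ) (lam := lam) (α := α) (β := β) (.act g v)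
    refine ⟨1, SetLike.mul_mem_graded (gIn_mem_grT _) (vIn_mem_grT v), ?_,
      gIn k G V (lam (MonoidAlgebra.of k G g ⊗ₜ[k] v)), gIn_mem_degreeLT _, ?_⟩
    · rw [LinearMap.zero_apply, map_zero, add_zero]
      exact SetLike.mul_mem_graded (vIn_mem_grT _) (gIn_mem_grT _)
    · rw [AlgHom.toLinearMap_apply, AlgHom.toLinearMap_apply, map_sub, hact, LinearMap.zero_apply,
        map_zero, add_zero, map_add, add_sub_cancel_left]
  | quad x =>
    refine ⟨2, mulVV_mem_grT _, ?_, embVG k G V (α x) + gIn k G V (β x),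
      add_mem (le_degreeLT one_lt_two (embVG_mem_grT _)) (gIn_mem_degreeLT _), ?_⟩
    · simp
    · rw [AlgHom.toLinearMap_apply, ← toH_eq_of_gRel (.quad x)]
      simp

theorem filtH_eq_map_degreeLT (d : ℕ) :
    filtH k G V R ρ lam α β d =
      (degreeLT (grT k G V) (d + 1)).map (toH k G V R ρ lam α β).toLinearMap := by
  rw [filtH, filtT_eq_degreeLT]

end KoszulDeformation

end DeformKoszul

theorem pbw_deformation_is_fiber_of_graded_deformation_general
    {k G V : Type} [Field k] [Group G] [Finite G] [AddCommGroup V] [Module k V]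
    [FiniteDimensional k V] {ρ : Representation k G V} {R : Submodule k (V ⊗[k] V)}
    {lam : MonoidAlgebra k G ⊗[k] V →ₗ[k] MonoidAlgebra k G}
    {α : R →ₗ[k] (V ⊗[k] MonoidAlgebra k G)} {β : R →ₗ[k] MonoidAlgebra k G}
    (hPBW : IsPBW k G V R ρ lam α β) :
    ∃ μ, IsGradedDeformation (grA k G V R ρ) μ ∧
      ∃ f : HAlg k G V R ρ lam α β ≃ₗ[k] SkewA k G V R ρ,
        IsFilteredFiberIso (filtH k G V R ρ lam α β) (filtH k G V R ρ 0 0 0) μ f := by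
  have (d : ℕ) : FiniteDimensional k
      (imageGrading (grT k G V) (RingQuot.mkAlgHom k (GRel k G V R ρ 0 0 0)) d) :=
    finiteDimensional_map_grT d
  obtain ⟨μ, hμ, f, hf⟩ := exists_isGradedDeformation_of_finrank_eq
    (RingQuot.mkAlgHom_surjective k _) (fun _ _ => sub_mem_leadingForms_of_gRel lam α β) fun d => by
      have hrank := hPBW d
      rw [filtH_eq_map_degreeLT, filtH_eq_map_degreeLT] at hrank
      exact hrank
  refine ⟨μ, hμ, f, hf.map_one, hf.map_mul, fun d => ?_⟩
  rw [filtH_eq_map_degreeLT, filtH_eq_map_degreeLT]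
  exact hf.map_filtration d

/-- **Proposition 3.1** of Shepler–Witherspoon, "Deforming group actions on Koszul
algebras":  if `H_{λ,α,β}` is a PBW deformation of `A = S ⋊ G`, then `H_{λ,α,β}` is the
fiber at `t = 1` of a graded deformation `A_t` of `S ⋊ G` over `k[t]` (with `deg t = 1`).
A graded deformation of `A` over `k[t]` is encoded by its `k`-linear multiplication
maps `μ_j : A ⊗ A → A`:  `μ_0` is the multiplication of `A`; `1_A` is the
multiplicative identity; `μ_j` is homogeneous of degree `−j`; and the star product
`a * b = Σ_j μ_j(a ⊗ b) t^j` is associative, i.e. in each `t`-degree `n` we have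
`Σ_{i+j=n} μ_i(μ_j(a ⊗ b) ⊗ c) = Σ_{i+j=n} μ_i(a ⊗ μ_j(b ⊗ c))`.
The fiber `A_t|_{t=1}` is `A` with the (finitely supported) product
`a * b = Σ_j μ_j(a ⊗ b)`; an isomorphism of filtered algebras `H_{λ,α,β} ≅ A_t|_{t=1}`
is a `k`-linear bijection sending `1` to `1`, intertwining the multiplications and
matching the filtrations. -/
theorem pbw_deformation_is_fiber_of_graded_deformation
    (k G V : Type) [Field k] [Group G] [Fintype G] [AddCommGroup V] [Module k V]
    [FiniteDimensional k V] (h2 : (2 : k) ≠ 0)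
    (ρ : Representation k G V) (R : Submodule k (V ⊗[k] V))
    (hR : ∀ (g : G), ∀ x ∈ R, TensorProduct.map (ρ g) (ρ g) x ∈ R)
    (hKoszul : IsKoszul k V R)
    (lam : MonoidAlgebra k G ⊗[k] V →ₗ[k] MonoidAlgebra k G)
    (α : R →ₗ[k] (V ⊗[k] MonoidAlgebra k G))
    (β : R →ₗ[k] MonoidAlgebra k G)
    (hPBW : IsPBW k G V R ρ lam α β) :
    ∃ μ : ℕ → (SkewA k G V R ρ ⊗[k] SkewA k G V R ρ →ₗ[k] SkewA k G V R ρ),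
      -- μ₀ is the multiplication of A = S ⋊ G
      μ 0 = LinearMap.mul' k (SkewA k G V R ρ) ∧
      -- 1_A is the multiplicative identity for the star product
      (∀ j, 1 ≤ j → ∀ a : SkewA k G V R ρ,
        μ j ((1 : SkewA k G V R ρ) ⊗ₜ[k] a) = 0 ∧ μ j (a ⊗ₜ[k] (1 : SkewA k G V R ρ)) = 0) ∧
      -- the deformation is graded: μ_j is homogeneous of degree −j
      (∀ (j p q : ℕ) (a b : SkewA k G V R ρ), a ∈ grA k G V R ρ p → b ∈ grA k G V R ρ q →
        μ j (a ⊗ₜ[k] b) ∈ grA k G V R ρ (p + q - j) ∧ (p + q < j → μ j (a ⊗ₜ[k] b) = 0)) ∧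
      -- associativity of the star product, in each t-degree
      (∀ (n : ℕ) (a b c : SkewA k G V R ρ),
        ∑ ij ∈ Finset.HasAntidiagonal.antidiagonal n, μ ij.1 (μ ij.2 (a ⊗ₜ[k] b) ⊗ₜ[k] c)
          = ∑ ij ∈ Finset.HasAntidiagonal.antidiagonal n, μ ij.1 (a ⊗ₜ[k] μ ij.2 (b ⊗ₜ[k] c))) ∧
      -- H_{λ,α,β} ≅ A_t |_{t=1} as filtered algebras
      ∃ f : HAlg k G V R ρ lam α β ≃ₗ[k] SkewA k G V R ρ,
        f 1 = 1 ∧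
        (∀ x y : HAlg k G V R ρ lam α β,
          f (x * y) = ∑ᶠ j : ℕ, μ j (f x ⊗ₜ[k] f y)) ∧
        (∀ d, Submodule.map (f : HAlg k G V R ρ lam α β →ₗ[k] SkewA k G V R ρ)
            (filtH k G V R ρ lam α β d) = filtH k G V R ρ 0 0 0 d) := by
  obtain ⟨μ, hμ, f, hf⟩ := pbw_deformation_is_fiber_of_graded_deformation_general hPBW
  exact ⟨μ, hμ.zero, hμ.one, hμ.homogeneous, hμ.assoc, f, hf.map_one, hf.map_mul, hf.map_filtration⟩
end
end
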